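/- arXiv:1812.01671 — 2 statements merged into one kernel-verified Lean document; each statement's English description precedes it below -/
import Mathlib

section
/- There exist absolute constants C₀ ≥ 1 and C ≥ 1 such that the following holds. Let p be a prime, A ⊆ F_p a finite nonempty set, K ≥ 1, and L a finite set of lines y = mx + b in F_p² with nonzero slopes m, such that |L| ≥ |A|, the number of incidences satisfies I(A×A, L) ≥ |A|·|L|/K, and |A|·|L|/K ≥ C₀·|A|^(1/2)·|L|·max{1, |A|/p^(1/2)}. Let B be the set of y-intercepts and D the set of slopes of the lines in L. Then either E⁺(A) ≥ |A|³/(C·K^C), E⁺(B) ≥ |A|·|L|²/(C·K^C) and E⁺(A,B) ≥ |A|·|L|²/(C·K^C); or there exists s ∈ F_p such that E^×(A−s) ≥ |A|³/(C·K^C), E^×(D) ≥ |A|·|L|²/(C·K^C) and E^×(A−s, D) ≥ |A|·|L|²/(C·K^C). -/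
/-- Additive energy `E⁺(A,B) = #{(a,a',b,b') ∈ A×A×B×B : a − b = a' − b'}`. -/
noncomputable def addE (p : ℕ) (A B : Finset (ZMod p)) : ℕ :=
  Set.ncard {x : ZMod p × ZMod p × ZMod p × ZMod p |
    x.1 ∈ A ∧ x.2.1 ∈ A ∧ x.2.2.1 ∈ B ∧ x.2.2.2 ∈ B ∧ x.1 - x.2.2.1 = x.2.1 - x.2.2.2}

/-- Multiplicative energy `E^×(A,B) = #{(a,a',b,b') ∈ A×A×B×B : a·b' = a'·b}`. -/
noncomputable def mulE (p : ℕ) (A B : Finset (ZMod p)) : ℕ :=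
  Set.ncard {x : ZMod p × ZMod p × ZMod p × ZMod p |
    x.1 ∈ A ∧ x.2.1 ∈ A ∧ x.2.2.1 ∈ B ∧ x.2.2.2 ∈ B ∧ x.1 * x.2.2.2 = x.2.1 * x.2.2.1}

/-- The number of incidences between the grid `A×B` and the set of lines `L`
(a line is a pair (slope, y-intercept)). -/
noncomputable def inc (p : ℕ) (A B : Finset (ZMod p)) (L : Finset (ZMod p × ZMod p)) : ℕ :=
  Set.ncard {ql : (ZMod p × ZMod p) × ZMod p × ZMod p |
    ql.1.1 ∈ A ∧ ql.1.2 ∈ B ∧ ql.2 ∈ L ∧ ql.1.2 = ql.2.1 * ql.1.1 + ql.2.2}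

namespace PM
open MvPolynomial

variable {E : Type*} [Field E]

theorem pderiv_comm' (i j : Fin 3) (G : MvPolynomial (Fin 3) E) :
    pderiv i (pderiv j G) = pderiv j (pderiv i G) := by
  have h : ⁅(pderiv i : Derivation E (MvPolynomial (Fin 3) E) (MvPolynomial (Fin 3) E)), (pderiv j : Derivation E (MvPolynomial (Fin 3) E) (MvPolynomial (Fin 3) E))⁆ = 0 := by
    apply MvPolynomial.derivation_ext
    intro k
    simp only [Derivation.commutator_apply, pderiv_X, Derivation.coe_zero, Pi.zero_apply]
    simp only [Pi.single_apply]
    split_ifs <;> simp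
  have := congrArg (fun D => D G) h
  simp only [Derivation.commutator_apply, Derivation.coe_zero, Pi.zero_apply] at this
  exact sub_eq_zero.mp this

theorem totalDegree_pderiv (i : Fin 3) (G : MvPolynomial (Fin 3) E) :
    (pderiv i G).totalDegree ≤ G.totalDegree - 1 := by
  apply Finset.sup_le
  intro m hm
  rw [mem_support_iff, coeff_pderiv] at hm
  have h1 : m + Finsupp.single i 1 ∈ G.support := by
    rw [mem_support_iff]
    intro h
    simp [h] at hm
  have := le_totalDegree h1
  rw [Finsupp.sum_add_index' (by simp) (by simp)] at this
  simp at this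
  show (m.sum fun _ e => e) ≤ _
  omega

theorem totalDegree_pderiv_le (i : Fin 3) (G : MvPolynomial (Fin 3) E) :
    (pderiv i G).totalDegree ≤ G.totalDegree := (totalDegree_pderiv i G).trans (Nat.sub_le _ _)

theorem exists_pderiv_ne (p : ℕ) [CharP E p] (G : MvPolynomial (Fin 3) E)
    (hd : G.totalDegree < p) (h : ∀ i, pderiv i G = 0) : ∃ c, G = C c := by
  refine ⟨coeff 0 G, ?_⟩
  ext m
  rw [coeff_C]
  split_ifs with h0
  · rw [h0]
  · by_contra hm
    have : ∃ i, m i ≠ 0 := by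
      by_contra hc
      push Not at hc
      exact h0 (by ext i; simp [hc i])
    obtain ⟨i, hi⟩ := this
    have h1 := congrArg (coeff (m - Finsupp.single i 1)) (h i)
    rw [coeff_pderiv] at h1
    have h2 : m - Finsupp.single i 1 + Finsupp.single i 1 = m := by
      apply tsub_add_cancel_of_le
      simp; omega
    rw [h2] at h1
    simp only [coeff_zero, mul_eq_zero] at h1
    rcases h1 with h1 | h1
    · exact hm h1
    · have h3 : ((m i : ℕ) : E) = 0 := by
        rw [← h1]
        have : m i = (m i - 1) + 1 := by omega
        conv_lhs => rw [this]
        simp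
      rw [CharP.cast_eq_zero_iff E p] at h3
      have h4 := Nat.le_of_dvd (by omega) h3
      have h5 : m ∈ G.support := by rwa [mem_support_iff]
      have h6 := le_totalDegree h5
      have h7 : m i ≤ m.sum fun _ e => e := by
        rw [Finsupp.sum_fintype _ _ (by simp)]
        exact Finset.single_le_sum (f := fun j => m j) (by simp) (Finset.mem_univ i)
      omega

/-- The line attached to a point q. -/
noncomputable def lineMap (q : E × E × E) : MvPolynomial (Fin 3) E →ₐ[E] Polynomial E :=
  aeval ![Polynomial.X, Polynomial.C q.2.1 - Polynomial.C q.1 * Polynomial.X,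
    Polynomial.C (q.2.2 - q.1 * q.2.1) + Polynomial.C (q.1 ^ 2) * Polynomial.X]

def pt (q : E × E × E) (ρ : E) : Fin 3 → E :=
  ![ρ, q.2.1 - q.1 * ρ, (q.2.2 - q.1 * q.2.1) + q.1 ^ 2 * ρ]

theorem eval_lineMap (q : E × E × E) (ρ : E) (G : MvPolynomial (Fin 3) E) :
    (lineMap q G).eval ρ = MvPolynomial.eval (pt q ρ) G := by
  have : (Polynomial.aeval ρ).comp (lineMap q) = MvPolynomial.aeval (pt q ρ) := by
    apply MvPolynomial.algHom_ext
    intro i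
    fin_cases i <;> simp [lineMap, pt]
  have h := congrArg (fun f => f G) this
  simpa [Polynomial.coe_aeval_eq_eval, MvPolynomial.coe_aeval_eq_eval] using h

theorem lineMap_C (q : E × E × E) (c : E) : lineMap q (C c) = Polynomial.C c := by
  simp [lineMap]

theorem natDegree_lineMap (q : E × E × E) (G : MvPolynomial (Fin 3) E) :
    (lineMap q G).natDegree ≤ G.totalDegree := by
  have := MvPolynomial.aeval_natDegree_le G (m := G.totalDegree) le_rfl (n := 1)
    (![Polynomial.X, Polynomial.C q.2.1 - Polynomial.C q.1 * Polynomial.X,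
    Polynomial.C (q.2.2 - q.1 * q.2.1) + Polynomial.C (q.1 ^ 2) * Polynomial.X]) ?_
  · simpa [lineMap] using this
  · intro i
    fin_cases i
    · simp
    · simp only [Fin.mk_one, Matrix.cons_val_one, Matrix.cons_val_zero]; compute_degree
    · simp; compute_degree

noncomputable def nD (v : E) (G : MvPolynomial (Fin 3) E) : MvPolynomial (Fin 3) E :=
  pderiv 0 G - C v * pderiv 1 G + C (v ^ 2) * pderiv 2 G

theorem deriv_lineMap (q : E × E × E) (G : MvPolynomial (Fin 3) E) :
    Polynomial.derivative (lineMap q G) = lineMap q (nD q.1 G) := by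
  induction G using MvPolynomial.induction_on with
  | C a => simp [nD]
  | add f g hf hg => simp only [map_add, hf, hg, nD]; simp only [map_add, map_sub, map_mul]; ring
  | mul_X f i hf =>
    rw [map_mul, Polynomial.derivative_mul, hf]
    simp only [nD, map_add, map_sub, map_mul, pderiv_mul, pderiv_X]
    have h : Polynomial.derivative (lineMap q (X i : MvPolynomial (Fin 3) E)) =
       Polynomial.C ((![1, -q.1, q.1 ^ 2] : Fin 3 → E) i) := by
      fin_cases i <;> simp [lineMap, Polynomial.derivative_pow]
    rw [h]
    simp only [lineMap_C]
    fin_cases i <;> simp <;> ring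

end PM

namespace PM
open MvPolynomial

variable {E : Type*} [Field E]

theorem natDegree_eq_of_ratio (p : ℕ) [CharP E p] (f h : Polynomial E) (hf : f ≠ 0) (hh : h ≠ 0)
    (hfp : f.natDegree < p) (hhp : h.natDegree < p)
    (he : Polynomial.derivative f * h = f * Polynomial.derivative h) :
    f.natDegree = h.natDegree := by
  have key : ∀ g : Polynomial E, (Polynomial.X * Polynomial.derivative g).natDegree ≤ g.natDegree ∧
      (Polynomial.X * Polynomial.derivative g).coeff g.natDegree = g.natDegree * g.leadingCoeff := by
    intro g
    constructor
    · rcases Nat.eq_zero_or_pos g.natDegree with h0 | h0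
      · rw [Polynomial.derivative_of_natDegree_zero h0]; simp
      · refine (Polynomial.natDegree_mul_le).trans ?_
        have := Polynomial.natDegree_derivative_le g
        have := Polynomial.natDegree_X_le (R := E)
        omega
    · rcases hn : g.natDegree with _ | n
      · simp
      · rw [Polynomial.coeff_X_mul, Polynomial.coeff_derivative, ← hn]
        rw [Polynomial.leadingCoeff, hn]; push_cast; ring
  have e2 : (Polynomial.X * Polynomial.derivative f) * h = f * (Polynomial.X * Polynomial.derivative h) := by
    linear_combination Polynomial.X * he
  have e3 := congrArg (fun g => g.coeff (f.natDegree + h.natDegree)) e2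
  rw [Polynomial.coeff_mul_add_eq_of_natDegree_le (key f).1 le_rfl,
    Polynomial.coeff_mul_add_eq_of_natDegree_le le_rfl (key h).1, (key f).2, (key h).2] at e3
  have l1 : f.leadingCoeff ≠ 0 := Polynomial.leadingCoeff_ne_zero.mpr hf
  have l2 : h.leadingCoeff ≠ 0 := Polynomial.leadingCoeff_ne_zero.mpr hh
  have e4 : ((f.natDegree : ℕ) : E) = (h.natDegree : ℕ) := by
    change (f.natDegree : E) * f.leadingCoeff * h.leadingCoeff =
      f.leadingCoeff * (h.natDegree * h.leadingCoeff) at e3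
    apply mul_right_cancel₀ (mul_ne_zero l1 l2)
    linear_combination e3
  exact CharP.natCast_injOn_Iio E p hfp hhp e4

theorem ratio_const (p : ℕ) [CharP E p] (f h : Polynomial E) (hh : h ≠ 0)
    (hfp : f.natDegree < p) (hhp : h.natDegree < p)
    (he : Polynomial.derivative f * h = f * Polynomial.derivative h) :
    ∃ l : E, f = Polynomial.C l * h := by
  by_cases hf : f = 0
  · exact ⟨0, by simp [hf]⟩
  have e := natDegree_eq_of_ratio p f h hf hh hfp hhp he
  refine ⟨f.leadingCoeff / h.leadingCoeff, ?_⟩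
  set l := f.leadingCoeff / h.leadingCoeff with hl
  by_contra hne
  have l2 : h.leadingCoeff ≠ 0 := Polynomial.leadingCoeff_ne_zero.mpr hh
  have l1 : f.leadingCoeff ≠ 0 := Polynomial.leadingCoeff_ne_zero.mpr hf
  have hg : f - Polynomial.C l * h ≠ 0 := sub_ne_zero.mpr hne
  have hlz : l ≠ 0 := div_ne_zero l1 l2
  have hlt : (f - Polynomial.C l * h).degree < f.degree := by
    apply Polynomial.degree_sub_lt_left
    · rw [Polynomial.degree_C_mul hlz, Polynomial.degree_eq_natDegree hf,
        Polynomial.degree_eq_natDegree hh, e]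
    · exact hf
    · simp [hl]; field_simp
  have hlt' := Polynomial.natDegree_lt_natDegree hg hlt
  have := natDegree_eq_of_ratio p (f - Polynomial.C l * h) h hg hh (by omega) hhp (by
    simp only [Polynomial.derivative_sub, Polynomial.derivative_mul, Polynomial.derivative_C]
    linear_combination he)
  omega

def incd (q q' : E × E × E) : Prop := q.2.2 - q'.2.2 = q.1 * q'.2.1 - q'.1 * q.2.1

def rho (q q' : E × E × E) : E := (q.2.1 - q'.2.1) / (q.1 - q'.1)

theorem pt_eq (q q' : E × E × E) (h : incd q q') (hx : q'.1 ≠ q.1) :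
    pt q (rho q q') = pt q' (rho q q') := by
  have h1 : q.1 - q'.1 ≠ 0 := sub_ne_zero.mpr hx.symm
  have h2 : rho q q' * (q.1 - q'.1) = q.2.1 - q'.2.1 := div_mul_cancel₀ _ h1
  unfold incd at h
  ext i
  fin_cases i
  · simp [pt]
  · simp [pt]; linear_combination -h2
  · simp [pt]; linear_combination h + (q.1 + q'.1) * h2

theorem ptalg1 {a b c u v : E} (huv : u ≠ v) (h1 : a - u * b + u ^ 2 * c = 0)
    (h2 : a - v * b + v ^ 2 * c = 0) : b = (u + v) * c ∧ a = u * v * c := by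
  have h : u - v ≠ 0 := sub_ne_zero.mpr huv
  have hb : b = (u + v) * c := by
    apply mul_left_cancel₀ h
    linear_combination h2 - h1
  refine ⟨hb, ?_⟩
  rw [hb] at h1
  linear_combination h1

theorem ptalg2 {c b u v rr rs rt ss st tt rrv rsv rtv ssv stv ttv cv bv b1 c1 b2 c2 : E}
    (hb : b = (u + v) * c)
    (hP : rr - 2 * u * rs + u ^ 2 * (ss + 2 * rt) - 2 * u ^ 3 * st + u ^ 4 * tt = 0)
    (hb1 : b1 = rs - u * ss + u ^ 2 * st) (hc1 : c1 = rt - u * st + u ^ 2 * tt)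
    (hT : rrv - 2 * u * rsv + u ^ 2 * (ssv + 2 * rtv) - 2 * u ^ 3 * stv + u ^ 4 * ttv =
      (u - v) * (b2 - (u + v) * c2))
    (hδ : bv - (u + v) * cv = -(b1 - (u + v) * c1))
    (hD : (4 * c ^ 3 * cv * rr + c ^ 4 * rrv)
      - 2 * (3 * c ^ 2 * cv * (b - v * c) * rs + c ^ 3 * (bv - v * cv) * rs
        + c ^ 3 * (b - v * c) * rsv)
      + (2 * c * cv * (b - v * c) ^ 2 * (ss + 2 * rt)
        + 2 * c ^ 2 * (b - v * c) * (bv - v * cv) * (ss + 2 * rt)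
        + c ^ 2 * (b - v * c) ^ 2 * (ssv + 2 * rtv))
      - 2 * (cv * (b - v * c) ^ 3 * st + 3 * c * (b - v * c) ^ 2 * (bv - v * cv) * st
        + c * (b - v * c) ^ 3 * stv)
      + (4 * (b - v * c) ^ 3 * (bv - v * cv) * tt + (b - v * c) ^ 4 * ttv) = 0) :
    (b - 2 * u * c) ^ 2 * c2 - c * (b - 2 * u * c) * (b2 - 2 * u * c2)
      + 2 * c * (b1 - 2 * u * c1) ^ 2
      - 2 * (b - 2 * u * c) * (b1 - 2 * u * c1) * c1 = 0 := by
  subst hb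
  by_cases hc : c = 0
  · subst hc; ring
  have h3 : c ^ 3 ≠ 0 := pow_ne_zero _ hc
  have hw : bv = (u + v) * cv -(b1 - (u + v) * c1) := by linear_combination hδ
  have key : c * ((u - v) * (b2 - (u + v) * c2)) + 2 * (b1 - 2 * u * c1) * (b1 - (u + v) * c1) = 0 := by
    apply mul_left_cancel₀ h3
    rw [← hT, hb1, hc1]
    rw [hw, hb1, hc1] at hD
    linear_combination hD - 4 * c ^ 3 * cv * hP
  linear_combination c * key

end PM

namespace PM
open MvPolynomial

variable {E : Type*} [Field E]

theorem pderiv_nD (i : Fin 3) (u : E) (G : MvPolynomial (Fin 3) E) :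
    pderiv i (nD u G) = nD u (pderiv i G) := by
  simp only [nD, map_add, map_sub, pderiv_C_mul, pderiv_comm' i]

theorem nD_shift (u v : E) (G : MvPolynomial (Fin 3) E) :
    nD v G = nD u G + C (u - v) * (pderiv 1 G - C (u + v) * pderiv 2 G) := by
  simp only [nD, map_sub, map_add, map_pow]; ring

theorem nD_add (u : E) (G H : MvPolynomial (Fin 3) E) : nD u (G + H) = nD u G + nD u H := by
  simp only [nD, map_add]; ring
theorem nD_sub (u : E) (G H : MvPolynomial (Fin 3) E) : nD u (G - H) = nD u G - nD u H := by
  simp only [nD, map_sub]; ring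
theorem nD_C_mul (u c : E) (G : MvPolynomial (Fin 3) E) : nD u (C c * G) = C c * nD u G := by
  simp only [nD, pderiv_C_mul]; ring

theorem eval_nD (P : Fin 3 → E) (u : E) (G : MvPolynomial (Fin 3) E) :
    eval P (nD u G) = eval P (pderiv 0 G) - u * eval P (pderiv 1 G) + u ^ 2 * eval P (pderiv 2 G) := by
  simp [nD]

theorem nD2 (u : E) (G : MvPolynomial (Fin 3) E) :
    nD u (nD u G) = pderiv 0 (pderiv 0 G) - C (2 * u) * pderiv 0 (pderiv 1 G)
      + C (u ^ 2) * (pderiv 1 (pderiv 1 G) + C 2 * pderiv 0 (pderiv 2 G))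
      - C (2 * u ^ 3) * pderiv 1 (pderiv 2 G) + C (u ^ 4) * pderiv 2 (pderiv 2 G) := by
  simp only [nD, map_add, map_sub, pderiv_C_mul, pderiv_comm' 1 0, pderiv_comm' 2 0, pderiv_comm' 2 1]
  have : (C (2 : E) : MvPolynomial (Fin 3) E) = 2 := map_ofNat C 2
  simp only [map_mul, map_pow, this]
  ring

/-- hypotheses on a configuration of lines -/
structure Config (Q : Finset (E × E × E)) (nbr : E × E × E → Finset (E × E × E)) (M : ℕ) : Prop where
  ne : Q.Nonempty
  sub : ∀ q ∈ Q, nbr q ⊆ Q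
  card : ∀ q ∈ Q, M ≤ (nbr q).card
  inc : ∀ q ∈ Q, ∀ q' ∈ nbr q, incd q q'
  x_ne : ∀ q ∈ Q, ∀ q' ∈ nbr q, q'.1 ≠ q.1
  inj : ∀ q ∈ Q, Set.InjOn (rho q) (nbr q)

theorem root_zero {q : E × E × E} {T : Finset (E × E × E)} (hinj : Set.InjOn (rho q) T)
    (f : Polynomial E) (hd : f.natDegree < T.card) (hz : ∀ q' ∈ T, f.eval (rho q q') = 0) : f = 0 := by
  classical
  apply Polynomial.eq_zero_of_natDegree_lt_card_of_eval_eq_zero' f (T.image (rho q))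
  · intro i hi
    obtain ⟨q', hq', rfl⟩ := Finset.mem_image.mp hi
    exact hz q' hq'
  · rwa [Finset.card_image_of_injOn hinj]

section
variable {Q : Finset (E × E × E)} {F : MvPolynomial (Fin 3) E}

theorem van1 (hF : ∀ q ∈ Q, lineMap q F = 0) {q : E × E × E} (hq : q ∈ Q) :
    lineMap q (nD q.1 F) = 0 := by
  rw [← deriv_lineMap, hF q hq, Polynomial.derivative_zero]
theorem van2 (hF : ∀ q ∈ Q, lineMap q F = 0) {q : E × E × E} (hq : q ∈ Q) :
    lineMap q (nD q.1 (nD q.1 F)) = 0 := by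
  rw [← deriv_lineMap, van1 hF hq, Polynomial.derivative_zero]
theorem van3 (hF : ∀ q ∈ Q, lineMap q F = 0) {q : E × E × E} (hq : q ∈ Q) :
    lineMap q (nD q.1 (nD q.1 (nD q.1 F))) = 0 := by
  rw [← deriv_lineMap, van2 hF hq, Polynomial.derivative_zero]

theorem bc_at (hF : ∀ q ∈ Q, lineMap q F = 0) {q q' : E × E × E} (hq : q ∈ Q) (hq' : q' ∈ Q)
    (hi : incd q q') (hx : q'.1 ≠ q.1) :
    eval (pt q (rho q q')) (pderiv 1 F) = (q.1 + q'.1) * eval (pt q (rho q q')) (pderiv 2 F) ∧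
    eval (pt q (rho q q')) (pderiv 0 F) = q.1 * q'.1 * eval (pt q (rho q q')) (pderiv 2 F) := by
  have h1 := congrArg (Polynomial.eval (rho q q')) (van1 hF hq)
  have h2 := congrArg (Polynomial.eval (rho q q')) (van1 hF hq')
  rw [eval_lineMap, Polynomial.eval_zero] at h1 h2
  rw [← pt_eq q q' hi hx] at h2
  rw [eval_nD] at h1 h2
  exact ptalg1 hx.symm h1 h2

theorem deg5 {d : ℕ} {a b c e f : Polynomial E} (h1 : a.natDegree ≤ d) (h2 : b.natDegree ≤ d)
    (h3 : c.natDegree ≤ d) (h4 : e.natDegree ≤ d) (h5 : f.natDegree ≤ d) :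
    (a * b * c * e * f).natDegree ≤ 5 * d := by
  have := Polynomial.natDegree_mul_le (p := a) (q := b)
  have := Polynomial.natDegree_mul_le (p := a * b) (q := c)
  have := Polynomial.natDegree_mul_le (p := a * b * c) (q := e)
  have := Polynomial.natDegree_mul_le (p := a * b * c * e) (q := f)
  omega

theorem degadd {d : ℕ} {a b : Polynomial E} (h1 : a.natDegree ≤ d) (h2 : b.natDegree ≤ d) :
    (a + b).natDegree ≤ d := (Polynomial.natDegree_add_le _ _).trans (max_le h1 h2)
theorem degsub {d : ℕ} {a b : Polynomial E} (h1 : a.natDegree ≤ d) (h2 : b.natDegree ≤ d) :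
    (a - b).natDegree ≤ d := (Polynomial.natDegree_sub_le _ _).trans (max_le h1 h2)

theorem claim1 {nbr : E × E × E → Finset (E × E × E)} {M d : ℕ} (hc : Config Q nbr M)
    (hF : ∀ q ∈ Q, lineMap q F = 0) (hd : F.totalDegree ≤ d) (hM : 5 * d < M) {q : E × E × E}
    (hq : q ∈ Q) (c w : Polynomial E) (hcd : c = lineMap q (pderiv 2 F))
    (hw : w = lineMap q (pderiv 1 F) - Polynomial.C q.1 * c) :
    c * c * c * c * lineMap q (pderiv 0 (pderiv 0 F))
    - c * c * c * w * (lineMap q (pderiv 0 (pderiv 1 F)) + lineMap q (pderiv 0 (pderiv 1 F)))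
    + c * c * w * w * (lineMap q (pderiv 1 (pderiv 1 F)) + lineMap q (pderiv 0 (pderiv 2 F))
        + lineMap q (pderiv 0 (pderiv 2 F)))
    - c * w * w * w * (lineMap q (pderiv 1 (pderiv 2 F)) + lineMap q (pderiv 1 (pderiv 2 F)))
    + w * w * w * w * lineMap q (pderiv 2 (pderiv 2 F)) = 0 := by
  apply root_zero (hc.inj q hq)
  · refine lt_of_le_of_lt ?_ (lt_of_lt_of_le hM (hc.card q hq))
    have d1 : ∀ i, (lineMap q (pderiv i F)).natDegree ≤ d := fun i =>
      ((natDegree_lineMap q _).trans (totalDegree_pderiv_le i F)).trans hd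
    have d2 : ∀ i j, (lineMap q (pderiv i (pderiv j F))).natDegree ≤ d := fun i j =>
      ((natDegree_lineMap q _).trans ((totalDegree_pderiv_le i _).trans (totalDegree_pderiv_le j F))).trans hd
    have dc : c.natDegree ≤ d := hcd ▸ d1 2
    have dw : w.natDegree ≤ d := by
      rw [hw]
      exact degsub (d1 1) ((Polynomial.natDegree_C_mul_le _ _).trans dc)
    refine degadd (degsub (degadd (degsub ?_ ?_) ?_) ?_) ?_
    · exact deg5 dc dc dc dc (d2 _ _)
    · exact deg5 dc dc dc dw (degadd (d2 _ _) (d2 _ _))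
    · exact deg5 dc dc dw dw (degadd (degadd (d2 _ _) (d2 _ _)) (d2 _ _))
    · exact deg5 dc dw dw dw (degadd (d2 _ _) (d2 _ _))
    · exact deg5 dw dw dw dw (d2 _ _)
  · intro q' hq'
    have hi := hc.inc q hq q' hq'
    have hx := hc.x_ne q hq q' hq'
    have hQ' := hc.sub q hq hq'
    obtain ⟨hb, -⟩ := bc_at hF hq hQ' hi hx
    have h2 := congrArg (Polynomial.eval (rho q q')) (van2 hF hQ')
    rw [eval_lineMap, Polynomial.eval_zero, ← pt_eq q q' hi hx, nD2] at h2
    simp only [map_add, map_sub, map_mul, eval_C] at h2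
    rw [hw, hcd]
    simp only [Polynomial.eval_add, Polynomial.eval_sub, Polynomial.eval_mul, Polynomial.eval_C,
      eval_lineMap]
    rw [hb]
    linear_combination (eval (pt q (rho q q')) (pderiv 2 F)) ^ 4 * h2

theorem incd_symm {q q' : E × E × E} (h : incd q q') : incd q' q := by
  unfold incd at *; linear_combination -h

theorem claim2 {nbr : E × E × E → Finset (E × E × E)} {M d : ℕ} (hc : Config Q nbr M)
    (hF : ∀ q ∈ Q, lineMap q F = 0) (hd : F.totalDegree ≤ d) (hM : 5 * d < M) {q : E × E × E}
    (hq : q ∈ Q) (c β : Polynomial E) (hcd : c = lineMap q (pderiv 2 F))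
    (hβ : β = lineMap q (pderiv 1 F) - Polynomial.C (2 * q.1) * c) :
    β * β * Polynomial.derivative (Polynomial.derivative c)
      - c * β * Polynomial.derivative (Polynomial.derivative β)
      + (c + c) * Polynomial.derivative β * Polynomial.derivative β
      - (β + β) * Polynomial.derivative β * Polynomial.derivative c = 0 := by
  apply root_zero (hc.inj q hq)
  · refine lt_of_le_of_lt ?_ (lt_of_lt_of_le hM (hc.card q hq))
    have d1 : ∀ i, (lineMap q (pderiv i F)).natDegree ≤ d := fun i =>
      ((natDegree_lineMap q _).trans (totalDegree_pderiv_le i F)).trans hd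
    have dc : c.natDegree ≤ d := hcd ▸ d1 2
    have dw : β.natDegree ≤ d := by
      rw [hβ]
      exact degsub (d1 1) ((Polynomial.natDegree_C_mul_le _ _).trans dc)
    have dd : ∀ g : Polynomial E, g.natDegree ≤ d → (Polynomial.derivative g).natDegree ≤ d :=
      fun g hg => (Polynomial.natDegree_derivative_le g).trans ((Nat.sub_le _ _).trans hg)
    have d3 : ∀ a b e : Polynomial E, a.natDegree ≤ d → b.natDegree ≤ d → e.natDegree ≤ d →
        (a * b * e).natDegree ≤ 5 * d := by
      intro a b e h1 h2 h3
      have := Polynomial.natDegree_mul_le (p := a) (q := b)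
      have := Polynomial.natDegree_mul_le (p := a * b) (q := e)
      omega
    refine degsub (degadd (degsub ?_ ?_) ?_) ?_
    · exact d3 _ _ _ dw dw (dd _ (dd _ dc))
    · exact d3 _ _ _ dc dw (dd _ (dd _ dw))
    · exact d3 _ _ _ (degadd dc dc) (dd _ dw) (dd _ dw)
    · exact d3 _ _ _ (degadd dw dw) (dd _ dw) (dd _ dc)
  · intro q' hq'
    have hi := hc.inc q hq q' hq'
    have hx := hc.x_ne q hq q' hq'
    have hQ' := hc.sub q hq hq'
    obtain ⟨hb, -⟩ := bc_at hF hq hQ' hi hx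
    have hpt := pt_eq q q' hi hx
    have hu2 := congrArg (Polynomial.eval (rho q q')) (van2 hF hq)
    have hu3 := congrArg (Polynomial.eval (rho q q')) (van3 hF hq)
    have hv2 := congrArg (Polynomial.eval (rho q q')) (van2 hF hQ')
    rw [eval_lineMap, Polynomial.eval_zero] at hu2 hu3 hv2
    rw [← hpt] at hv2
    have hP := hu2
    rw [nD2] at hP
    simp only [map_add, map_sub, map_mul, eval_C] at hP
    have hH := congrArg (fun f => Polynomial.eval (rho q q') (Polynomial.derivative f))
      (claim1 hc hF hd hM hQ' _ _ rfl rfl)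
    simp only [Polynomial.derivative_add, Polynomial.derivative_sub, Polynomial.derivative_mul,
      Polynomial.derivative_C, deriv_lineMap, Polynomial.eval_add, Polynomial.eval_sub,
      Polynomial.eval_mul, Polynomial.eval_C, eval_lineMap, Polynomial.eval_zero,
      Polynomial.derivative_zero, ← hpt] at hH
    -- third derivative
    have hT := nD_shift q.1 q'.1 (nD q.1 (nD q.1 F))
    rw [pderiv_nD, pderiv_nD, pderiv_nD, pderiv_nD] at hT
    have hT' := congrArg (eval (pt q (rho q q'))) hT
    conv_lhs at hT' => rw [nD2]
    simp only [nD_add, nD_sub, nD_C_mul] at hT'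
    simp only [map_add, map_sub, map_mul, eval_C, hu3] at hT'
    -- second derivative
    have hS := nD_shift q.1 q'.1 (nD q'.1 F)
    have hS1 := nD_shift q.1 q'.1 F
    have hS2 : nD q'.1 (nD q'.1 F) = nD q.1 (nD q.1 F)
        + C (q.1 - q'.1) * (nD q.1 (pderiv 1 F) - C (q.1 + q'.1) * nD q.1 (pderiv 2 F))
        + C (q.1 - q'.1) * (nD q'.1 (pderiv 1 F) - C (q.1 + q'.1) * nD q'.1 (pderiv 2 F)) := by
      rw [hS, pderiv_nD, pderiv_nD, hS1]
      simp only [nD_add, nD_sub, nD_C_mul]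
    have hS3 := congrArg (eval (pt q (rho q q'))) hS2
    simp only [map_add, map_sub, map_mul, eval_C] at hS3
    rw [hv2, hu2] at hS3
    have hne : q.1 - q'.1 ≠ 0 := sub_ne_zero.mpr hx.symm
    have hδ : eval (pt q (rho q q')) (nD q'.1 (pderiv 1 F))
        - (q.1 + q'.1) * eval (pt q (rho q q')) (nD q'.1 (pderiv 2 F)) =
        -(eval (pt q (rho q q')) (nD q.1 (pderiv 1 F))
        - (q.1 + q'.1) * eval (pt q (rho q q')) (nD q.1 (pderiv 2 F))) := by
      apply mul_left_cancel₀ hne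
      linear_combination -hS3
    have hb1 := eval_nD (pt q (rho q q')) q.1 (pderiv 1 F)
    have hc1 := eval_nD (pt q (rho q q')) q.1 (pderiv 2 F)
    rw [pderiv_comm' 2 1] at hb1
    have key := ptalg2 hb hP hb1 hc1
      (rrv := eval (pt q (rho q q')) (nD q'.1 (pderiv 0 (pderiv 0 F))))
      (rsv := eval (pt q (rho q q')) (nD q'.1 (pderiv 0 (pderiv 1 F))))
      (rtv := eval (pt q (rho q q')) (nD q'.1 (pderiv 0 (pderiv 2 F))))
      (ssv := eval (pt q (rho q q')) (nD q'.1 (pderiv 1 (pderiv 1 F))))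
      (stv := eval (pt q (rho q q')) (nD q'.1 (pderiv 1 (pderiv 2 F))))
      (ttv := eval (pt q (rho q q')) (nD q'.1 (pderiv 2 (pderiv 2 F))))
      (b2 := eval (pt q (rho q q')) (nD q.1 (nD q.1 (pderiv 1 F))))
      (c2 := eval (pt q (rho q q')) (nD q.1 (nD q.1 (pderiv 2 F))))
      (by linear_combination hT') hδ
      (by linear_combination hH)
    rw [hβ, hcd]
    simp only [Polynomial.derivative_add, Polynomial.derivative_sub, Polynomial.derivative_mul,
      Polynomial.derivative_C, deriv_lineMap, Polynomial.eval_add, Polynomial.eval_sub,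
      Polynomial.eval_mul, Polynomial.eval_C, eval_lineMap, Polynomial.eval_zero, zero_mul, zero_add]
    linear_combination key

end
end PM

namespace PM
open MvPolynomial

variable {E : Type*} [Field E]

theorem abstract_lines (p : ℕ) [CharP E p] {Q : Finset (E × E × E)}
    {nbr : E × E × E → Finset (E × E × E)} {M d : ℕ} (hc : Config Q nbr M)
    (hex : ∃ F : MvPolynomial (Fin 3) E, F ≠ 0 ∧ F.totalDegree ≤ d ∧ ∀ q ∈ Q, lineMap q F = 0)
    (hM : 5 * d < M) (hp : 2 * d + 1 < p) :
    ∃ q ∈ Q, ∃ l k : E, ∃ T ⊆ nbr q, M ≤ T.card + d ∧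
      ∀ q' ∈ T, l * (q'.2.1 - q.2.1) + k * (q'.1 - q.1) = 1 := by
  classical
  -- minimal F
  have hex' : ∃ n, ∃ F : MvPolynomial (Fin 3) E, F ≠ 0 ∧ F.totalDegree = n ∧
      ∀ q ∈ Q, lineMap q F = 0 := by
    obtain ⟨F, h1, h2, h3⟩ := hex
    exact ⟨_, F, h1, rfl, h3⟩
  obtain ⟨F, hF0, hFn, hF⟩ := Nat.find_spec hex'
  have hmin : ∀ G : MvPolynomial (Fin 3) E, G ≠ 0 → (∀ q ∈ Q, lineMap q G = 0) →
      F.totalDegree ≤ G.totalDegree := by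
    intro G h1 h2
    rw [hFn]
    exact Nat.find_min' hex' ⟨G, h1, rfl, h2⟩
  have hd : F.totalDegree ≤ d := by
    obtain ⟨G, h1, h2, h3⟩ := hex
    exact (hmin G h1 h3).trans h2
  clear hFn
  have hnC : ∀ c, F ≠ C c := by
    intro c h
    obtain ⟨q, hq⟩ := hc.ne
    have := hF q hq
    rw [h, lineMap_C] at this
    rw [Polynomial.C_eq_zero] at this
    rw [this] at h
    exact hF0 (by simpa using h)
  have hex0 : ∃ q ∈ Q, ∃ i, lineMap q (pderiv i F) ≠ 0 := by
    by_contra hcon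
    push Not at hcon
    obtain ⟨c, hcF⟩ := exists_pderiv_ne p F (by omega) (fun i => by
      by_contra hne
      have h1 := hmin _ hne (fun q hq => hcon q hq i)
      have h2 := totalDegree_pderiv i F
      have h3 : F.totalDegree = 0 := by omega
      exact hnC _ (totalDegree_eq_zero_iff_eq_C.mp h3))
    exact hnC _ hcF
  obtain ⟨q, hq, i, hi⟩ := hex0
  have hdeg : ∀ i, (lineMap q (pderiv i F)).natDegree ≤ d := fun i =>
      ((natDegree_lineMap q _).trans (totalDegree_pderiv_le i F)).trans hd
  have hcard := hc.card q hq
  have hbc := fun q' hq' => bc_at hF hq (hc.sub q hq hq') (hc.inc q hq q' hq') (hc.x_ne q hq q' hq')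
  have hcne : lineMap q (pderiv 2 F) ≠ 0 := by
    intro hz
    have hz' : ∀ q' ∈ nbr q, eval (pt q (rho q q')) (pderiv 2 F) = 0 := by
      intro q' _
      rw [← eval_lineMap, hz, Polynomial.eval_zero]
    apply hi
    apply root_zero (hc.inj q hq) _ (by have := hdeg i; omega)
    intro q' hq'
    have hb := hbc q' hq'
    rw [hz' q' hq', mul_zero, mul_zero] at hb
    rw [eval_lineMap]
    fin_cases i
    · exact hb.2
    · exact hb.1
    · exact hz' q' hq'
  set c := lineMap q (pderiv 2 F) with hcd
  set β := lineMap q (pderiv 1 F) - Polynomial.C (2 * q.1) * c with hβ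
  have hW := claim2 hc hF hd hM hq c β hcd hβ
  have dc : c.natDegree ≤ d := hdeg 2
  have dβ : β.natDegree ≤ d := degsub (hdeg 1) ((Polynomial.natDegree_C_mul_le _ _).trans dc)
  have hβe : ∀ q' ∈ nbr q, β.eval (rho q q') = (q'.1 - q.1) * c.eval (rho q q') := by
    intro q' hq'
    rw [hβ, hcd]
    simp only [Polynomial.eval_sub, Polynomial.eval_mul, Polynomial.eval_C, eval_lineMap]
    rw [(hbc q' hq').1]; ring
  have hβ0 : β ≠ 0 := by
    intro hz
    apply hcne
    apply root_zero (hc.inj q hq) _ (by omega)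
    intro q' hq'
    have := hβe q' hq'
    rw [hz, Polynomial.eval_zero] at this
    exact (mul_eq_zero.mp this.symm).resolve_left (sub_ne_zero.mpr (hc.x_ne q hq q' hq'))
  have ddc := (Polynomial.natDegree_derivative_le c)
  have ddβ := (Polynomial.natDegree_derivative_le β)
  have m2 : ∀ a b : Polynomial E, a.natDegree ≤ d → b.natDegree ≤ d → (a * b).natDegree ≤ 2 * d := by
    intro a b h1 h2
    have := Polynomial.natDegree_mul_le (p := a) (q := b)
    omega
  set g := Polynomial.derivative c * β - c * Polynomial.derivative β with hg
  have dg : g.natDegree ≤ 2 * d := degsub (m2 _ _ (by omega) dβ) (m2 _ _ dc (by omega))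
  obtain ⟨l, hl⟩ := ratio_const p g (β * β) (mul_ne_zero hβ0 hβ0) (by omega)
    (by have := m2 _ _ dβ dβ; omega) (by
      rw [hg]
      simp only [Polynomial.derivative_sub, Polynomial.derivative_mul]
      linear_combination β * hW)
  obtain ⟨k, hk⟩ := ratio_const p (c - Polynomial.C l * Polynomial.X * β) β hβ0
    (by
      have h1 : (Polynomial.C l * Polynomial.X * β).natDegree ≤ d + 1 := by
        have h2 := Polynomial.natDegree_mul_le (p := Polynomial.C l * Polynomial.X) (q := β)
        have h3 : (Polynomial.C l * Polynomial.X).natDegree ≤ 1 := by compute_degree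
        omega
      have h2 : (c - Polynomial.C l * Polynomial.X * β).natDegree ≤ d + 1 := degsub (by omega) h1
      rcases Nat.eq_zero_or_pos d with h0 | h0
      · omega
      · omega) (by omega) (by
      simp only [Polynomial.derivative_sub, Polynomial.derivative_mul, Polynomial.derivative_C,
        Polynomial.derivative_X]
      rw [hg] at hl
      linear_combination hl)
  refine ⟨q, hq, l, k, (nbr q).filter (fun q' => c.eval (rho q q') ≠ 0), Finset.filter_subset _ _, ?_, ?_⟩
  · have hsplit := Finset.card_filter_add_card_filter_not (s := nbr q)
      (fun q' => c.eval (rho q q') ≠ 0)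
    have : ((nbr q).filter (fun q' => ¬ c.eval (rho q q') ≠ 0)).card ≤ d := by
      by_contra hgt
      apply hcne
      refine root_zero (q := q) (T := (nbr q).filter (fun q' => ¬ c.eval (rho q q') ≠ 0)) ?_ _ (by omega) ?_
      · exact (hc.inj q hq).mono (by
        intro x hx; exact (Finset.mem_filter.mp hx).1)
      · intro q' hq'
        have := (Finset.mem_filter.mp hq').2
        simpa using this
    omega
  · intro q' hq'
    obtain ⟨hq', hcz⟩ := Finset.mem_filter.mp hq'
    have h1 := congrArg (Polynomial.eval (rho q q')) hk
    simp only [Polynomial.eval_sub, Polynomial.eval_mul, Polynomial.eval_C, Polynomial.eval_X] at h1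
    rw [hβe q' hq'] at h1
    have h2 : rho q q' * (q.1 - q'.1) = q.2.1 - q'.2.1 :=
      div_mul_cancel₀ _ (sub_ne_zero.mpr (hc.x_ne q hq q' hq').symm)
    apply mul_right_cancel₀ hcz
    linear_combination -h1 + l * (c.eval (rho q q')) * h2

end PM

namespace PM
open MvPolynomial

variable {E : Type*} [Field E]

noncomputable def toPoly (k : ℕ) : ((Fin 3 → Fin (k + 1)) → E) →ₗ[E] MvPolynomial (Fin 3) E where
  toFun f := ∑ m, monomial (Finsupp.equivFunOnFinite.symm (fun i => ((m i : ℕ)))) (f m)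
  map_add' f g := by simp [Finset.sum_add_distrib]
  map_smul' c f := by simp [Finset.smul_sum, smul_monomial]

theorem exists_F (R : Finset (E × E × E)) (k : ℕ) (h : (3 * k + 1) * R.card < (k + 1) ^ 3) :
    ∃ F : MvPolynomial (Fin 3) E, F ≠ 0 ∧ F.totalDegree ≤ 3 * k ∧ ∀ q ∈ R, lineMap q F = 0 := by
  classical
  have hdeg : ∀ f : (Fin 3 → Fin (k + 1)) → E, (toPoly k f).totalDegree ≤ 3 * k := by
    intro f
    refine totalDegree_finsetSum_le ?_
    intro m _
    refine (totalDegree_monomial_le _ _).trans ?_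
    rw [Finsupp.sum_fintype _ _ (by simp)]
    simp only [Fin.sum_univ_three, id, Finsupp.equivFunOnFinite_symm_apply_apply]
    have := (m 0).is_lt
    have := (m 1).is_lt
    have := (m 2).is_lt
    omega
  let Φ : ((Fin 3 → Fin (k + 1)) → E) →ₗ[E] ((R × Fin (3 * k + 1)) → E) :=
    LinearMap.pi (fun x => (Polynomial.lcoeff E (x.2 : ℕ)).comp
      ((lineMap (x.1 : E × E × E)).toLinearMap.comp (toPoly k)))
  have hker : LinearMap.ker Φ ≠ ⊥ := by
    apply LinearMap.ker_ne_bot_of_finrank_lt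
    simp only [Module.finrank_fintype_fun_eq_card, Fintype.card_prod, Fintype.card_fin,
      Fintype.card_coe, Fintype.card_pi, Finset.prod_const, Finset.card_univ]
    rw [mul_comm]; exact h
  obtain ⟨f, hf, hf0⟩ := (Submodule.ne_bot_iff _).mp hker
  refine ⟨toPoly k f, ?_, hdeg f, ?_⟩
  · intro hz
    apply hf0
    ext m
    have := congrArg (coeff (Finsupp.equivFunOnFinite.symm (fun i => ((m i : ℕ))))) hz
    simp only [toPoly, LinearMap.coe_mk, AddHom.coe_mk, coeff_sum, coeff_monomial, coeff_zero] at this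
    rw [Finset.sum_eq_single m] at this
    · simpa using this
    · intro m' _ hm'
      rw [if_neg]
      intro he
      apply hm'
      have := Finsupp.equivFunOnFinite.symm.injective he
      ext i
      exact congrFun this i
    · simp
  · intro q hq
    ext j
    rw [Polynomial.coeff_zero]
    by_cases hj : j < 3 * k + 1
    · have := congrFun (LinearMap.mem_ker.mp hf) (⟨q, hq⟩, ⟨j, hj⟩)
      simpa [Φ] using this
    · apply Polynomial.coeff_eq_zero_of_natDegree_lt
      have := natDegree_lineMap q (toPoly k f)
      have := hdeg f
      omega

theorem choose_k (N : ℕ) (hN : 1 ≤ N) : (3 * Nat.sqrt (3 * N) + 1) * N < (Nat.sqrt (3 * N) + 1) ^ 3 := by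
  set k := Nat.sqrt (3 * N)
  have h1 : 3 * N < (k + 1) * (k + 1) := Nat.lt_succ_sqrt (3 * N)
  nlinarith

/-- bipartite version: polynomial vanishing on reds (few) then on blues meeting many reds -/
theorem vanish_extend {q : E × E × E} {T : Finset (E × E × E)} (hinj : Set.InjOn (rho q) T)
    (F : MvPolynomial (Fin 3) E) (hd : F.totalDegree < T.card) (hT : ∀ q' ∈ T, lineMap q' F = 0)
    (hi : ∀ q' ∈ T, incd q q') (hx : ∀ q' ∈ T, q'.1 ≠ q.1) : lineMap q F = 0 := by
  apply root_zero hinj _ (lt_of_le_of_lt (natDegree_lineMap q F) hd)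
  intro q' hq'
  rw [eval_lineMap, pt_eq q q' (hi q' hq') (hx q' hq'), ← eval_lineMap, hT q' hq', Polynomial.eval_zero]

end PM

namespace PM
open MvPolynomial

variable {E : Type*} [Field E]

theorem incd_of_conc {q q1 q2 : E × E × E} (h1 : incd q q1) (h2 : incd q q2) (x1 : q1.1 ≠ q.1)
    (x2 : q2.1 ≠ q.1) (h : rho q q1 = rho q q2) : incd q1 q2 := by
  have a1 := pt_eq q q1 h1 x1
  have a2 := pt_eq q q2 h2 x2
  rw [h] at a1
  rw [a1] at a2
  have e1 := congrFun a2 1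
  have e2 := congrFun a2 2
  simp [pt] at e1 e2
  unfold incd
  linear_combination e2 + (q1.1 + q2.1) * e1 

theorem incd_of_vert {q q1 q2 : E × E × E} (h1 : incd q q1) (h2 : incd q q2) (x1 : q1.1 = q.1)
    (x2 : q2.1 = q.1) : incd q1 q2 := by
  unfold incd at *
  rw [x1] at h1; rw [x2] at h2; rw [x1, x2]
  linear_combination h2 - h1

open Classical in
theorem bip_half {R S : Finset (E × E × E)} {t : ℕ}
    (hR : ∀ q ∈ R, ∀ q' ∈ R, incd q q' → q = q') (hS : ∀ q ∈ S, ∀ q' ∈ S, incd q q' → q = q')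
    (hRt : ∀ q ∈ R, t ≤ (S.filter (fun s => incd q s)).card) {q : E × E × E} (hq : q ∈ R) :
    t ≤ ((R ∪ S).filter (fun s => incd q s ∧ s.1 ≠ q.1)).card + 1 ∧
    (∀ s ∈ (R ∪ S).filter (fun s => incd q s ∧ s.1 ≠ q.1), s ∈ S) ∧
    Set.InjOn (rho q) ((R ∪ S).filter (fun s => incd q s ∧ s.1 ≠ q.1)) := by
  have h2 : ∀ s ∈ (R ∪ S).filter (fun s => incd q s ∧ s.1 ≠ q.1), s ∈ S := by
    intro s hs
    obtain ⟨hs, hi, hx⟩ := Finset.mem_filter.mp hs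
    rcases Finset.mem_union.mp hs with h | h
    · exact absurd (hR q hq s h hi) (fun he => hx (by rw [he]))
    · exact h
  refine ⟨?_, h2, ?_⟩
  · refine (hRt q hq).trans ?_
    rw [← Finset.card_filter_add_card_filter_not (s := S.filter (fun s => incd q s)) (fun s => s.1 ≠ q.1)]
    apply Nat.add_le_add
    · apply Finset.card_le_card
      intro s hs
      simp only [Finset.mem_filter, Finset.mem_union] at hs ⊢
      exact ⟨Or.inr hs.1.1, hs.1.2, hs.2⟩
    · apply Finset.card_le_one.mpr
      intro a ha b hb
      simp only [Finset.mem_filter, not_not] at ha hb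
      exact hS a ha.1.1 b hb.1.1 (incd_of_vert ha.1.2 hb.1.2 ha.2 hb.2)
  · intro a ha b hb hab
    have ha' := (Finset.mem_filter.mp ha).2
    have hb' := (Finset.mem_filter.mp hb).2
    exact hS a (h2 a ha) b (h2 b hb) (incd_of_conc ha'.1 hb'.1 ha'.2 hb'.2 hab)

open Classical in
theorem bip (p : ℕ) [CharP E p] {R S : Finset (E × E × E)} {t k : ℕ}
    (hR : ∀ q ∈ R, ∀ q' ∈ R, incd q q' → q = q') (hS : ∀ q ∈ S, ∀ q' ∈ S, incd q q' → q = q')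
    (hRt : ∀ q ∈ R, t ≤ (S.filter (fun s => incd q s)).card)
    (hSt : ∀ q ∈ S, t ≤ (R.filter (fun s => incd q s)).card) (hne : R.Nonempty)
    (hk : (3 * k + 1) * R.card < (k + 1) ^ 3) (ht : 15 * k + 1 < t) (hp : 6 * k + 1 < p) :
    (∃ q ∈ R, ∃ l m : E, ∃ T ⊆ S, t ≤ T.card + (3 * k + 1) ∧
      ∀ q' ∈ T, incd q q' ∧ l * (q'.2.1 - q.2.1) + m * (q'.1 - q.1) = 1) ∨
    (∃ q ∈ S, ∃ l m : E, ∃ T ⊆ R, t ≤ T.card + (3 * k + 1) ∧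
      ∀ q' ∈ T, incd q q' ∧ l * (q'.2.1 - q.2.1) + m * (q'.1 - q.1) = 1) := by
  have HR := fun q (hq : q ∈ R) => bip_half hR hS hRt hq
  have HS := fun q (hq : q ∈ S) => bip_half hS hR hSt hq
  simp only [Finset.union_comm S R] at HS
  have hc : Config (R ∪ S) (fun q => (R ∪ S).filter (fun s => incd q s ∧ s.1 ≠ q.1)) (t - 1) := by
    refine ⟨hne.mono Finset.subset_union_left, fun q _ => Finset.filter_subset _ _, ?_,
      fun q _ s hs => (Finset.mem_filter.mp hs).2.1, fun q _ s hs => (Finset.mem_filter.mp hs).2.2, ?_⟩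
    · intro q hq
      rcases Finset.mem_union.mp hq with h | h
      · have := (HR q h).1; omega
      · have := (HS q h).1; omega
    · intro q hq
      rcases Finset.mem_union.mp hq with h | h
      · exact (HR q h).2.2
      · exact (HS q h).2.2
  obtain ⟨F, hF0, hFd, hF⟩ := exists_F R k hk
  have hF' : ∀ q ∈ R ∪ S, lineMap q F = 0 := by
    intro q hq
    rcases Finset.mem_union.mp hq with h | h
    · exact hF q h
    · refine vanish_extend (HS q h).2.2 F ?_ ?_ ?_ ?_
      · have := (HS q h).1; omega
      · intro s hs; exact hF s ((HS q h).2.1 s hs)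
      · intro s hs; exact (Finset.mem_filter.mp hs).2.1
      · intro s hs; exact (Finset.mem_filter.mp hs).2.2
  obtain ⟨q, hq, l, m, T, hT, hTc, hTe⟩ := abstract_lines p hc ⟨F, hF0, hFd, hF'⟩ (by omega) (by omega)
  rcases Finset.mem_union.mp hq with h | h
  · left
    refine ⟨q, h, l, m, T, fun s hs => (HR q h).2.1 s (hT hs), by omega, fun s hs => ⟨?_, hTe s hs⟩⟩
    exact (Finset.mem_filter.mp (hT hs)).2.1
  · right
    refine ⟨q, h, l, m, T, fun s hs => (HS q h).2.1 s (hT hs), by omega, fun s hs => ⟨?_, hTe s hs⟩⟩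
    exact (Finset.mem_filter.mp (hT hs)).2.1

open Classical in
theorem prune {α β : Type*} (rel : α → β → Prop) (t : ℕ) : ∀ (n : ℕ) (R : Finset α) (S : Finset β),
    R.card + S.card ≤ n →
    t * (R.card + S.card) < ∑ r ∈ R, (S.filter (fun s => rel r s)).card →
    ∃ R' ⊆ R, ∃ S' ⊆ S, R'.Nonempty ∧ (∀ r ∈ R', t ≤ (S'.filter (fun s => rel r s)).card) ∧
      (∀ s ∈ S', t ≤ (R'.filter (fun r => rel r s)).card) := by
  intro n
  induction n with
  | zero =>
    intro R S h1 h2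
    have : R = ∅ := by rw [← Finset.card_eq_zero]; omega
    subst this
    simp at h2
  | succ n ih =>
    intro R S h1 h2
    by_cases hr : ∃ r ∈ R, (S.filter (fun s => rel r s)).card < t
    · obtain ⟨r, hr, hlt⟩ := hr
      have hc := Finset.card_erase_add_one hr
      have hs := Finset.add_sum_erase R (fun r => (S.filter (fun s => rel r s)).card) hr
      obtain ⟨R', hR', S', hS', h⟩ := ih (R.erase r) S (by omega) (by rw [← hc] at h2; nlinarith)
      exact ⟨R', hR'.trans (Finset.erase_subset _ _), S', hS', h⟩
    by_cases hs : ∃ s ∈ S, (R.filter (fun r => rel r s)).card < t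
    · obtain ⟨s, hs, hlt⟩ := hs
      have hc := Finset.card_erase_add_one hs
      have hsw : ∀ S : Finset β, ∑ r ∈ R, (S.filter (fun s => rel r s)).card =
          ∑ s ∈ S, (R.filter (fun r => rel r s)).card := by
        intro S
        simp only [Finset.card_filter]
        exact Finset.sum_comm
      have hs' := Finset.add_sum_erase S (fun s => (R.filter (fun r => rel r s)).card) hs
      rw [hsw] at h2
      obtain ⟨R', hR', S', hS', h⟩ := ih R (S.erase s) (by omega) (by rw [hsw]; rw [← hc] at h2; nlinarith)
      exact ⟨R', hR', S', hS'.trans (Finset.erase_subset _ _), h⟩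
    push Not at hr hs
    refine ⟨R, subset_rfl, S, subset_rfl, ?_, hr, hs⟩
    by_contra hcon
    rw [Finset.not_nonempty_iff_eq_empty] at hcon
    subst hcon
    simp at h2

end PM

namespace PM

section
variable {F E : Type*} [Field F] [Field E] [Algebra F E]

local notation "ι" => algebraMap F E

/-- powers of θ up to 5 independent -/
def Indep (F : Type*) {E : Type*} [Field F] [Field E] [Algebra F E] (θ : E) : Prop :=
  ∀ a b c d e f : F, algebraMap F E a + algebraMap F E b * θ + algebraMap F E c * θ ^ 2
    + algebraMap F E d * θ ^ 3 + algebraMap F E e * θ ^ 4 + algebraMap F E f * θ ^ 5 = 0 →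
    a = 0 ∧ b = 0 ∧ c = 0 ∧ d = 0 ∧ e = 0 ∧ f = 0

theorem exists_indep (F : Type*) [Field F] : Indep F (RatFunc.X : RatFunc F) := by
  intro a b c d e f h
  have h' : algebraMap (Polynomial F) (RatFunc F) (Polynomial.C a + Polynomial.C b * Polynomial.X
      + Polynomial.C c * Polynomial.X ^ 2 + Polynomial.C d * Polynomial.X ^ 3
      + Polynomial.C e * Polynomial.X ^ 4 + Polynomial.C f * Polynomial.X ^ 5) = 0 := by
    rw [← h]
    simp only [map_add, map_mul, map_pow, RatFunc.algebraMap_X, RatFunc.algebraMap_C]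
    simp only [RatFunc.algebraMap_eq_C]
  rw [map_eq_zero_iff _ (RatFunc.algebraMap_injective F)] at h'
  have g := fun n => congrArg (fun q => Polynomial.coeff q n) h'
  have g0 := g 0
  have g1 := g 1
  have g2 := g 2
  have g3 := g 3
  have g4 := g 4
  have g5 := g 5
  simp [Polynomial.coeff_X, Polynomial.coeff_C, Polynomial.coeff_X_pow] at g0 g1 g2 g3 g4 g5
  exact ⟨g0, g1, g2, g3, g4, g5⟩

variable (θ : E)

def red (r : F × F × F) : E × E × E :=
  (ι r.1 + θ * ι r.2.2, ι r.2.1 + θ ^ 2 * ι r.2.2,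
    θ ^ 3 * ι r.1 + θ ^ 4 * ι r.2.1 + θ ^ 5 * ι r.2.2)

def rho0 (θ : E) : E := θ ^ 5 - θ * θ ^ 3 - θ ^ 2 * θ ^ 4
def Dn (s : F × F × F) : E := 1 - θ * ι s.1 - θ ^ 2 * ι s.2.1
def kap (s : F × F × F) : E := rho0 θ / Dn θ s

def blue (s : F × F × F) : E × E × E :=
  (kap θ s * ι s.2.1 - θ ^ 4, θ ^ 3 - kap θ s * ι s.1, - kap θ s * ι s.2.2)

variable {θ}

theorem Dn_ne (h : Indep F θ) (s : F × F × F) : Dn θ s ≠ 0 := by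
  intro h0
  have := h 1 (-s.1) (-s.2.1) 0 0 0 (by rw [← h0, Dn]; simp; ring)
  exact one_ne_zero this.1

theorem rho0_ne (h : Indep F θ) : rho0 θ ≠ 0 := by
  intro h0
  have hθ : θ ≠ 0 := by
    intro hz
    have := h 0 1 0 0 0 0 (by simp [hz])
    exact one_ne_zero this.2.1
  have h1 : (1 : E) - θ + θ ^ 2 = 0 := by
    have h4 : θ ^ 4 ≠ 0 := pow_ne_zero _ hθ
    apply mul_left_cancel₀ h4
    rw [rho0] at h0
    linear_combination -h0
  have := h 1 (-1) 1 0 0 0 (by simp; linear_combination h1)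
  exact one_ne_zero this.1

theorem kap_mul (h : Indep F θ) (s : F × F × F) : kap θ s * Dn θ s = rho0 θ :=
  div_mul_cancel₀ _ (Dn_ne h s)

theorem kap_ne (h : Indep F θ) (s : F × F × F) : kap θ s ≠ 0 :=
  div_ne_zero (rho0_ne h) (Dn_ne h s)

def rel (r s : F × F × F) : Prop := r.2.2 + s.1 * r.1 + s.2.1 * r.2.1 + s.2.2 = 0

theorem incd_iff (h : Indep F θ) (r s : F × F × F) : incd (red θ r) (blue θ s) ↔ rel r s := by
  have hk := kap_mul h s
  have key : (red θ r).2.2 - (blue θ s).2.2 - ((red θ r).1 * (blue θ s).2.1 - (blue θ s).1 * (red θ r).2.1)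
      = kap θ s * ι (r.2.2 + s.1 * r.1 + s.2.1 * r.2.1 + s.2.2) := by
    simp only [red, blue, map_add, map_mul]
    rw [Dn, rho0] at hk
    linear_combination -(ι r.2.2) * hk
  unfold incd rel
  rw [← sub_eq_zero, key]
  rw [mul_eq_zero, map_eq_zero]
  exact or_iff_right (kap_ne h s)

theorem red_red (h : Indep F θ) (r s : F × F × F) (hi : incd (red θ r) (red θ s)) : r = s := by
  unfold incd red at hi
  simp only at hi
  obtain ⟨x1, y1, z1⟩ := r
  obtain ⟨x2, y2, z2⟩ := s
  simp only at hi
  have := h (-(x1 * y2 - x2 * y1)) (-(z1 * y2 - z2 * y1)) (-(x1 * z2 - x2 * z1)) (x1 - x2) (y1 - y2)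
    (z1 - z2) (by simp only [map_neg, map_sub, map_mul]; linear_combination hi)
  obtain ⟨-, -, -, a, b, c⟩ := this
  rw [sub_eq_zero.mp a, sub_eq_zero.mp b, sub_eq_zero.mp c]

theorem blue_blue (h : Indep F θ) (r s : F × F × F) (hi : incd (blue θ r) (blue θ s)) : r = s := by
  have k1 := kap_mul h r
  have k2 := kap_mul h s
  have hn := rho0_ne h
  unfold incd blue at hi
  unfold Dn at k1 k2
  obtain ⟨a1, b1, d1⟩ := r
  obtain ⟨a2, b2, d2⟩ := s
  simp only at hi k1 k2
  set κ1 := kap θ (a1, b1, d1)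
  set κ2 := kap θ (a2, b2, d2)
  set D1 : E := 1 - θ * ι a1 - θ ^ 2 * ι b1 with hD1
  set D2 : E := 1 - θ * ι a2 - θ ^ 2 * ι b2 with hD2
  have e1 : rho0 θ * (- ι d1 * D2 + ι d2 * D1) = rho0 θ * ((ι b1 * θ ^ 3 * D2 - rho0 θ * ι b1 * ι a2
      + θ ^ 4 * ι a2 * D1) - (ι b2 * θ ^ 3 * D1 - rho0 θ * ι b2 * ι a1 + θ ^ 4 * ι a1 * D2)) := by
    have e0 := congrArg (fun q => D1 * D2 * q) hi
    have f1 : ∀ q : E, D1 * κ1 * q = rho0 θ * q := fun q => by rw [← k1]; ring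
    linear_combination e0 + (ι d1 * D2) * k1 - (ι d2 * D1) * k2 + (ι b1 * θ^3 * D2) * k1
      - (ι b2 * θ^3 * D1) * k2 + (θ^4 * ι a2 * D1) * k2 - (θ^4 * ι a1 * D2) * k1
      - (ι b1 * ι a2 - ι b2 * ι a1) * (k1 * κ2 * D2 + rho0 θ * k2)
  have e2 := mul_left_cancel₀ hn e1
  rw [hD1, hD2, rho0] at e2
  have := h (d2 - d1) (d1 * a2 - d2 * a1) (d1 * b2 - d2 * b1) (-(b1 - b2)) (-(a2 - a1)) (b1 * a2 - b2 * a1)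
    (by simp only [map_neg, map_sub, map_mul]; linear_combination e2)
  obtain ⟨a, -, -, b, c, -⟩ := this
  have hb : b1 = b2 := by linear_combination -b
  have ha : a1 = a2 := by linear_combination c
  have hd : d1 = d2 := by linear_combination -a
  rw [ha, hb, hd]

/-- collinear sets in 3-space -/
def Coll {F : Type*} [Field F] (T : Finset (F × F × F)) : Prop :=
  ∃ p0 v : F × F × F, ∀ t ∈ T, ∃ s : F,
    t = (p0.1 + s * v.1, p0.2.1 + s * v.2.1, p0.2.2 + s * v.2.2)

theorem coll_of (T : Finset (F × F × F)) (Q R : E) (hQR : ¬ (Q = 0 ∧ R = 0))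
    (h : ∀ t1 ∈ T, ∀ t2 ∈ T, Q * ι (t1.1 - t2.1) + R * ι (t1.2.1 - t2.2.1) = 0)
    (a b c : F) (hz : ∀ t ∈ T, t.2.2 = a * t.1 + b * t.2.1 + c) : Coll T := by
  by_cases hex : ∃ t1 ∈ T, ∃ t2 ∈ T, t1.1 ≠ t2.1 ∨ t1.2.1 ≠ t2.2.1
  · obtain ⟨t1, h1, t2, h2, hne⟩ := hex
    have hdet : ∀ t ∈ T, (t2.1 - t1.1) * (t.2.1 - t1.2.1) = (t.1 - t1.1) * (t2.2.1 - t1.2.1) := by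
      intro t ht
      have e1 := h t2 h2 t1 h1
      have e2 := h t ht t1 h1
      have : ι ((t2.1 - t1.1) * (t.2.1 - t1.2.1) - (t.1 - t1.1) * (t2.2.1 - t1.2.1)) = 0 := by
        rw [map_sub, map_mul, map_mul]
        by_contra hn
        apply hQR
        constructor
        · apply (mul_eq_zero.mp (?_ : Q * _ = 0)).resolve_right hn
          linear_combination e1 * ι (t.2.1 - t1.2.1) - e2 * ι (t2.2.1 - t1.2.1)
        · apply (mul_eq_zero.mp (?_ : R * _ = 0)).resolve_right hn
          linear_combination e2 * ι (t2.1 - t1.1) - e1 * ι (t.1 - t1.1)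
      rw [map_eq_zero] at this
      exact sub_eq_zero.mp this
    have hz1 := hz t1 h1
    have hz2 := hz t2 h2
    by_cases hx : t1.1 = t2.1
    · have hy : t2.2.1 - t1.2.1 ≠ 0 := sub_ne_zero.mpr (hne.resolve_left (by simp [hx])).symm
      refine ⟨t1, (t2.1 - t1.1, t2.2.1 - t1.2.1, t2.2.2 - t1.2.2), fun t ht =>
        ⟨(t.2.1 - t1.2.1) / (t2.2.1 - t1.2.1), ?_⟩⟩
      have hd := hdet t ht
      have hzt := hz t ht
      refine Prod.ext ?_ (Prod.ext ?_ ?_)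
      · simp only; field_simp; linear_combination -hd
      · simp only; field_simp; ring
      · simp only; rw [hzt, hz1, hz2]; field_simp; linear_combination -a*hd
    · have hx' : t2.1 - t1.1 ≠ 0 := sub_ne_zero.mpr (Ne.symm hx)
      refine ⟨t1, (t2.1 - t1.1, t2.2.1 - t1.2.1, t2.2.2 - t1.2.2), fun t ht =>
        ⟨(t.1 - t1.1) / (t2.1 - t1.1), ?_⟩⟩
      have hd := hdet t ht
      have hzt := hz t ht
      refine Prod.ext ?_ (Prod.ext ?_ ?_)
      · simp only; field_simp; ring
      · simp only; field_simp; linear_combination hd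
      · simp only; rw [hzt, hz1, hz2]; field_simp; linear_combination b*hd
  · push Not at hex
    rcases T.eq_empty_or_nonempty with he | ⟨t0, ht0⟩
    · exact ⟨0, 0, by simp [he]⟩
    · refine ⟨t0, 0, fun t ht => ⟨0, ?_⟩⟩
      obtain ⟨h1, h2⟩ := hex t ht t0 ht0
      refine Prod.ext ?_ (Prod.ext ?_ ?_)
      · simp [h1]
      · simp [h2]
      · rw [hz t ht, hz t0 ht0, h1, h2]; simp

theorem coll_blue (h : Indep F θ) (r : F × F × F) (T : Finset (F × F × F)) (l k : E)
    (hT : ∀ s ∈ T, rel r s ∧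
      l * ((blue θ s).2.1 - (red θ r).2.1) + k * ((blue θ s).1 - (red θ r).1) = 1) : Coll T := by
  rcases T.eq_empty_or_nonempty with he | hTne
  · exact ⟨0, 0, by simp [he]⟩
  set m : E := l * (θ ^ 3 - (red θ r).2.1) - k * (θ ^ 4 + (red θ r).1) with hm
  have hρ := rho0_ne h
  have heq : ∀ s ∈ T, (m - 1) * Dn θ s - l * rho0 θ * ι s.1 + k * rho0 θ * ι s.2.1 = 0 := by
    intro s hs
    have h1 := (hT s hs).2
    have h2 := kap_mul h s
    simp only [blue] at h1
    rw [hm]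
    linear_combination Dn θ s * h1 + (l * ι s.1 - k * ι s.2.1) * h2
  refine coll_of T (-(m - 1) * θ - l * rho0 θ) (-(m - 1) * θ ^ 2 + k * rho0 θ) ?_ ?_
    (-r.1) (-r.2.1) (-r.2.2) ?_
  · rintro ⟨hQ, hR⟩
    · obtain ⟨s, hs⟩ := hTne
      have h1 := heq s hs
      rw [Dn] at h1
      have hm1 : m - 1 = 0 := by linear_combination h1 - ι s.1 * hQ - ι s.2.1 * hR
      rw [hm1] at hQ hR
      have hl : l = 0 := by
        apply (mul_eq_zero.mp (?_ : l * rho0 θ = 0)).resolve_right hρ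
        linear_combination -hQ
      have hk : k = 0 := by
        apply (mul_eq_zero.mp (?_ : k * rho0 θ = 0)).resolve_right hρ
        linear_combination hR
      rw [hl, hk] at hm
      simp [hm] at hm1
  · intro t1 h1 t2 h2
    have e1 := heq t1 h1
    have e2 := heq t2 h2
    rw [Dn] at e1 e2
    simp only [map_sub]
    linear_combination e1 - e2
  · intro s hs
    have := (hT s hs).1
    unfold rel at this
    linear_combination this

theorem coll_red (h : Indep F θ) (s : F × F × F) (T : Finset (F × F × F)) (l k : E)
    (hT : ∀ r ∈ T, rel r s ∧
      l * ((red θ r).2.1 - (blue θ s).2.1) + k * ((red θ r).1 - (blue θ s).1) = 1) : Coll T := by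
  rcases T.eq_empty_or_nonempty with he | hTne
  · exact ⟨0, 0, by simp [he]⟩
  have hD := Dn_ne h s
  refine coll_of T (k * (1 - θ * ι s.1) - l * θ ^ 2 * ι s.1) (- k * θ * ι s.2.1 + l * (1 - θ ^ 2 * ι s.2.1))
    ?_ ?_ (-s.1) (-s.2.1) (-s.2.2) ?_
  · rintro ⟨hQ, hR⟩
    have hk : k = 0 := by
      apply (mul_eq_zero.mp (?_ : k * Dn θ s = 0)).resolve_right hD
      rw [Dn]
      linear_combination (1 - θ ^ 2 * ι s.2.1) * hQ + θ ^ 2 * ι s.1 * hR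
    have hl : l = 0 := by
      apply (mul_eq_zero.mp (?_ : l * Dn θ s = 0)).resolve_right hD
      rw [Dn]
      linear_combination (θ * ι s.2.1) * hQ + (1 - θ * ι s.1) * hR
    · obtain ⟨r, hr⟩ := hTne
      have := (hT r hr).2
      simp [hl, hk] at this
  · intro t1 h1 t2 h2
    have e1 := (hT t1 h1).2
    have e2 := (hT t2 h2).2
    have f1 := congrArg ι (hT t1 h1).1
    have f2 := congrArg ι (hT t2 h2).1
    simp only [map_add, map_mul, map_zero] at f1 f2
    simp only [red, blue] at e1 e2
    simp only [map_sub]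
    linear_combination e1 - e2 - (l * θ ^ 2 + k * θ) * (f1 - f2)
  · intro r hr
    have := (hT r hr).1
    unfold rel at this
    linear_combination this

end
end PM

namespace PM

theorem red_inj {F E : Type*} [Field F] [Field E] [Algebra F E] {θ : E} (h : Indep F θ) :
    Function.Injective (red (F := F) θ) := by
  intro r s hrs
  apply red_red h
  rw [hrs]
  simp [incd]

theorem blue_inj {F E : Type*} [Field F] [Field E] [Algebra F E] {θ : E} (h : Indep F θ) :
    Function.Injective (blue (F := F) θ) := by
  intro r s hrs
  apply blue_blue h
  rw [hrs]
  simp [incd]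

open Classical in
theorem filter_image_card {α β : Type*} [DecidableEq β] (f : α → β) (hf : Function.Injective f)
    (S : Finset α) (P : β → Prop) :
    ((S.image f).filter P).card = (S.filter (fun a => P (f a))).card := by
  rw [Finset.filter_image, Finset.card_image_of_injective _ hf]

open Classical in
theorem exists_pull {α β : Type*} [DecidableEq β] (f : α → β) 
    (S : Finset α) (T : Finset β) (hT : T ⊆ S.image f) :
    ∃ T' ⊆ S, T.card ≤ T'.card ∧ ∀ a ∈ T', f a ∈ T := by
  refine ⟨S.filter (fun a => f a ∈ T), Finset.filter_subset _ _, ?_, fun a ha => (Finset.mem_filter.mp ha).2⟩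
  have : T ⊆ (S.filter (fun a => f a ∈ T)).image f := by
    intro b hb
    obtain ⟨a, ha, rfl⟩ := Finset.mem_image.mp (hT hb)
    exact Finset.mem_image_of_mem _ (Finset.mem_filter.mpr ⟨ha, hb⟩)
  exact (Finset.card_le_card this).trans Finset.card_image_le

open Classical in
theorem PP (p : ℕ) [Fact p.Prime] (R S : Finset (ZMod p × ZMod p × ZMod p)) (N : ℕ) (hN : 1 ≤ N)
    (hR : R.card ≤ N) (hS : S.card ≤ N) (hp : 200 * N ≤ p ^ 2) (I : ℕ)
    (hI : I = ∑ r ∈ R, (S.filter (fun s => rel r s)).card) (hI2 : 160000 * N ^ 3 ≤ I ^ 2) :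
    ∃ T, (T ⊆ R ∨ T ⊆ S) ∧ Coll T ∧ I ≤ 8 * N * T.card := by
  set t := (I - 1) / (2 * N) with ht
  set k := Nat.sqrt (3 * N) with hk
  have hk2 : k * k ≤ 3 * N := Nat.sqrt_le _
  have hk1 : 1 ≤ k := by
    rw [hk, Nat.le_sqrt]; omega
  have hck := choose_k N hN
  rw [← hk] at hck
  have hIpos : 0 < I := by
    rcases Nat.eq_zero_or_pos I with h | h
    · rw [h] at hI2
      have : 0 < N ^ 3 := by positivity
      simp at hI2; omega
    · exact h
  have ht1 : t * (2 * N) ≤ I - 1 := Nat.div_mul_le_self _ _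
  have ht2 : I ≤ 2 * N * (t + 1) := by
    have := Nat.lt_mul_div_succ (I - 1) (show 0 < 2 * N by omega)
    rw [← ht] at this
    omega
  have htk : 15 * k + 1 < t := by
    by_contra hcon
    have h1 : t + 1 ≤ 17 * k := by omega
    have h2 : I ≤ 34 * N * k := by
      calc I ≤ _ := ht2
        _ ≤ 2 * N * (17 * k) := Nat.mul_le_mul_left _ h1
        _ = _ := by ring
    have h3 : I ^ 2 ≤ (34 * N * k) ^ 2 := Nat.pow_le_pow_left h2 2
    have h4 : (34 * N * k) ^ 2 ≤ 1156 * N ^ 2 * (3 * N) := by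
      calc (34 * N * k) ^ 2 = 1156 * N ^ 2 * (k * k) := by ring
        _ ≤ _ := Nat.mul_le_mul_left _ hk2
    have h5 : 0 < N ^ 3 := by positivity
    have h6 : 1156 * N ^ 2 * (3 * N) = 3468 * N ^ 3 := by ring
    omega
  have hkp : 6 * k + 1 < p := by
    by_contra hcon
    have hp14 : 14 < p := by
      by_contra h
      have : p ^ 2 ≤ 14 ^ 2 := Nat.pow_le_pow_left (by omega) 2
      omega
    have hk3 : 3 ≤ k := by omega
    have h1 : 3 * p ≤ 19 * k := by omega
    have h2 : (3 * p) ^ 2 ≤ (19 * k) ^ 2 := Nat.pow_le_pow_left h1 2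
    nlinarith
  obtain ⟨R', hR', S', hS', hne, hRt, hSt⟩ := prune (rel (F := ZMod p)) t _ R S le_rfl (by
    rw [← hI]
    have : t * (R.card + S.card) ≤ t * (2 * N) := Nat.mul_le_mul_left _ (by omega)
    omega)
  have hi := exists_indep (ZMod p)
  haveI : CharP (RatFunc (ZMod p)) p := charP_of_injective_algebraMap (algebraMap (ZMod p) _).injective p
  set θ : RatFunc (ZMod p) := RatFunc.X with hθ
  have key := bip p (R := R'.image (red θ)) (S := S'.image (blue θ)) (t := t) (k := k) ?_ ?_ ?_ ?_ ?_ ?_ htk hkp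
  · have fin : ∀ n m : ℕ, t ≤ n + (3 * k + 1) → n ≤ m → I ≤ 8 * N * m := by
      intro n m h1 h2
      have : t + 1 ≤ 4 * m := by omega
      calc I ≤ _ := ht2
        _ ≤ 2 * N * (4 * m) := Nat.mul_le_mul_left _ this
        _ = _ := by ring
    rcases key with ⟨q, hq, l, m, T, hT, hTc, hTe⟩ | ⟨q, hq, l, m, T, hT, hTc, hTe⟩
    · obtain ⟨r, hr, rfl⟩ := Finset.mem_image.mp hq
      obtain ⟨T', hT', hc, hm⟩ := exists_pull _ S' T hT
      refine ⟨T', Or.inr (hT'.trans hS'), coll_blue hi r T' l m ?_, fin _ _ hTc hc⟩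
      intro s hs
      obtain ⟨h1, h2⟩ := hTe _ (hm s hs)
      exact ⟨(incd_iff hi r s).mp h1, h2⟩
    · obtain ⟨r, hr, rfl⟩ := Finset.mem_image.mp hq
      obtain ⟨T', hT', hc, hm⟩ := exists_pull _ R' T hT
      refine ⟨T', Or.inl (hT'.trans hR'), coll_red hi r T' l m ?_, fin _ _ hTc hc⟩
      intro s hs
      obtain ⟨h1, h2⟩ := hTe _ (hm s hs)
      exact ⟨(incd_iff hi s r).mp (incd_symm h1), h2⟩
  · intro q hq q' hq' h
    obtain ⟨r, hr, rfl⟩ := Finset.mem_image.mp hq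
    obtain ⟨r', hr', rfl⟩ := Finset.mem_image.mp hq'
    rw [red_red hi r r' h]
  · intro q hq q' hq' h
    obtain ⟨r, hr, rfl⟩ := Finset.mem_image.mp hq
    obtain ⟨r', hr', rfl⟩ := Finset.mem_image.mp hq'
    rw [blue_blue hi r r' h]
  · intro q hq
    obtain ⟨r, hr, rfl⟩ := Finset.mem_image.mp hq
    rw [filter_image_card _ (blue_inj hi)]
    refine (hRt r hr).trans (le_of_eq ?_)
    congr 1
    ext s
    simp only [Finset.mem_filter, incd_iff hi]
  · intro q hq
    obtain ⟨r, hr, rfl⟩ := Finset.mem_image.mp hq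
    rw [filter_image_card _ (red_inj hi)]
    refine (hSt r hr).trans (le_of_eq ?_)
    congr 1
    ext s
    simp only [Finset.mem_filter]
    rw [← incd_iff hi]
    constructor
    · rintro ⟨a, b⟩; exact ⟨a, incd_symm b⟩
    · rintro ⟨a, b⟩; exact ⟨a, incd_symm b⟩
  · exact hne.image _
  · have : (R'.image (red θ)).card ≤ N := Finset.card_image_le.trans ((Finset.card_le_card hR').trans hR)
    exact (Nat.mul_le_mul_left _ this).trans_lt hck
end PM

namespace PM
open Finset

/-- collision count -/
def coln {α β : Type*} [DecidableEq β] (U : Finset α) (f : α → β) : ℕ :=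
  ((U ×ˢ U).filter (fun x => f x.1 = f x.2)).card

theorem CSw {α β : Type*} [DecidableEq β] (U : Finset α) (f : α → β) (V : Finset β)
    (hV : ∀ u ∈ U, f u ∈ V) (w : β → ℝ) :
    (∑ u ∈ U, w (f u)) ^ 2 ≤ (coln U f : ℝ) * ∑ v ∈ V, w v ^ 2 := by
  have h1 : ∑ u ∈ U, w (f u) = ∑ v ∈ V, ((U.filter (fun u => f u = v)).card : ℝ) * w v := by
    rw [← sum_fiberwise_of_maps_to hV]
    refine sum_congr rfl fun v _ => ?_
    rw [← nsmul_eq_mul, ← sum_const]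
    refine sum_congr rfl fun u hu => ?_
    rw [(mem_filter.mp hu).2]
  have h2 : (coln U f : ℝ) = ∑ v ∈ V, ((U.filter (fun u => f u = v)).card : ℝ) ^ 2 := by
    have : coln U f = ∑ v ∈ V, (U.filter (fun u => f u = v)).card ^ 2 := by
      rw [coln, card_eq_sum_card_fiberwise (f := fun x => f x.1) (t := V)]
      · refine sum_congr rfl fun v _ => ?_
        rw [sq, ← card_product]
        congr 1
        ext x
        simp only [mem_filter, mem_product]
        constructor
        · rintro ⟨⟨⟨a, b⟩, c⟩, d⟩; exact ⟨⟨a, d⟩, b, by rw [← c, d]⟩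
        · rintro ⟨⟨a, d⟩, b, e⟩; exact ⟨⟨⟨a, b⟩, by rw [d, e]⟩, d⟩
      · intro x hx
        simp only [coe_filter, mem_product, Set.mem_ofPred_eq] at hx
        exact hV _ hx.1.1
    rw [this]; push_cast; rfl
  rw [h1, h2]
  exact sum_mul_sq_le_sq_mul_sq _ _ _

theorem CS1 {α β : Type*} [DecidableEq β] (U : Finset α) (f : α → β) (A : Finset β) :
    ((U.filter (fun u => f u ∈ A)).card : ℝ) ^ 2 ≤ (coln U f : ℝ) * (A.card : ℝ) := by
  classical
  have := CSw U f (U.image f ∪ A) (fun u hu => mem_union_left _ (mem_image_of_mem _ hu))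
    (fun b => if b ∈ A then 1 else 0)
  have e1 : ∑ u ∈ U, (if f u ∈ A then (1:ℝ) else 0) = ((U.filter (fun u => f u ∈ A)).card : ℝ) := by
    simp
  have e2 : ∑ v ∈ U.image f ∪ A, (if v ∈ A then (1:ℝ) else 0) ^ 2 = (A.card : ℝ) := by
    simp only [ite_pow, one_pow, ne_eq, OfNat.ofNat_ne_zero, not_false_eq_true, zero_pow]
    rw [sum_ite_mem, inter_eq_right.mpr subset_union_right]
    simp
  rw [e1, e2] at this
  exact this

open Classical in
theorem inc_image {F α β : Type*} [Field F] [DecidableEq F] (U : Finset α) (V : Finset β) (f : α → F × F × F) (g : β → F × F × F)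
    (hf : Set.InjOn f U) (hg : Set.InjOn g V) :
    ∑ r ∈ U.image f, ((V.image g).filter (fun s => rel r s)).card =
      ((U ×ˢ V).filter (fun x => rel (f x.1) (g x.2))).card := by
  rw [sum_image hf, card_filter, sum_product]
  refine sum_congr rfl fun u _ => ?_
  rw [card_filter, sum_image hg]

def Pencil {F : Type*} [Field F] (L : Finset (F × F)) : Prop :=
  (∃ m, ∀ l ∈ L, l.1 = m) ∨ (∃ x0 y0, ∀ l ∈ L, l.2 = y0 - x0 * l.1)

theorem coll_pencil {F : Type*} [Field F] [DecidableEq F] (T : Finset (F × F × F)) (hT : Coll T) (π : F × F × F → F × F)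
    (a b c d e f : F) (hp : ∀ t, π t = (a * t.1 + b * t.2.1 + c * t.2.2, d * t.1 + e * t.2.1 + f * t.2.2)) :
    (∃ l, ∀ t ∈ T, π t = l) ∨ (Set.InjOn π T ∧ Pencil (T.image π)) := by
  obtain ⟨p0, v, h⟩ := hT
  have hs : ∀ s, π (p0.1+s*v.1, p0.2.1+s*v.2.1, p0.2.2+s*v.2.2) =
      ((π p0).1 + s * (π v).1, (π p0).2 + s * (π v).2) := by
    intro s
    simp only [hp, Prod.mk.injEq]
    constructor <;> ring
  by_cases h1 : (π v).1 = 0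
  · by_cases h2 : (π v).2 = 0
    · left
      refine ⟨π p0, fun t ht => ?_⟩
      obtain ⟨s, hs'⟩ := h t ht
      rw [hs', hs, h1, h2]; simp
    · right
      constructor
      · intro t ht t' ht' he
        obtain ⟨s, rfl⟩ := h t ht
        obtain ⟨s', rfl⟩ := h t' ht'
        rw [hs, hs] at he
        have := (Prod.mk.inj he).2
        have : s = s' := mul_right_cancel₀ h2 (add_left_cancel this)
        rw [this]
      · left
        refine ⟨(π p0).1, fun l hl => ?_⟩
        obtain ⟨t, ht, rfl⟩ := mem_image.mp hl
        obtain ⟨s, rfl⟩ := h t ht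
        rw [hs, h1]; simp
  · right
    constructor
    · intro t ht t' ht' he
      obtain ⟨s, rfl⟩ := h t ht
      obtain ⟨s', rfl⟩ := h t' ht'
      rw [hs, hs] at he
      have := (Prod.mk.inj he).1
      have : s = s' := mul_right_cancel₀ h1 (add_left_cancel this)
      rw [this]
    · right
      refine ⟨-((π v).2 / (π v).1), (π p0).2 - (π v).2 / (π v).1 * (π p0).1, fun l hl => ?_⟩
      obtain ⟨t, ht, rfl⟩ := mem_image.mp hl
      obtain ⟨s, rfl⟩ := h t ht
      rw [hs]
      field_simp
      ring

theorem pencil_inj {F : Type*} [Field F] (L : Finset (F × F)) (h : Pencil L) :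
    ∃ x0, ∀ l ∈ L, ∀ l' ∈ L, ∀ a, a ≠ x0 → l.1 * a + l.2 = l'.1 * a + l'.2 → l = l' := by
  rcases h with ⟨m, h⟩ | ⟨x0, y0, h⟩
  · refine ⟨0, fun l hl l' hl' a _ he => ?_⟩
    have := h l hl; have := h l' hl'
    ext
    · rw [h l hl, h l' hl']
    · rw [h l hl, h l' hl'] at he; exact add_left_cancel he
  · refine ⟨x0, fun l hl l' hl' a ha he => ?_⟩
    rw [h l hl, h l' hl'] at he
    have h1 : (l.1 - l'.1) * (a - x0) = 0 := by linear_combination he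
    have h2 : l.1 = l'.1 := by
      rcases mul_eq_zero.mp h1 with h | h
      · exact sub_eq_zero.mp h
      · exact absurd (sub_eq_zero.mp h) ha
    ext
    · exact h2
    · rw [h l hl, h l' hl', h2]

/-- number of points of A×A on the line g -/
def icount {F : Type*} [Field F] [DecidableEq F] (A : Finset F) (g : F × F) : ℕ :=
  (A.filter (fun a => g.1 * a + g.2 ∈ A)).card

theorem icount_sum {F : Type*} [Field F] [DecidableEq F] (A : Finset F) (G : Finset (F × F)) :
    ∑ g ∈ G, icount A g = ((G ×ˢ A).filter (fun x => x.1.1 * x.2 + x.1.2 ∈ A)).card := by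
  rw [card_filter, sum_product]
  refine sum_congr rfl fun u _ => ?_
  rw [icount, card_filter]

theorem pencil_card {F : Type*} [Field F] [DecidableEq F] (A : Finset F) (G : Finset (F × F)) (κ : ℝ)
    (hκ : 1 ≤ κ) (hA : 2 * κ ≤ A.card) (hG : ∀ g ∈ G, (A.card : ℝ) ≤ κ * icount A g) (hP : Pencil G) :
    (G.card : ℝ) ≤ 2 * κ * A.card := by
  obtain ⟨x0, h⟩ := pencil_inj G hP
  have h1 : ((G ×ˢ A).filter (fun x => x.2 ≠ x0 ∧ x.1.1 * x.2 + x.1.2 ∈ A)).card ≤ (A ×ˢ A).card := by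
    refine card_le_card_of_injOn (fun x => (x.2, x.1.1 * x.2 + x.1.2)) ?_ ?_
    · intro x hx
      simp only [coe_filter, mem_product, Set.mem_ofPred_eq, coe_product, Set.mem_prod, mem_coe] at hx ⊢
      exact ⟨hx.1.2, hx.2.2⟩
    · intro x hx y hy he
      simp only [coe_filter, mem_product, Set.mem_ofPred_eq, Prod.mk.injEq] at hx hy he
      obtain ⟨e1, e2⟩ := he
      ext1
      · rw [← e1] at e2
        exact h _ hx.1.1 _ hy.1.1 _ hx.2.1 e2
      · exact e1
  have h2 : ∑ g ∈ G, (A.filter (fun a => a ≠ x0 ∧ g.1 * a + g.2 ∈ A)).card =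
    ((G ×ˢ A).filter (fun x => x.2 ≠ x0 ∧ x.1.1 * x.2 + x.1.2 ∈ A)).card := by
    rw [card_filter, sum_product]
    refine sum_congr rfl fun u _ => ?_
    rw [card_filter]
  have h3 : ∀ g ∈ G, (A.card : ℝ) / (2 * κ) ≤ (A.filter (fun a => a ≠ x0 ∧ g.1 * a + g.2 ∈ A)).card := by
    intro g hg
    have : icount A g ≤ (A.filter (fun a => a ≠ x0 ∧ g.1 * a + g.2 ∈ A)).card + 1 := by
      rw [icount]
      have : A.filter (fun a => g.1 * a + g.2 ∈ A) ⊆ insert x0 (A.filter (fun a => a ≠ x0 ∧ g.1 * a + g.2 ∈ A)) := by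
        intro a ha
        simp only [mem_filter, mem_insert] at ha ⊢
        tauto
      exact (card_le_card this).trans (card_insert_le _ _)
    have t1 : (icount A g : ℝ) ≤ (A.filter (fun a => a ≠ x0 ∧ g.1 * a + g.2 ∈ A)).card + 1 := by exact_mod_cast this
    have t2 := hG g hg
    rw [div_le_iff₀ (by positivity)]
    nlinarith
  have h4 : (G.card : ℝ) * (A.card / (2 * κ)) ≤ A.card * A.card := by
    calc (G.card : ℝ) * (A.card / (2 * κ)) = ∑ g ∈ G, (A.card : ℝ) / (2 * κ) := by simp
      _ ≤ ∑ g ∈ G, ((A.filter (fun a => a ≠ x0 ∧ g.1 * a + g.2 ∈ A)).card : ℝ) := sum_le_sum h3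
      _ = ((∑ g ∈ G, (A.filter (fun a => a ≠ x0 ∧ g.1 * a + g.2 ∈ A)).card : ℕ) : ℝ) := by push_cast; rfl
      _ ≤ _ := by rw [h2]; rw [card_product] at h1; exact_mod_cast h1
  have hA0 : (0:ℝ) < A.card := by linarith
  have h5 : (G.card : ℝ) * (A.card / (2 * κ)) = (G.card / (2 * κ)) * A.card := by ring
  rw [h5] at h4
  have := le_of_mul_le_mul_right h4 hA0
  rw [div_le_iff₀ (by positivity)] at this
  linarith

end PM

namespace PM
open Finset

def ev {F : Type*} [Field F] (x : (F × F) × F) : F := x.1.1 * x.2 + x.1.2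

theorem coln_lower {F : Type*} [Field F] [DecidableEq F] (A : Finset F) (G : Finset (F × F)) (κ : ℝ)
    (hκ : 1 ≤ κ) (hA : 0 < A.card) (hG : ∀ g ∈ G, (A.card : ℝ) ≤ κ * icount A g) :
    (G.card : ℝ) ^ 2 * A.card ≤ κ ^ 2 * coln (G ×ˢ A) ev := by
  have h1 := CS1 (G ×ˢ A) ev A
  have h2 : (((G ×ˢ A).filter (fun x => ev x ∈ A)).card : ℝ) = ∑ g ∈ G, (icount A g : ℝ) := by
    have := icount_sum A G
    rw [← Nat.cast_sum, this]; rfl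
  have h3 : (G.card : ℝ) * A.card ≤ κ * ∑ g ∈ G, (icount A g : ℝ) := by
    rw [mul_sum]
    calc (G.card : ℝ) * A.card = ∑ g ∈ G, (A.card : ℝ) := by simp
      _ ≤ _ := sum_le_sum hG
  rw [h2] at h1
  have hA0 : (0:ℝ) < A.card := by exact_mod_cast hA
  have h4 : ((G.card : ℝ) * A.card) ^ 2 ≤ (κ * ∑ g ∈ G, (icount A g : ℝ)) ^ 2 :=
    pow_le_pow_left₀ (by positivity) h3 2
  have h5 : ((G.card : ℝ) ^ 2 * A.card) * A.card ≤ (κ ^ 2 * coln (G ×ˢ A) ev) * A.card := by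
    have : κ ^ 2 * (∑ g ∈ G, (icount A g : ℝ)) ^ 2 ≤ κ ^ 2 * (coln (G ×ˢ A) ev * A.card) :=
      mul_le_mul_of_nonneg_left h1 (by positivity)
    nlinarith
  exact le_of_mul_le_mul_right h5 hA0

theorem rich_bound (p : ℕ) [Fact p.Prime] (A : Finset (ZMod p)) (G : Finset (ZMod p × ZMod p)) (κ : ℝ)
    (hκ : 1 ≤ κ) (hA : 2 * κ ≤ A.card)
    (hG : ∀ g ∈ G, (A.card : ℝ) ≤ κ * icount A g)
    (hp : 400 * (160000 * κ ^ 4) * (A.card : ℝ) ^ 2 ≤ (p : ℝ) ^ 2) :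
    (G.card : ℝ) ≤ 160000 * κ ^ 4 * A.card := by
  classical
  by_contra hcon
  push Not at hcon
  set X : ℝ := 160000 * κ ^ 4 * A.card with hX
  have hA2 : (2:ℝ) ≤ A.card := by linarith
  have hk4 : 1 ≤ κ ^ 4 := one_le_pow₀ hκ
  have hX1 : 1 ≤ X := by rw [hX]; nlinarith
  set n := ⌊X⌋₊ + 1 with hn
  have hnX : X < n := by rw [hn]; exact_mod_cast Nat.lt_floor_add_one X
  have hnX2 : (n:ℝ) ≤ 2 * X := by
    rw [hn]; push_cast
    have := Nat.floor_le (show 0 ≤ X by linarith)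
    linarith
  have hnG : n ≤ G.card := by
    rw [hn, Nat.succ_le_iff, Nat.floor_lt (by linarith)]
    exact hcon
  obtain ⟨G', hG', hc⟩ := exists_subset_card_eq hnG
  have hA0 : 0 < A.card := by
    have : (0:ℝ) < A.card := by linarith
    exact_mod_cast this
  have hcol := coln_lower A G' κ hκ hA0 (fun g hg => hG g (hG' hg))
  set U := G' ×ˢ A with hU
  let f : (ZMod p × ZMod p) × ZMod p → ZMod p × ZMod p × ZMod p := fun x => (x.1.1, x.2, x.1.2)
  let b : (ZMod p × ZMod p) × ZMod p → ZMod p × ZMod p × ZMod p := fun x => (x.2, -x.1.1, -x.1.2)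
  have hf : Function.Injective f := by
    intro x y h
    simp only [f, Prod.mk.injEq] at h
    ext <;> simp [h]
  have hb : Function.Injective b := by
    intro x y h
    simp only [b, Prod.mk.injEq, neg_inj] at h
    ext <;> simp [h]
  set I := ∑ r ∈ U.image f, ((U.image b).filter (fun s => rel r s)).card with hI
  have hIc : coln U ev ≤ I := by
    rw [hI, inc_image U U f b hf.injOn hb.injOn, coln]
    refine card_le_card_of_injOn (fun x => ((x.1.1, x.2.2), (x.2.1, x.1.2))) ?_ ?_
    · intro x hx
      simp only [hU, coe_filter, mem_product, Set.mem_ofPred_eq] at hx ⊢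
      refine ⟨⟨⟨hx.1.1.1, hx.1.2.2⟩, hx.1.2.1, hx.1.1.2⟩, ?_⟩
      have := hx.2
      simp only [ev] at this
      simp only [rel, f, b]
      linear_combination this
    · intro x _ y _ h
      simp only [Prod.mk.injEq] at h
      ext <;> simp [h]
  have hUc : U.card = n * A.card := by rw [hU, card_product, hc]
  have hn1 : 1 ≤ n := by omega
  have hnR : (1:ℝ) ≤ n := by exact_mod_cast hn1
  have hN1 : 1 ≤ n * A.card := Nat.mul_pos hn1 hA0
  have hIR : (n:ℝ) ^ 2 * A.card ≤ κ ^ 2 * I := by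
    rw [hc] at hcol
    refine hcol.trans (mul_le_mul_of_nonneg_left ?_ (by positivity))
    exact_mod_cast hIc
  obtain ⟨T, hTs, hTc, hTI⟩ := PP p (U.image f) (U.image b) (n * A.card) hN1
    (card_image_le.trans hUc.le) (card_image_le.trans hUc.le) (by
      have : 200 * ((n:ℝ) * A.card) ≤ p ^ 2 := by
        refine le_trans ?_ hp
        have : (n:ℝ) * A.card ≤ 2 * X * A.card := mul_le_mul_of_nonneg_right hnX2 (by positivity)
        rw [hX] at this
        nlinarith
      exact_mod_cast this) I hI (by
      have h1 : ((n:ℝ) ^ 2 * A.card) ^ 2 ≤ (κ ^ 2 * I) ^ 2 := pow_le_pow_left₀ (by positivity) hIR 2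
      have h2 : κ ^ 4 * (160000 * ((n:ℝ) * A.card) ^ 3) ≤ κ ^ 4 * I ^ 2 := by
        calc κ ^ 4 * (160000 * ((n:ℝ) * A.card) ^ 3) = X * ((n:ℝ) ^ 3 * (A.card : ℝ) ^ 2) := by rw [hX]; ring
          _ ≤ n * ((n:ℝ) ^ 3 * (A.card : ℝ) ^ 2) := mul_le_mul_of_nonneg_right hnX.le (by positivity)
          _ = ((n:ℝ) ^ 2 * A.card) ^ 2 := by ring
          _ ≤ _ := h1
          _ = _ := by ring
      have h3 := le_of_mul_le_mul_left h2 (by positivity)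
      exact_mod_cast h3)
  have hTA : (T.card : ℝ) ≤ 2 * κ * A.card := by
    have fin : ∀ (π : ZMod p × ZMod p × ZMod p → ZMod p × ZMod p) (a b c d e f' : ZMod p)
        (_ : ∀ t, π t = (a * t.1 + b * t.2.1 + c * t.2.2, d * t.1 + e * t.2.1 + f' * t.2.2))
        (σ : ZMod p × ZMod p × ZMod p → ZMod p) (_ : ∀ t t', π t = π t' → σ t = σ t' → t = t')
        (_ : ∀ t ∈ T, π t ∈ G' ∧ σ t ∈ A), (T.card : ℝ) ≤ 2 * κ * A.card := by
      intro π a b c d e f' hπ σ hσ hm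
      rcases coll_pencil T hTc π a b c d e f' hπ with ⟨l, hl⟩ | ⟨hi, hP⟩
      · have : T.card ≤ A.card := by
          refine card_le_card_of_injOn σ (fun t ht => (hm t ht).2) ?_
          intro t ht t' ht' h
          exact hσ t t' (by rw [hl t ht, hl t' ht']) h
        have : (T.card : ℝ) ≤ A.card := by exact_mod_cast this
        nlinarith
      · rw [← card_image_of_injOn hi]
        refine pencil_card A _ κ hκ hA ?_ hP
        intro g hg
        obtain ⟨t, ht, rfl⟩ := mem_image.mp hg
        exact hG _ (hG' (hm t ht).1)
    rcases hTs with h | h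
    · refine fin (fun t => (t.1, t.2.2)) 1 0 0 0 0 1 (fun t => by simp) (fun t => t.2.1) ?_ ?_
      · intro t t' h1 h2
        simp only [Prod.mk.injEq] at h1
        ext <;> simp [h1, h2]
      · intro t ht
        obtain ⟨u, hu, rfl⟩ := mem_image.mp (h ht)
        rw [hU, mem_product] at hu
        exact hu
    · refine fin (fun t => (-t.2.1, -t.2.2)) 0 (-1) 0 0 0 (-1) (fun t => by simp) (fun t => t.1) ?_ ?_
      · intro t t' h1 h2
        simp only [Prod.mk.injEq, neg_inj] at h1
        ext <;> simp [h1, h2]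
      · intro t ht
        obtain ⟨u, hu, rfl⟩ := mem_image.mp (h ht)
        rw [hU, mem_product] at hu
        simpa [b] using hu
  have hTI' : (I:ℝ) ≤ 8 * (n * A.card) * T.card := by exact_mod_cast hTI
  have hAR : (0:ℝ) < A.card := by linarith
  have e1 : (n * A.card : ℝ) * n ≤ (n * A.card : ℝ) * (16 * κ ^ 3 * A.card) := by
    have h1 : κ ^ 2 * (I:ℝ) ≤ κ ^ 2 * (8 * (n * A.card) * (2 * κ * A.card)) := by
      refine mul_le_mul_of_nonneg_left (hTI'.trans ?_) (by positivity)
      exact mul_le_mul_of_nonneg_left hTA (by positivity)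
    nlinarith
  have e2 := le_of_mul_le_mul_left e1 (by positivity)
  have e3 : 16 * κ ^ 3 * A.card ≤ X := by
    rw [hX]
    refine mul_le_mul_of_nonneg_right ?_ hAR.le
    have : κ ^ 3 ≤ κ ^ 4 := pow_le_pow_right₀ hκ (by norm_num)
    nlinarith
  linarith
end PM

namespace PM
open Finset

def phi {F : Type*} [Field F] (x : (F × F) × (F × F)) : F × F :=
  (x.2.1 / x.1.1, (x.2.2 - x.1.2) / x.1.1)

theorem phi_sum {F : Type*} [Field F] [DecidableEq F] (A : Finset F) (L : Finset (F × F))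
    (h0 : ∀ l ∈ L, l.1 ≠ 0) :
    coln (L ×ˢ A) ev ≤ ∑ x ∈ L ×ˢ L, icount A (phi x) := by
  have h1 : ∑ x ∈ L ×ˢ L, icount A (phi x) =
      (((L ×ˢ L) ×ˢ A).filter (fun y => (phi y.1).1 * y.2 + (phi y.1).2 ∈ A)).card := by
    rw [card_filter, sum_product (s := L ×ˢ L)]
    refine sum_congr rfl fun u _ => ?_
    rw [icount, card_filter]
  rw [h1, coln]
  have key : ∀ x : ((F × F) × F) × ((F × F) × F), x ∈ ((L ×ˢ A) ×ˢ (L ×ˢ A)).filter (fun x => ev x.1 = ev x.2) →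
      (phi (x.2.1, x.1.1)).1 * x.1.2 + (phi (x.2.1, x.1.1)).2 = x.2.2 := by
    intro x hx
    obtain ⟨hx1, hx2⟩ := mem_filter.mp hx
    simp only [mem_product] at hx1
    simp only [ev] at hx2
    have := h0 _ hx1.2.1
    simp only [phi]
    field_simp
    linear_combination hx2
  refine card_le_card_of_injOn (fun x => ((x.2.1, x.1.1), x.1.2)) ?_ ?_
  · intro x hx
    have hk := key x hx
    simp only [coe_filter, mem_product, Set.mem_ofPred_eq] at hx ⊢
    refine ⟨⟨⟨hx.1.2.1, hx.1.1.1⟩, hx.1.1.2⟩, ?_⟩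
    rw [hk]; exact hx.1.2.2
  · intro x hx y hy h
    have k1 := key x hx
    have k2 := key y hy
    simp only [Prod.mk.injEq] at h
    rw [h.1.1, h.1.2, h.2, k2] at k1
    ext <;> simp [h, k1]

theorem second_moment (p : ℕ) [Fact p.Prime] (A : Finset (ZMod p)) :
    ∑ g : ZMod p × ZMod p, ((icount A g : ℝ) - (A.card : ℝ) ^ 2 / p) ^ 2 ≤ p * (A.card : ℝ) ^ 2 := by
  have hp0 : (0:ℝ) < p := by exact_mod_cast (Fact.out : p.Prime).pos
  have h1 : p * A.card ^ 2 ≤ ∑ g : ZMod p × ZMod p, icount A g := by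
    rw [icount_sum]
    have : (((univ : Finset (ZMod p)) ×ˢ A) ×ˢ A).card = p * A.card ^ 2 := by
      rw [card_product, card_product, card_univ, ZMod.card]; ring
    rw [← this]
    refine card_le_card_of_injOn (fun y => ((y.1.1, y.1.2 - y.1.1 * y.2), y.2)) ?_ ?_
    · intro x hx
      simp only [coe_product, Set.mem_prod, mem_coe, coe_filter, mem_product, Set.mem_ofPred_eq, mem_univ, true_and] at hx ⊢
      refine ⟨hx.2, ?_⟩
      ring_nf
      exact hx.1
    · intro x hx y hy h
      simp only [Prod.mk.injEq] at h
      obtain ⟨⟨a, b⟩, c⟩ := h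
      rw [a, c] at b
      have := sub_left_injective b
      ext <;> simp [a, c, this]
  have h2 : ∑ g : ZMod p × ZMod p, icount A g ^ 2 ≤ p * A.card ^ 2 + A.card ^ 4 := by
    have e : ∀ g : ZMod p × ZMod p, icount A g ^ 2 =
        ∑ x ∈ A ×ˢ A, if (g.1 * x.1 + g.2 ∈ A ∧ g.1 * x.2 + g.2 ∈ A) then 1 else 0 := by
      intro g
      rw [← card_filter, icount, sq, ← card_product]
      congr 1
      ext x
      simp only [mem_filter, mem_product]
      tauto
    simp_rw [e]
    rw [sum_comm]
    have e2 : ∀ x ∈ A ×ˢ A, (∑ g : ZMod p × ZMod p, if (g.1 * x.1 + g.2 ∈ A ∧ g.1 * x.2 + g.2 ∈ A) then 1 else 0)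
        ≤ (if x.1 = x.2 then p * A.card else 0) + A.card ^ 2 := by
      intro x _
      rw [← card_filter]
      split_ifs with hx
      · refine le_trans ?_ (Nat.le_add_right _ _)
        have : ((univ : Finset (ZMod p)) ×ˢ A).card = p * A.card := by
          rw [card_product, card_univ, ZMod.card]
        rw [← this]
        refine card_le_card_of_injOn (fun g => (g.1, g.1 * x.1 + g.2)) ?_ ?_
        · intro g hg
          simp only [coe_product, Set.mem_prod, mem_coe, mem_filter, mem_univ, true_and] at hg ⊢
          exact hg.1
        · intro g _ g' _ h
          simp only [Prod.mk.injEq] at h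
          obtain ⟨a, b⟩ := h
          rw [a] at b
          ext
          · exact a
          · exact add_left_cancel b
      · rw [zero_add, sq, ← card_product]
        refine card_le_card_of_injOn (fun g => (g.1 * x.1 + g.2, g.1 * x.2 + g.2)) ?_ ?_
        · intro g hg
          simp only [coe_product, Set.mem_prod, mem_coe, mem_filter, mem_univ, true_and] at hg ⊢
          exact hg
        · intro g _ g' _ h
          simp only [Prod.mk.injEq] at h
          obtain ⟨a, b⟩ := h
          have h1 : (g.1 - g'.1) * (x.1 - x.2) = 0 := by linear_combination a - b
          have h2 : g.1 = g'.1 := by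
            rcases mul_eq_zero.mp h1 with h | h
            · exact sub_eq_zero.mp h
            · exact absurd (sub_eq_zero.mp h) hx
          rw [h2] at a
          ext
          · exact h2
          · exact add_left_cancel a
    refine (sum_le_sum e2).trans (le_of_eq ?_)
    rw [sum_add_distrib, sum_const, card_product, sum_product]
    have : ∀ x ∈ A, ∑ y ∈ A, (if x = y then p * A.card else 0) = p * A.card := by
      intro x hx
      rw [sum_ite_eq]; simp [hx]
    rw [sum_congr rfl this, sum_const, smul_eq_mul, smul_eq_mul]
    ring
  have h1' : (p:ℝ) * A.card ^ 2 ≤ ∑ g : ZMod p × ZMod p, (icount A g : ℝ) := by exact_mod_cast h1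
  have h2' : ∑ g : ZMod p × ZMod p, (icount A g : ℝ) ^ 2 ≤ p * A.card ^ 2 + A.card ^ 4 := by exact_mod_cast h2
  have e : ∑ g : ZMod p × ZMod p, ((icount A g : ℝ) - (A.card : ℝ) ^ 2 / p) ^ 2 =
     ∑ g : ZMod p × ZMod p, (icount A g : ℝ) ^ 2 - 2 * ((A.card : ℝ) ^ 2 / p) * ∑ g : ZMod p × ZMod p, (icount A g : ℝ)
      + A.card ^ 4 := by
    have : ∀ g : ZMod p × ZMod p, ((icount A g : ℝ) - (A.card : ℝ) ^ 2 / p) ^ 2 =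
      (icount A g : ℝ) ^ 2 - 2 * ((A.card : ℝ) ^ 2 / p) * (icount A g : ℝ) + ((A.card : ℝ) ^ 2 / p) ^ 2 := by intro g; ring
    rw [sum_congr rfl (fun g _ => this g), sum_add_distrib, sum_sub_distrib, ← mul_sum, sum_const, card_univ,
      Fintype.card_prod, ZMod.card, nsmul_eq_mul]
    push_cast
    field_simp
  rw [e]
  have h3 : 2 * ((A.card : ℝ) ^ 2 / p) * (p * A.card ^ 2) ≤ 2 * ((A.card : ℝ) ^ 2 / p) * ∑ g : ZMod p × ZMod p, (icount A g : ℝ) :=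
    mul_le_mul_of_nonneg_left h1' (by positivity)
  have h4 : 2 * ((A.card : ℝ) ^ 2 / p) * (p * A.card ^ 2) = 2 * (A.card : ℝ) ^ 4 := by field_simp
  linarith

end PM

namespace PM
open Finset

theorem icount_le {F : Type*} [Field F] [DecidableEq F] (A : Finset F) (g : F × F) :
    icount A g ≤ A.card := card_filter_le _ _

theorem energy_lower (p : ℕ) [Fact p.Prime] (A : Finset (ZMod p)) (L : Finset (ZMod p × ZMod p)) (K : ℝ)
    (hK : 1 ≤ K) (h0 : ∀ l ∈ L, l.1 ≠ 0) (hL : ∀ l ∈ L, (A.card : ℝ) ≤ K * icount A l)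
    (hLne : L.Nonempty)
    (hAL : (A.card : ℝ) ≤ K * L.card) (hA : 4 * K ^ 2 ≤ A.card) (hp : 4 * K ^ 2 * A.card ≤ p) :
    (L.card : ℝ) ^ 3 ≤ (10240000 * K ^ 13) * coln (L ×ˢ L) phi ∧
    (L.card : ℝ) ≤ (10240000 * K ^ 13) * p := by
  classical
  have hp0 : (0:ℝ) < p := by exact_mod_cast (Fact.out : p.Prime).pos
  have hK0 : 0 < K := by linarith
  have ha0 : (0:ℝ) < A.card := lt_of_lt_of_le (by positivity) hA
  have hA0 : 0 < A.card := by exact_mod_cast ha0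
  have hn0 : (0:ℝ) < L.card := by exact_mod_cast hLne.card_pos
  set a : ℝ := (A.card : ℝ) with ha
  set n : ℝ := (L.card : ℝ) with hn
  set E : ℝ := (coln (L ×ˢ L) phi : ℝ) with hE
  have hE0 : 0 ≤ E := by positivity
  have hap : a ^ 2 / p ≤ a / (4 * K ^ 2) := by
    rw [div_le_div_iff₀ hp0 (by positivity)]
    nlinarith
  have hsm := second_moment p A
  rw [← ha] at hsm
  have hKK : K ≤ K ^ 2 := by nlinarith
  have hnp : n ≤ 4 * K ^ 2 * p := by
    have h1 : ∀ l ∈ L, (a / (2 * K)) ^ 2 ≤ ((icount A l : ℝ) - a ^ 2 / p) ^ 2 := by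
      intro l hl
      have e1 := hL l hl
      have e2 : a / (4 * K ^ 2) ≤ a / (2 * K) := by
        apply div_le_div_of_nonneg_left ha0.le (by positivity)
        nlinarith
      have e3 : a / K ≤ icount A l := by rw [div_le_iff₀ hK0]; linarith
      have e4 : a / K = a / (2 * K) + a / (2 * K) := by field_simp; ring
      exact pow_le_pow_left₀ (by positivity) (by linarith) 2
    have h2 : n * (a / (2 * K)) ^ 2 ≤ p * a ^ 2 := by
      calc n * (a / (2 * K)) ^ 2 = ∑ l ∈ L, (a / (2 * K)) ^ 2 := by simp [hn]
        _ ≤ ∑ l ∈ L, ((icount A l : ℝ) - a ^ 2 / p) ^ 2 := sum_le_sum h1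
        _ ≤ ∑ l, ((icount A l : ℝ) - a ^ 2 / p) ^ 2 :=
          sum_le_sum_of_subset_of_nonneg (subset_univ _) (fun _ _ _ => sq_nonneg _)
        _ ≤ _ := hsm
    have h3 : n * (a / (2 * K)) ^ 2 = n / (4 * K ^ 2) * a ^ 2 := by field_simp; ring
    rw [h3] at h2
    have := le_of_mul_le_mul_right h2 (by positivity)
    rw [div_le_iff₀ (by positivity)] at this
    linarith
  have hW : n ^ 2 * a / K ^ 2 ≤ ∑ x ∈ L ×ˢ L, (icount A (phi x) : ℝ) := by
    have h1 := coln_lower A L K hK hA0 hL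
    have h2 : (coln (L ×ˢ A) ev : ℝ) ≤ ∑ x ∈ L ×ˢ L, (icount A (phi x) : ℝ) := by
      exact_mod_cast phi_sum A L h0
    rw [div_le_iff₀ (by positivity)]
    have := mul_le_mul_of_nonneg_right h2 (show 0 ≤ K ^ 2 by positivity)
    linarith
  have hLL : ((L ×ˢ L).card : ℝ) = n ^ 2 := by rw [card_product]; push_cast; ring
  have hsplit : n ^ 2 * a / K ^ 2 = n ^ 2 * a / (2 * K ^ 2) + n ^ 2 * (a / (2 * K ^ 2)) := by field_simp; ring
  refine ⟨?_, ?_⟩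
  · by_cases hsp : 400 * (160000 * (2 * K ^ 2) ^ 4) * a ^ 2 ≤ (p:ℝ) ^ 2
    · set V := (L ×ˢ L).image phi with hV
      set G := V.filter (fun g => a ≤ 2 * K ^ 2 * icount A g) with hG
      have hGc : (G.card : ℝ) ≤ 160000 * (2 * K ^ 2) ^ 4 * a := by
        refine rich_bound p A G (2 * K ^ 2) (by nlinarith) (by rw [← ha]; linarith) ?_ hsp
        intro g hg
        exact (mem_filter.mp hg).2
      have hcs := CSw (L ×ˢ L) phi V (fun u hu => mem_image_of_mem _ hu)
        (fun g => if g ∈ G then (icount A g : ℝ) else 0)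
      have h1 : n ^ 2 * a / (2 * K ^ 2) ≤ ∑ x ∈ L ×ˢ L, (if phi x ∈ G then (icount A (phi x) : ℝ) else 0) := by
        have : ∑ x ∈ L ×ˢ L, (icount A (phi x) : ℝ) ≤
          ∑ x ∈ L ×ˢ L, ((if phi x ∈ G then (icount A (phi x) : ℝ) else 0) + a / (2 * K ^ 2)) := by
          refine sum_le_sum fun x hx => ?_
          split_ifs with h
          · have : 0 ≤ a / (2 * K ^ 2) := by positivity
            linarith
          · have : ¬ (a ≤ 2 * K ^ 2 * icount A (phi x)) := by
              intro h'
              exact h (mem_filter.mpr ⟨mem_image_of_mem _ hx, h'⟩)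
            push Not at this
            rw [zero_add, le_div_iff₀ (by positivity)]
            linarith
        rw [sum_add_distrib, sum_const, nsmul_eq_mul, hLL] at this
        linarith
      have h2 : ∑ v ∈ V, (if v ∈ G then (icount A v : ℝ) else 0) ^ 2 ≤ G.card * a ^ 2 := by
        calc ∑ v ∈ V, (if v ∈ G then (icount A v : ℝ) else 0) ^ 2
            ≤ ∑ v ∈ V, (if v ∈ G then a ^ 2 else 0) := by
              refine sum_le_sum fun v _ => ?_
              split_ifs
              · have : (icount A v : ℝ) ≤ a := by rw [ha]; exact_mod_cast icount_le A v
                exact pow_le_pow_left₀ (by positivity) this 2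
              · simp
          _ = _ := by
              rw [sum_ite_mem, inter_eq_right.mpr (filter_subset _ _), sum_const, nsmul_eq_mul]
      have h3 : (n ^ 2 * a / (2 * K ^ 2)) ^ 2 ≤ E * ((160000 * (2 * K ^ 2) ^ 4 * (K * n)) * a ^ 2) := by
        calc _ ≤ _ := pow_le_pow_left₀ (by positivity) h1 2
          _ ≤ _ := hcs
          _ ≤ E * (G.card * a ^ 2) := mul_le_mul_of_nonneg_left h2 hE0
          _ ≤ _ := by
            refine mul_le_mul_of_nonneg_left (mul_le_mul_of_nonneg_right (hGc.trans ?_) (by positivity)) hE0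
            exact mul_le_mul_of_nonneg_left hAL (by positivity)
      have h4 : (n ^ 2 * a / (2 * K ^ 2)) ^ 2 = n ^ 3 * (n * a ^ 2 / (4 * K ^ 4)) := by field_simp; ring
      have h5 : E * ((160000 * (2 * K ^ 2) ^ 4 * (K * n)) * a ^ 2) =
        (10240000 * K ^ 13 * E) * (n * a ^ 2 / (4 * K ^ 4)) := by field_simp; ring
      rw [h4, h5] at h3
      exact le_of_mul_le_mul_right h3 (by positivity)
    · push Not at hsp
      have hpa : (p:ℝ) ≤ 32000 * K ^ 4 * a := by
        refine le_of_lt (lt_of_pow_lt_pow_left₀ 2 (by positivity) (lt_of_lt_of_le hsp (le_of_eq ?_)))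
        ring
      have hcs := CSw (L ×ˢ L) phi univ (fun u hu => mem_univ _)
        (fun g => (icount A g : ℝ) - a ^ 2 / p)
      have h1 : n ^ 2 * a / (2 * K ^ 2) ≤ ∑ x ∈ L ×ˢ L, ((icount A (phi x) : ℝ) - a ^ 2 / p) := by
        rw [sum_sub_distrib, sum_const, nsmul_eq_mul, hLL]
        have : n ^ 2 * (a ^ 2 / p) ≤ n ^ 2 * (a / (2 * K ^ 2)) := by
          refine mul_le_mul_of_nonneg_left (hap.trans ?_) (by positivity)
          apply div_le_div_of_nonneg_left ha0.le (by positivity)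
          nlinarith
        linarith
      have h3 : (n ^ 2 * a / (2 * K ^ 2)) ^ 2 ≤ E * ((32000 * K ^ 4 * (K * n)) * a ^ 2) := by
        calc _ ≤ _ := pow_le_pow_left₀ (by positivity) h1 2
          _ ≤ _ := hcs
          _ ≤ E * (p * a ^ 2) := mul_le_mul_of_nonneg_left hsm hE0
          _ ≤ _ := by
            refine mul_le_mul_of_nonneg_left (mul_le_mul_of_nonneg_right (hpa.trans ?_) (by positivity)) hE0
            exact mul_le_mul_of_nonneg_left hAL (by positivity)
      have h4 : (n ^ 2 * a / (2 * K ^ 2)) ^ 2 = n ^ 3 * (n * a ^ 2 / (4 * K ^ 4)) := by field_simp; ring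
      have h5 : E * ((32000 * K ^ 4 * (K * n)) * a ^ 2) =
        (128000 * K ^ 9 * E) * (n * a ^ 2 / (4 * K ^ 4)) := by field_simp; ring
      rw [h4, h5] at h3
      refine (le_of_mul_le_mul_right h3 (by positivity)).trans ?_
      refine mul_le_mul_of_nonneg_right ?_ hE0
      have : K ^ 9 ≤ K ^ 13 := pow_le_pow_right₀ hK (by norm_num)
      nlinarith [show 0 < K ^ 13 by positivity]
  · refine hnp.trans (mul_le_mul_of_nonneg_right ?_ hp0.le)
    have : K ^ 2 ≤ K ^ 13 := pow_le_pow_right₀ hK (by norm_num)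
    nlinarith [show 0 < K ^ 13 by positivity]
end PM

namespace PM
open Finset

set_option maxHeartbeats 1000000 in
theorem energy_pencil (p : ℕ) [Fact p.Prime] (L : Finset (ZMod p × ZMod p)) (κ : ℝ)
    (hκ : 1 ≤ κ) (h0 : ∀ l ∈ L, l.1 ≠ 0) (hLne : L.Nonempty)
    (hE : (L.card : ℝ) ^ 3 ≤ κ * coln (L ×ˢ L) phi) (hnp : (L.card : ℝ) ≤ κ * p)
    (M : ℕ) (hM : ∀ L' ⊆ L, Pencil L' → L'.card ≤ M) :
    (L.card : ℝ) ≤ 160000 * κ ^ 3 * M := by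
  classical
  by_contra hcon
  push Not at hcon
  have hp0 : (0:ℝ) < p := by exact_mod_cast (Fact.out : p.Prime).pos
  have hn0 : (0:ℝ) < L.card := by exact_mod_cast hLne.card_pos
  have hκ0 : 0 < κ := by linarith
  have hM1 : 1 ≤ M := by
    obtain ⟨l, hl⟩ := hLne
    have := hM {l} (by simpa using hl) (Or.inl ⟨l.1, by simp⟩)
    simpa using this
  have hMR : (1:ℝ) ≤ M := by exact_mod_cast hM1
  set n : ℝ := (L.card : ℝ) with hn
  set U := L ×ˢ L with hU
  let pm : (ZMod p × ZMod p) × (ZMod p × ZMod p) → ZMod p := fun x => x.1.1 * x.2.1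
  let f : (ZMod p × ZMod p) × (ZMod p × ZMod p) → ZMod p × ZMod p × ZMod p :=
    fun u => (u.2.1, u.2.2, u.2.1 * u.1.2)
  let g : (ZMod p × ZMod p) × (ZMod p × ZMod p) → ZMod p × ZMod p × ZMod p :=
    fun v => (-v.1.2, v.1.1, -(v.1.1 * v.2.2))
  let UU : ZMod p → Finset ((ZMod p × ZMod p) × (ZMod p × ZMod p)) := fun c => U.filter (fun u => pm u = c)
  let II : ZMod p → ℕ := fun c => ((UU c ×ˢ UU c).filter (fun x => rel (f x.1) (g x.2))).card
  have hEI : coln U phi ≤ ∑ c ∈ U.image pm, II c := by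
    have h1 : coln U phi ≤ ((U ×ˢ U).filter (fun x => pm x.1 = pm x.2 ∧ rel (f x.1) (g x.2))).card := by
      rw [coln]
      refine card_le_card_of_injOn (fun x => ((x.1.1, x.2.2), (x.1.2, x.2.1))) ?_ ?_
      · intro x hx
        obtain ⟨hx1, hx2⟩ := mem_filter.mp hx
        simp only [hU, mem_product] at hx1
        simp only [phi, Prod.mk.injEq] at hx2
        have z1 := h0 _ hx1.1.1
        have z2 := h0 _ hx1.1.2
        have z3 := h0 _ hx1.2.1
        have z4 := h0 _ hx1.2.2
        obtain ⟨e1, e2⟩ := hx2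
        rw [div_eq_div_iff z1 z3] at e1 e2
        simp only [coe_filter, hU, mem_product, Set.mem_ofPred_eq]
        refine ⟨⟨⟨hx1.1.1, hx1.2.2⟩, hx1.1.2, hx1.2.1⟩, ?_, ?_⟩
        · simp only [pm]; linear_combination -e1
        · simp only [rel, f, g]
          apply mul_left_cancel₀ z3
          apply mul_left_cancel₀ z1
          linear_combination (-x.1.1.1 * x.2.2.1) * e2 +
            (x.1.1.1 * (x.2.2.2 - x.2.1.2)) * e1
      · intro x _ y _ h
        simp only [Prod.mk.injEq] at h
        ext <;> simp [h]
    refine h1.trans ?_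
    rw [card_eq_sum_card_fiberwise (f := fun x => pm x.1) (t := U.image pm)]
    · refine sum_le_sum fun c _ => card_le_card ?_
      intro x hx
      simp only [mem_filter, mem_product, UU] at hx ⊢
      obtain ⟨⟨⟨a, b⟩, c, d⟩, e⟩ := hx
      exact ⟨⟨⟨a, e⟩, b, by rw [← c, e]⟩, d⟩
    · intro x hx
      simp only [coe_filter, mem_product, Set.mem_ofPred_eq] at hx
      exact mem_image_of_mem _ hx.1.1
  have hsumN : ∑ c ∈ U.image pm, (UU c).card = L.card ^ 2 := by
    rw [← card_eq_sum_card_fiberwise (fun x hx => mem_image_of_mem _ hx), hU, card_product, sq]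
  obtain ⟨c, hc, hcI⟩ : ∃ c ∈ U.image pm, ((UU c).card : ℝ) * n ≤ κ * II c := by
    apply exists_le_of_sum_le ((hLne.product hLne).image _)
    rw [← sum_mul, ← mul_sum, ← Nat.cast_sum, ← Nat.cast_sum, hsumN]
    have : ((coln U phi : ℕ) : ℝ) ≤ ((∑ c ∈ U.image pm, II c : ℕ) : ℝ) := by exact_mod_cast hEI
    have := mul_le_mul_of_nonneg_left this hκ0.le
    push_cast
    push_cast at this
    nlinarith
  have hmem : ∀ u ∈ UU c, u.1 ∈ L ∧ u.2 ∈ L ∧ u.1.1 * u.2.1 = c := by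
    intro u hu
    obtain ⟨h1, h2⟩ := mem_filter.mp hu
    rw [hU, mem_product] at h1
    exact ⟨h1.1, h1.2, h2⟩
  have fib2 : ∀ l, ((UU c).filter (fun u => u.2 = l)).card ≤ M := by
    intro l
    rw [← card_image_of_injOn (f := Prod.fst) (s := (UU c).filter (fun u => u.2 = l))]
    · refine hM _ ?_ (Or.inl ⟨c / l.1, ?_⟩)
      · intro x hx
        obtain ⟨u, hu, rfl⟩ := mem_image.mp hx
        exact (hmem u (mem_filter.mp hu).1).1
      · intro x hx
        obtain ⟨u, hu, rfl⟩ := mem_image.mp hx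
        obtain ⟨hu1, rfl⟩ := mem_filter.mp hu
        obtain ⟨a1, a2, a3⟩ := hmem u hu1
        rw [eq_div_iff (h0 _ a2), a3]
    · intro x hx y hy h
      have := (mem_filter.mp hx).2
      have := (mem_filter.mp hy).2
      ext1
      · exact h
      · simp [*]
  have fib1 : ∀ l, ((UU c).filter (fun u => u.1 = l)).card ≤ M := by
    intro l
    rw [← card_image_of_injOn (f := Prod.snd) (s := (UU c).filter (fun u => u.1 = l))]
    · refine hM _ ?_ (Or.inl ⟨c / l.1, ?_⟩)
      · intro x hx
        obtain ⟨u, hu, rfl⟩ := mem_image.mp hx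
        exact (hmem u (mem_filter.mp hu).1).2.1
      · intro x hx
        obtain ⟨u, hu, rfl⟩ := mem_image.mp hx
        obtain ⟨hu1, rfl⟩ := mem_filter.mp hu
        obtain ⟨a1, a2, a3⟩ := hmem u hu1
        rw [eq_div_iff (h0 _ a1), ← a3, mul_comm]
    · intro x hx y hy h
      have := (mem_filter.mp hx).2
      have := (mem_filter.mp hy).2
      ext1
      · simp [*]
      · exact h
  set N := (UU c).card with hN
  have hN1 : 1 ≤ N := by
    obtain ⟨u, hu, rfl⟩ := mem_image.mp hc
    exact card_pos.mpr ⟨u, mem_filter.mpr ⟨hu, rfl⟩⟩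
  have hNR : (1:ℝ) ≤ N := by exact_mod_cast hN1
  have hNM : (N:ℝ) ≤ M * n := by
    have : N ≤ M * L.card := card_le_mul_card_image_of_maps_to (f := Prod.snd)
      (fun u hu => (hmem u hu).2.1) M (fun l _ => fib2 l)
    rw [hn]; exact_mod_cast this
  have hfi : Set.InjOn f (UU c) := by
    intro x hx y hy h
    simp only [f, Prod.mk.injEq] at h
    obtain ⟨a1, a2, a3⟩ := hmem x hx
    obtain ⟨b1, b2, b3⟩ := hmem y hy
    obtain ⟨e1, e2, e3⟩ := h
    rw [e1] at e3 a3
    have e4 := mul_left_cancel₀ (h0 _ b2) e3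
    have e5 := mul_right_cancel₀ (h0 _ b2) (a3.trans b3.symm)
    ext <;> simp [*]
  have hgi : Set.InjOn g (UU c) := by
    intro x hx y hy h
    simp only [g, Prod.mk.injEq, neg_inj] at h
    obtain ⟨a1, a2, a3⟩ := hmem x hx
    obtain ⟨b1, b2, b3⟩ := hmem y hy
    obtain ⟨e1, e2, e3⟩ := h
    rw [e2] at e3 a3
    have e4 := mul_left_cancel₀ (h0 _ b1) e3
    have e5 := mul_left_cancel₀ (h0 _ b1) (a3.trans b3.symm)
    ext <;> simp [*]
  have hIeq := inc_image (UU c) (UU c) f g hfi hgi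
  have hpM : 160000 * κ ^ 2 * M ≤ p := by
    have : κ * (160000 * κ ^ 2 * M) ≤ κ * p := by nlinarith
    exact le_of_mul_le_mul_left this hκ0
  have hκ2 : 1 ≤ κ ^ 2 := one_le_pow₀ hκ
  have hκκ : κ ≤ κ ^ 2 := by nlinarith
  obtain ⟨T, hTs, hTc, hTI⟩ := PP p ((UU c).image f) ((UU c).image g) N hN1
    card_image_le card_image_le (by
      have : 200 * (N:ℝ) ≤ p ^ 2 := by
        have e1 : 200 * κ * M ≤ p := by nlinarith
        calc 200 * (N:ℝ) ≤ 200 * (M * (κ * p)) := by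
              refine mul_le_mul_of_nonneg_left (hNM.trans ?_) (by norm_num)
              exact mul_le_mul_of_nonneg_left hnp (by positivity)
          _ = (200 * κ * M) * p := by ring
          _ ≤ p * p := mul_le_mul_of_nonneg_right e1 hp0.le
          _ = _ := by ring
      exact_mod_cast this) (II c) hIeq.symm (by
      have h1 : ((N:ℝ) * n) ^ 2 ≤ (κ * II c) ^ 2 := pow_le_pow_left₀ (by positivity) hcI 2
      have h2 : κ ^ 2 * (160000 * (N:ℝ) ^ 3) ≤ κ ^ 2 * (II c : ℝ) ^ 2 := by
        have e1 : 160000 * κ ^ 2 * M ≤ n := by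
          refine le_trans ?_ hcon.le
          refine mul_le_mul_of_nonneg_right ?_ (by positivity)
          have : κ ^ 2 ≤ κ ^ 3 := pow_le_pow_right₀ hκ (by norm_num)
          linarith
        calc κ ^ 2 * (160000 * (N:ℝ) ^ 3) = (160000 * κ ^ 2 * N ^ 2) * N := by ring
          _ ≤ (160000 * κ ^ 2 * N ^ 2) * (M * n) := mul_le_mul_of_nonneg_left hNM (by positivity)
          _ = (N ^ 2 * n) * (160000 * κ ^ 2 * M) := by ring
          _ ≤ (N ^ 2 * n) * n := mul_le_mul_of_nonneg_left e1 (by positivity)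
          _ = (N * n) ^ 2 := by ring
          _ ≤ _ := h1
          _ = _ := by ring
      have h3 := le_of_mul_le_mul_left h2 (by positivity)
      exact_mod_cast h3)
  have hTM : T.card ≤ M := by
    rcases hTs with h | h
    · rcases coll_pencil T hTc (fun t => (t.1, t.2.1)) 1 0 0 0 1 0 (fun t => by simp) with ⟨l, hl⟩ | ⟨hi, hP⟩
      · refine le_trans (card_le_card (t := ((UU c).filter (fun u => u.2 = l)).image f) ?_) (card_image_le.trans (fib2 l))
        intro t ht
        obtain ⟨u, hu, rfl⟩ := mem_image.mp (h ht)
        exact mem_image_of_mem _ (mem_filter.mpr ⟨hu, hl _ ht⟩)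
      · rw [← card_image_of_injOn hi]
        refine hM _ ?_ hP
        intro x hx
        obtain ⟨t, ht, rfl⟩ := mem_image.mp hx
        obtain ⟨u, hu, rfl⟩ := mem_image.mp (h ht)
        exact (hmem u hu).2.1
    · rcases coll_pencil T hTc (fun t => (t.2.1, -t.1)) 0 1 0 (-1) 0 0 (fun t => by simp) with ⟨l, hl⟩ | ⟨hi, hP⟩
      · refine le_trans (card_le_card (t := ((UU c).filter (fun u => u.1 = l)).image g) ?_) (card_image_le.trans (fib1 l))
        intro t ht
        obtain ⟨u, hu, rfl⟩ := mem_image.mp (h ht)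
        refine mem_image_of_mem _ (mem_filter.mpr ⟨hu, ?_⟩)
        have := hl _ ht
        simpa [g] using this
      · rw [← card_image_of_injOn hi]
        refine hM _ ?_ hP
        intro x hx
        obtain ⟨t, ht, rfl⟩ := mem_image.mp hx
        obtain ⟨u, hu, rfl⟩ := mem_image.mp (h ht)
        simpa [g] using (hmem u hu).1
  have hTI' : (II c : ℝ) ≤ 8 * N * M := by
    have : II c ≤ 8 * N * M := hTI.trans (Nat.mul_le_mul_left _ hTM)
    exact_mod_cast this
  have e1 : (N:ℝ) * n ≤ N * (8 * κ * M) := by nlinarith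
  have e2 := le_of_mul_le_mul_left e1 (by linarith)
  have e3 : 8 * κ * M ≤ 160000 * κ ^ 3 * M := by
    refine mul_le_mul_of_nonneg_right ?_ (by positivity)
    have : κ ^ 2 ≤ κ ^ 3 := pow_le_pow_right₀ hκ (by norm_num)
    nlinarith
  linarith
end PM

namespace PM
open Finset

theorem coln_eq {α β : Type*} [DecidableEq β] (U : Finset α) (f : α → β) (V : Finset β)
    (hV : ∀ u ∈ U, f u ∈ V) : coln U f = ∑ v ∈ V, (U.filter (fun u => f u = v)).card ^ 2 := by
  rw [coln, card_eq_sum_card_fiberwise (f := fun x => f x.1) (t := V)]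
  · refine sum_congr rfl fun v _ => ?_
    rw [sq, ← card_product]
    congr 1
    ext x
    simp only [mem_filter, mem_product]
    constructor
    · rintro ⟨⟨⟨a, b⟩, c⟩, d⟩; exact ⟨⟨a, d⟩, b, by rw [← c, d]⟩
    · rintro ⟨⟨a, d⟩, b, e⟩; exact ⟨⟨⟨a, b⟩, by rw [d, e]⟩, d⟩
  · intro x hx
    simp only [coe_filter, mem_product, Set.mem_ofPred_eq] at hx
    exact hV _ hx.1.1

/-- energy with respect to a quotient operation -/
def En {F : Type*} [DecidableEq F] (q : F × F → F) (X Y : Finset F) : ℕ :=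
  (((X ×ˢ X) ×ˢ (Y ×ˢ Y)).filter (fun z => q z.1 = q z.2)).card

theorem En_sq {F : Type*} [DecidableEq F] (q : F × F → F) (X Y : Finset F) :
    (En q X Y : ℝ) ^ 2 ≤ (En q X X : ℝ) * (En q Y Y : ℝ) := by
  set V := (X ×ˢ X).image q ∪ (Y ×ˢ Y).image q with hV
  have h := CSw (X ×ˢ X) q V (fun u hu => mem_union_left _ (mem_image_of_mem _ hu))
    (fun v => (((Y ×ˢ Y).filter (fun y => q y = v)).card : ℝ))
  have e1 : ∑ u ∈ X ×ˢ X, (((Y ×ˢ Y).filter (fun y => q y = q u)).card : ℝ) = (En q X Y : ℝ) := by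
    rw [← Nat.cast_sum, En, card_filter, sum_product (s := X ×ˢ X)]
    congr 1
    refine sum_congr rfl fun u _ => ?_
    rw [card_filter]
    refine sum_congr rfl fun y _ => ?_
    simp only [eq_comm]
  have e2 : ∑ v ∈ V, (((Y ×ˢ Y).filter (fun y => q y = v)).card : ℝ) ^ 2 = (En q Y Y : ℝ) := by
    have := coln_eq (Y ×ˢ Y) q V (fun u hu => mem_union_right _ (mem_image_of_mem _ hu))
    have h2 : En q Y Y = coln (Y ×ˢ Y) q := rfl
    rw [h2, this]; push_cast; rfl
  rw [e1, e2] at h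
  exact h

theorem En_cube {F : Type*} [DecidableEq F] (q : F × F → F) (X : Finset F)
    (hq : ∀ x ∈ X, ∀ x' ∈ X, ∀ y ∈ X, q (x, y) = q (x', y) → x = x') :
    (En q X X : ℝ) ≤ (X.card : ℝ) ^ 3 := by
  have : En q X X ≤ ((X ×ˢ X) ×ˢ X).card := by
    refine card_le_card_of_injOn (fun z => (z.1, z.2.2)) ?_ ?_
    · intro z hz
      simp only [coe_filter, mem_product, Set.mem_ofPred_eq, coe_product, Set.mem_prod, mem_coe] at hz ⊢
      exact ⟨hz.1.1, hz.1.2.2⟩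
    · intro z hz w hw h
      simp only [coe_filter, mem_product, Set.mem_ofPred_eq] at hz hw
      simp only [Prod.mk.injEq] at h
      obtain ⟨h1, h2⟩ := h
      have h3 : z.2.1 = w.2.1 := by
        refine hq _ hz.1.2.1 _ hw.1.2.1 _ hw.1.2.2 ?_
        have e1 : q z.2 = q w.2 := by rw [← hz.2, ← hw.2, h1]
        calc q (z.2.1, w.2.2) = q (z.2.1, z.2.2) := by rw [h2]
          _ = _ := e1
      ext <;> simp [*]
  rw [card_product, card_product] at this
  calc (En q X X : ℝ) ≤ ((X.card * X.card * X.card : ℕ) : ℝ) := by exact_mod_cast this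
    _ = _ := by push_cast; ring

theorem En_ncard {F : Type*} [DecidableEq F] [Finite F] (q : F × F → F) (X Y : Finset F) (S : Set (F × F × F × F))
    (h : ∀ x ∈ X, ∀ x' ∈ X, ∀ y ∈ Y, ∀ y' ∈ Y, q (x, x') = q (y, y') → (x, x', y, y') ∈ S) :
    (En q X Y : ℝ) ≤ (S.ncard : ℝ) := by
  have : En q X Y ≤ S.ncard := by
    rw [En, ← Set.ncard_coe_finset]
    refine Set.ncard_le_ncard_of_injOn (fun z => (z.1.1, z.1.2, z.2.1, z.2.2)) ?_ ?_ (Set.toFinite _)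
    · intro z hz
      simp only [coe_filter, mem_product, Set.mem_ofPred_eq] at hz
      exact h _ hz.1.1.1 _ hz.1.1.2 _ hz.1.2.1 _ hz.1.2.2 hz.2
    · intro z _ w _ h
      simp only [Prod.mk.injEq] at h
      ext <;> simp [h]
  exact_mod_cast this

theorem numeric (a n d Q k e EX EY EXY : ℝ) (ha : 0 < a) (hn : a ≤ n) (hQ : 1 ≤ Q) (hk : 1 ≤ k)
    (hd : n ≤ Q * d) (he : d ^ 2 * a ≤ k * e) (h1 : e ^ 2 ≤ EX * d ^ 3) (h2 : e ^ 2 ≤ a ^ 3 * EY)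
    (h3 : e ≤ EXY) :
    a ^ 3 ≤ k ^ 2 * Q ^ 4 * EX ∧ a * n ^ 2 ≤ k ^ 2 * Q ^ 4 * EY ∧ a * n ^ 2 ≤ k ^ 2 * Q ^ 4 * EXY := by
  have hQ0 : 0 < Q := by linarith
  have hd0 : 0 < d := by
    by_contra hc
    push Not at hc
    nlinarith
  have he' : (d ^ 2 * a) ^ 2 ≤ k ^ 2 * e ^ 2 := by
    rw [← mul_pow]; exact pow_le_pow_left₀ (by positivity) he 2
  have hkQ : 0 < k ^ 2 := by positivity
  have f1 : a ^ 2 * d ≤ k ^ 2 * EX := by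
    have : (a ^ 2 * d) * d ^ 3 ≤ (k ^ 2 * EX) * d ^ 3 := by nlinarith
    exact le_of_mul_le_mul_right this (by positivity)
  have f2 : d ^ 4 ≤ k ^ 2 * a * EY := by
    have : d ^ 4 * a ^ 2 ≤ (k ^ 2 * a * EY) * a ^ 2 := by nlinarith
    exact le_of_mul_le_mul_right this (by positivity)
  have hEX : 0 ≤ EX := by
    by_contra hc
    push Not at hc
    have : k ^ 2 * EX < 0 := mul_neg_of_pos_of_neg hkQ hc
    have : 0 ≤ a ^ 2 * d := by positivity
    linarith
  have hQ4 : Q ≤ Q ^ 4 := by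
    calc Q = Q ^ 1 := (pow_one _).symm
      _ ≤ _ := pow_le_pow_right₀ hQ (by norm_num)
  have hQ24 : Q ^ 2 ≤ Q ^ 4 := pow_le_pow_right₀ hQ (by norm_num)
  have hn2 : n ^ 2 ≤ Q ^ 2 * d ^ 2 := by
    rw [← mul_pow]; exact pow_le_pow_left₀ (by linarith) hd 2
  have ha2 : a ^ 2 ≤ Q ^ 2 * d ^ 2 := (pow_le_pow_left₀ ha.le hn 2).trans hn2
  refine ⟨?_, ?_, ?_⟩
  · calc a ^ 3 = a ^ 2 * a := by ring
      _ ≤ a ^ 2 * (Q * d) := mul_le_mul_of_nonneg_left (by linarith) (by positivity)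
      _ = Q * (a ^ 2 * d) := by ring
      _ ≤ Q * (k ^ 2 * EX) := mul_le_mul_of_nonneg_left f1 hQ0.le
      _ ≤ Q ^ 4 * (k ^ 2 * EX) := mul_le_mul_of_nonneg_right hQ4 (by positivity)
      _ = _ := by ring
  · have : (a * n ^ 2) * a ≤ (k ^ 2 * Q ^ 4 * EY) * a := by
      calc (a * n ^ 2) * a = a ^ 2 * n ^ 2 := by ring
        _ ≤ (Q ^ 2 * d ^ 2) * (Q ^ 2 * d ^ 2) := mul_le_mul ha2 hn2 (by positivity) (by positivity)
        _ = Q ^ 4 * d ^ 4 := by ring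
        _ ≤ Q ^ 4 * (k ^ 2 * a * EY) := mul_le_mul_of_nonneg_left f2 (by positivity)
        _ = _ := by ring
    exact le_of_mul_le_mul_right this ha
  · have he0 : 0 ≤ e := by
      by_contra hc
      push Not at hc
      have : k * e < 0 := mul_neg_of_pos_of_neg (by linarith) hc
      have : 0 ≤ d ^ 2 * a := by positivity
      linarith
    have hkk : k ≤ k ^ 2 := by nlinarith
    calc a * n ^ 2 ≤ a * (Q ^ 2 * d ^ 2) := mul_le_mul_of_nonneg_left hn2 ha.le
      _ = Q ^ 2 * (d ^ 2 * a) := by ring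
      _ ≤ Q ^ 2 * (k * e) := mul_le_mul_of_nonneg_left he (by positivity)
      _ ≤ Q ^ 4 * (k ^ 2 * EXY) := by
        refine mul_le_mul hQ24 (mul_le_mul hkk h3 he0 (by positivity)) (mul_nonneg (by linarith) he0) (by positivity)
      _ = _ := by ring

theorem rich_sum {F : Type*} [Field F] [DecidableEq F] (A : Finset F) (G : Finset (F × F)) (κ : ℝ)
    (hκ : 1 ≤ κ) (hA : 2 * κ ≤ A.card) (hG : ∀ g ∈ G, (A.card : ℝ) ≤ κ * icount A g) (x0 : F) :
    (G.card : ℝ) * A.card ≤ 2 * κ * (((G ×ˢ A).filter (fun x => x.2 ≠ x0 ∧ x.1.1 * x.2 + x.1.2 ∈ A)).card : ℝ) := by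
  have h2 : ∑ g ∈ G, (A.filter (fun a => a ≠ x0 ∧ g.1 * a + g.2 ∈ A)).card =
    ((G ×ˢ A).filter (fun x => x.2 ≠ x0 ∧ x.1.1 * x.2 + x.1.2 ∈ A)).card := by
    rw [card_filter, sum_product]
    refine sum_congr rfl fun u _ => ?_
    rw [card_filter]
  have h3 : ∀ g ∈ G, (A.card : ℝ) ≤ 2 * κ * (A.filter (fun a => a ≠ x0 ∧ g.1 * a + g.2 ∈ A)).card := by
    intro g hg
    have : icount A g ≤ (A.filter (fun a => a ≠ x0 ∧ g.1 * a + g.2 ∈ A)).card + 1 := by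
      rw [icount]
      have : A.filter (fun a => g.1 * a + g.2 ∈ A) ⊆ insert x0 (A.filter (fun a => a ≠ x0 ∧ g.1 * a + g.2 ∈ A)) := by
        intro a ha
        simp only [mem_filter, mem_insert] at ha ⊢
        tauto
      exact (card_le_card this).trans (card_insert_le _ _)
    have t1 : (icount A g : ℝ) ≤ (A.filter (fun a => a ≠ x0 ∧ g.1 * a + g.2 ∈ A)).card + 1 := by exact_mod_cast this
    have t2 := hG g hg
    nlinarith
  rw [← h2]
  push_cast
  rw [mul_sum]
  calc (G.card : ℝ) * A.card = ∑ g ∈ G, (A.card : ℝ) := by simp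
    _ ≤ _ := sum_le_sum h3

theorem energy_from_count {F : Type*} [Field F] [DecidableEq F] (A : Finset F) (G : Finset (F × F)) (κ : ℝ)
    (hκ : 1 ≤ κ) (hA : 2 * κ ≤ A.card) (hG : ∀ g ∈ G, (A.card : ℝ) ≤ κ * icount A g) (x0 : F)
    (X Y A' : Finset F) (hA' : A'.card ≤ A.card) (f q : F × F → F) (T : (F × F) × F → F × F)
    (hT : ∀ x ∈ G ×ˢ A, x.2 ≠ x0 → x.1.1 * x.2 + x.1.2 ∈ A → T x ∈ X ×ˢ Y ∧ f (T x) ∈ A')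
    (hTi : ∀ x ∈ G ×ˢ A, ∀ y ∈ G ×ˢ A, x.2 ≠ x0 → y.2 ≠ x0 → T x = T y → x = y)
    (hE : coln (X ×ˢ Y) f ≤ En q X Y) :
    (G.card : ℝ) ^ 2 * A.card ≤ (4 * κ ^ 2) * En q X Y := by
  have h1 := rich_sum A G κ hκ hA hG x0
  set W := (G ×ˢ A).filter (fun x => x.2 ≠ x0 ∧ x.1.1 * x.2 + x.1.2 ∈ A) with hW
  have h2 : W.card ≤ ((X ×ˢ Y).filter (fun u => f u ∈ A')).card := by
    refine card_le_card_of_injOn T ?_ ?_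
    · intro x hx
      obtain ⟨a, b, c⟩ := mem_filter.mp hx
      exact mem_filter.mpr (hT x a b c)
    · intro x hx y hy h
      obtain ⟨a, b, c⟩ := mem_filter.mp hx
      obtain ⟨a', b', c'⟩ := mem_filter.mp hy
      exact hTi x a y a' b b' h
  have h3 := CS1 (X ×ˢ Y) f A'
  have h4 : (W.card : ℝ) ^ 2 ≤ (En q X Y : ℝ) * A.card := by
    calc (W.card : ℝ) ^ 2 ≤ (((X ×ˢ Y).filter (fun u => f u ∈ A')).card : ℝ) ^ 2 := by
          exact pow_le_pow_left₀ (by positivity) (by exact_mod_cast h2) 2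
      _ ≤ _ := h3
      _ ≤ _ := mul_le_mul (by exact_mod_cast hE) (by exact_mod_cast hA') (by positivity) (by positivity)
  have ha : (0:ℝ) < A.card := by linarith
  have h5 : ((G.card : ℝ) * A.card) ^ 2 ≤ (2 * κ * W.card) ^ 2 := pow_le_pow_left₀ (by positivity) h1 2
  have h6 : ((G.card : ℝ) ^ 2 * A.card) * A.card ≤ ((4 * κ ^ 2) * En q X Y) * A.card := by
    have := mul_le_mul_of_nonneg_left h4 (show 0 ≤ 4 * κ ^ 2 by positivity)
    nlinarith
  exact le_of_mul_le_mul_right h6 ha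

end PM

namespace PM
open Finset

theorem finish {F : Type*} [Field F] [DecidableEq F] (A X Y : Finset F) (q : F × F → F) (n Q k EX EY EXY : ℝ)
    (ha : 0 < A.card) (hn : (A.card : ℝ) ≤ n) (hQ : 1 ≤ Q) (hk : 1 ≤ k) (hX : X.card ≤ A.card)
    (hd : n ≤ Q * Y.card) (he : (Y.card : ℝ) ^ 2 * A.card ≤ k * En q X Y)
    (hqX : ∀ x ∈ X, ∀ x' ∈ X, ∀ y ∈ X, q (x, y) = q (x', y) → x = x')
    (hqY : ∀ x ∈ Y, ∀ x' ∈ Y, ∀ y ∈ Y, q (x, y) = q (x', y) → x = x')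
    (h1 : (En q X X : ℝ) ≤ EX) (h2 : (En q Y Y : ℝ) ≤ EY) (h3 : (En q X Y : ℝ) ≤ EXY) :
    (A.card : ℝ) ^ 3 ≤ k ^ 2 * Q ^ 4 * EX ∧ A.card * n ^ 2 ≤ k ^ 2 * Q ^ 4 * EY ∧
      A.card * n ^ 2 ≤ k ^ 2 * Q ^ 4 * EXY := by
  have hs := En_sq q X Y
  have c1 : (En q X X : ℝ) ≤ (A.card : ℝ) ^ 3 := (En_cube q X hqX).trans
    (pow_le_pow_left₀ (by positivity) (by exact_mod_cast hX) 3)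
  have c2 := En_cube q Y hqY
  refine numeric _ n Y.card Q k (En q X Y) EX EY EXY (by exact_mod_cast ha) hn hQ hk hd he ?_ ?_ h3
  · exact hs.trans (mul_le_mul h1 c2 (by positivity) ((Nat.cast_nonneg _).trans h1))
  · exact hs.trans (mul_le_mul c1 h2 (by positivity) (by positivity))

theorem addE_mono (p : ℕ) [Fact p.Prime] (A B A' B' : Finset (ZMod p)) (hA : A' ⊆ A) (hB : B' ⊆ B) :
    (En (fun z => z.1 - z.2) A' B' : ℝ) ≤ (addE p A B : ℝ) := by
  refine En_ncard _ _ _ _ ?_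
  intro x hx x' hx' y hy y' hy' h
  refine ⟨hA hx, hA hx', hB hy, hB hy', ?_⟩
  simp only at h ⊢
  linear_combination h

theorem mulE_mono (p : ℕ) [Fact p.Prime] (A B A' B' : Finset (ZMod p)) (hA : A' ⊆ A) (hB : B' ⊆ B)
    (hA0 : ∀ x ∈ A', x ≠ 0) (hB0 : ∀ x ∈ B', x ≠ 0) :
    (En (fun z => z.1 / z.2) A' B' : ℝ) ≤ (mulE p A B : ℝ) := by
  refine En_ncard _ _ _ _ ?_
  intro x hx x' hx' y hy y' hy' h
  refine ⟨hA hx, hA hx', hB hy, hB hy', ?_⟩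
  simp only at h ⊢
  rw [div_eq_div_iff (hA0 _ hx') (hB0 _ hy')] at h
  linear_combination h

theorem case_add (p : ℕ) [Fact p.Prime] (A : Finset (ZMod p)) (L G : Finset (ZMod p × ZMod p)) (κ Q : ℝ)
    (hκ : 1 ≤ κ) (hA : 2 * κ ≤ A.card) (hG : ∀ g ∈ G, (A.card : ℝ) ≤ κ * icount A g)
    (hGL : G ⊆ L) (h0 : ∀ l ∈ L, l.1 ≠ 0) (hAL : A.card ≤ L.card) (hQ : 1 ≤ Q)
    (hd : (L.card : ℝ) ≤ Q * G.card) (m : ZMod p) (hm : ∀ l ∈ G, l.1 = m) :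
    (A.card : ℝ) ^ 3 ≤ (4 * κ ^ 2) ^ 2 * Q ^ 4 * addE p A A ∧
    A.card * (L.card : ℝ) ^ 2 ≤ (4 * κ ^ 2) ^ 2 * Q ^ 4 * addE p (L.image Prod.snd) (L.image Prod.snd) ∧
    A.card * (L.card : ℝ) ^ 2 ≤ (4 * κ ^ 2) ^ 2 * Q ^ 4 * addE p A (L.image Prod.snd) := by
  set Y := G.image Prod.snd with hY
  have hYc : Y.card = G.card := by
    apply card_image_of_injOn
    intro x hx y hy h
    ext1
    · rw [hm x hx, hm y hy]
    · exact h
  have hYL : Y ⊆ L.image Prod.snd := image_subset_image hGL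
  have ha0 : 0 < A.card := by
    have : (0:ℝ) < A.card := by linarith
    exact_mod_cast this
  refine finish A A Y (fun z => z.1 - z.2) L.card Q (4 * κ ^ 2) _ _ _ ha0 (by exact_mod_cast hAL) hQ (by nlinarith)
    le_rfl (by rw [hYc]; exact hd) ?_ ?_ ?_ (addE_mono p _ _ _ _ subset_rfl subset_rfl)
    (addE_mono p _ _ _ _ hYL hYL) (addE_mono p _ _ _ _ subset_rfl hYL)
  · rw [hYc]
    refine energy_from_count A G κ hκ hA hG 0 A Y (A.image (fun a => m * a)) card_image_le (fun z => z.1 - z.2) _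
      (fun x => (m * x.2 + x.1.2, x.1.2)) ?_ ?_ ?_
    · intro x hx _ h
      rw [mem_product] at hx
      rw [hm _ hx.1] at h
      refine ⟨mem_product.mpr ⟨h, mem_image.mpr ⟨_, hx.1, rfl⟩⟩, ?_⟩
      simp only [add_sub_cancel_right]
      exact mem_image_of_mem _ hx.2
    · intro x hx y hy _ _ h
      rw [mem_product] at hx hy
      simp only [Prod.mk.injEq] at h
      obtain ⟨h1, h2⟩ := h
      have hm0 : m ≠ 0 := by rw [← hm _ hx.1]; exact h0 _ (hGL hx.1)
      rw [h2] at h1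
      have h3 := mul_left_cancel₀ hm0 (add_right_cancel h1)
      ext
      · rw [hm _ hx.1, hm _ hy.1]
      · exact h2
      · exact h3
    · rw [coln, En]
      refine card_le_card_of_injOn (fun z => ((z.1.1, z.2.1), (z.1.2, z.2.2))) ?_ ?_
      · intro z hz
        simp only [coe_filter, mem_product, Set.mem_ofPred_eq] at hz ⊢
        refine ⟨⟨⟨hz.1.1.1, hz.1.2.1⟩, hz.1.1.2, hz.1.2.2⟩, ?_⟩
        linear_combination hz.2
      · intro z _ w _ h
        simp only [Prod.mk.injEq] at h
        ext <;> simp [h]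
  · intro x _ x' _ y _ h
    exact sub_left_injective h
  · intro x _ x' _ y _ h
    exact sub_left_injective h

theorem case_mul (p : ℕ) [Fact p.Prime] (A : Finset (ZMod p)) (L G : Finset (ZMod p × ZMod p)) (κ Q : ℝ)
    (hκ : 1 ≤ κ) (hA : 2 * κ ≤ A.card) (hG : ∀ g ∈ G, (A.card : ℝ) ≤ κ * icount A g)
    (hGL : G ⊆ L) (h0 : ∀ l ∈ L, l.1 ≠ 0) (hAL : A.card ≤ L.card) (hQ : 1 ≤ Q)
    (hd : (L.card : ℝ) ≤ Q * G.card) (x0 y0 : ZMod p) (hm : ∀ l ∈ G, l.2 = y0 - x0 * l.1) :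
    (A.card : ℝ) ^ 3 ≤ (4 * κ ^ 2) ^ 2 * Q ^ 4 * mulE p (A.image fun a => a - x0) (A.image fun a => a - x0) ∧
    A.card * (L.card : ℝ) ^ 2 ≤ (4 * κ ^ 2) ^ 2 * Q ^ 4 * mulE p (L.image Prod.fst) (L.image Prod.fst) ∧
    A.card * (L.card : ℝ) ^ 2 ≤ (4 * κ ^ 2) ^ 2 * Q ^ 4 * mulE p (A.image fun a => a - x0) (L.image Prod.fst) := by
  set Y := G.image Prod.fst with hY
  have hYc : Y.card = G.card := by
    apply card_image_of_injOn
    intro x hx y hy h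
    ext1
    · exact h
    · have h' : x.1 = y.1 := h
      rw [hm x hx, hm y hy, h']
  have hYL : Y ⊆ L.image Prod.fst := image_subset_image hGL
  have hY0 : ∀ y ∈ Y, y ≠ 0 := by
    intro y hy
    obtain ⟨l, hl, rfl⟩ := mem_image.mp hy
    exact h0 _ (hGL hl)
  set X := (A.image fun a => a - x0).erase 0 with hX
  have hXA : X ⊆ A.image fun a => a - x0 := erase_subset _ _
  have hX0 : ∀ y ∈ X, y ≠ 0 := fun y hy => (mem_erase.mp hy).1
  have ha0 : 0 < A.card := by
    have : (0:ℝ) < A.card := by linarith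
    exact_mod_cast this
  refine finish A X Y (fun z => z.1 / z.2) L.card Q (4 * κ ^ 2) _ _ _ ha0 (by exact_mod_cast hAL) hQ (by nlinarith)
    ((card_le_card hXA).trans card_image_le) (by rw [hYc]; exact hd) ?_ ?_ ?_ (mulE_mono p _ _ _ _ hXA hXA hX0 hX0)
    (mulE_mono p _ _ _ _ hYL hYL hY0 hY0) (mulE_mono p _ _ _ _ hXA hYL hX0 hY0)
  · rw [hYc]
    refine energy_from_count A G κ hκ hA hG x0 X Y (A.image (fun a => a - y0)) card_image_le (fun z => z.1 * z.2) _
      (fun x => (x.2 - x0, x.1.1)) ?_ ?_ ?_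
    · intro x hx hne h
      rw [mem_product] at hx
      refine ⟨mem_product.mpr ⟨mem_erase.mpr ⟨sub_ne_zero.mpr hne, mem_image_of_mem _ hx.2⟩,
        mem_image_of_mem _ hx.1⟩, mem_image.mpr ⟨_, h, ?_⟩⟩
      simp only
      rw [hm _ hx.1]; ring
    · intro x hx y hy _ _ h
      rw [mem_product] at hx hy
      simp only [Prod.mk.injEq] at h
      obtain ⟨h1, h2⟩ := h
      have h3 := sub_left_injective h1
      ext
      · exact h2
      · rw [hm _ hx.1, hm _ hy.1, h2]
      · exact h3
    · rw [coln, En]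
      refine card_le_card_of_injOn (fun z => ((z.1.1, z.2.1), (z.2.2, z.1.2))) ?_ ?_
      · intro z hz
        simp only [coe_filter, mem_product, Set.mem_ofPred_eq] at hz ⊢
        refine ⟨⟨⟨hz.1.1.1, hz.1.2.1⟩, hz.1.2.2, hz.1.1.2⟩, ?_⟩
        rw [div_eq_div_iff (hX0 _ hz.1.2.1) (hY0 _ hz.1.1.2)]
        linear_combination hz.2
      · intro z _ w _ h
        simp only [Prod.mk.injEq] at h
        ext <;> simp [h]
  · intro x _ x' _ y hy h
    exact (div_left_inj' (hX0 y hy)).mp h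
  · intro x _ x' _ y hy h
    exact (div_left_inj' (hY0 y hy)).mp h

theorem inc_le (p : ℕ) [Fact p.Prime] (A : Finset (ZMod p)) (L : Finset (ZMod p × ZMod p)) :
    inc p A A L ≤ ∑ l ∈ L, icount A l := by
  rw [icount_sum, ← Set.ncard_coe_finset, inc]
  refine Set.ncard_le_ncard_of_injOn (fun z => (z.2, z.1.1)) ?_ ?_ (Set.toFinite _)
  · intro z hz
    obtain ⟨h1, h2, h3, h4⟩ := hz
    simp only [coe_filter, mem_product, Set.mem_ofPred_eq]
    refine ⟨⟨h3, h1⟩, ?_⟩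
    rw [← h4]; exact h2
  · intro z hz w hw h
    obtain ⟨-, -, -, h4⟩ := hz
    obtain ⟨-, -, -, h5⟩ := hw
    simp only [Prod.mk.injEq] at h
    have : z.1.2 = w.1.2 := by rw [h4, h5, h.1, h.2]
    ext <;> simp [h, this]

/-- The core: existence of a large pencil, then the energies. -/
theorem core (p : ℕ) [Fact p.Prime] (A : Finset (ZMod p)) (hAne : A.Nonempty) (K : ℝ) (hK : 1 ≤ K)
    (L : Finset (ZMod p × ZMod p)) (h0 : ∀ l ∈ L, l.1 ≠ 0) (hAL : A.card ≤ L.card)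
    (hI : (A.card : ℝ) * (L.card : ℝ) / K ≤ (inc p A A L : ℝ))
    (hA : 16 * K ^ 2 ≤ A.card) (hp : 16 * K ^ 2 * A.card ≤ p) (Z : ℝ)
    (hZ : Z = (4 * (2 * K) ^ 2) ^ 2 * (160000 * (10240000 * (2 * K) ^ 13) ^ 3 * (2 * K)) ^ 4) :
    ((A.card : ℝ) ^ 3 ≤ Z * addE p A A ∧
    A.card * (L.card : ℝ) ^ 2 ≤ Z * addE p (L.image Prod.snd) (L.image Prod.snd) ∧
    A.card * (L.card : ℝ) ^ 2 ≤ Z * addE p A (L.image Prod.snd)) ∨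
    ∃ s, ((A.card : ℝ) ^ 3 ≤ Z * mulE p (A.image fun a => a - s) (A.image fun a => a - s) ∧
    A.card * (L.card : ℝ) ^ 2 ≤ Z * mulE p (L.image Prod.fst) (L.image Prod.fst) ∧
    A.card * (L.card : ℝ) ^ 2 ≤ Z * mulE p (A.image fun a => a - s) (L.image Prod.fst)) := by
  classical
  have hK0 : 0 < K := by linarith
  have hA0 : 0 < A.card := hAne.card_pos
  have ha0 : (0:ℝ) < A.card := by exact_mod_cast hA0
  have hLpos : 0 < L.card := lt_of_lt_of_le hA0 hAL
  have hn0 : (0:ℝ) < L.card := by exact_mod_cast hLpos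
  set K1 := 2 * K with hK1
  have hK11 : 1 ≤ K1 := by linarith
  set L1 := L.filter (fun l => (A.card : ℝ) ≤ K1 * icount A l) with hL1
  have hL1c : (L.card : ℝ) ≤ K1 * L1.card := by
    have h1 : (A.card : ℝ) * L.card / K ≤ ∑ l ∈ L, (icount A l : ℝ) :=
      hI.trans (by exact_mod_cast inc_le p A L)
    have h2 : ∑ l ∈ L, (icount A l : ℝ) ≤
        ∑ l ∈ L, ((if (A.card : ℝ) ≤ K1 * icount A l then (A.card : ℝ) else 0) + A.card / K1) := by
      refine sum_le_sum fun l _ => ?_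
      have hpos : 0 ≤ (A.card : ℝ) / K1 := by positivity
      split_ifs with h
      · have : (icount A l : ℝ) ≤ A.card := by exact_mod_cast icount_le A l
        linarith
      · push Not at h
        rw [zero_add, le_div_iff₀ (by linarith)]
        linarith
    rw [sum_add_distrib, ← sum_filter, sum_const, sum_const, nsmul_eq_mul, nsmul_eq_mul, ← hL1] at h2
    have h3 : (A.card : ℝ) * L.card / K = 2 * (L.card * (A.card / K1)) := by
      rw [hK1]; field_simp
    have h4 : (L.card : ℝ) * (A.card / K1) ≤ L1.card * A.card := by linarith
    have h5 : (L.card : ℝ) * (A.card / K1) = L.card / K1 * A.card := by ring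
    rw [h5] at h4
    have h6 := le_of_mul_le_mul_right h4 ha0
    rw [div_le_iff₀ (by linarith)] at h6
    linarith
  have hL1n : L1.Nonempty := by
    rw [← card_pos]
    by_contra h
    have : L1.card = 0 := by omega
    rw [this] at hL1c
    rw [Nat.cast_zero, mul_zero] at hL1c
    linarith
  have hL1L : L1 ⊆ L := filter_subset _ _
  have hALR : (A.card : ℝ) ≤ L.card := by exact_mod_cast hAL
  obtain ⟨hE, hnp⟩ := energy_lower p A L1 K1 hK11 (fun l hl => h0 l (hL1L hl)) (fun l hl => (mem_filter.mp hl).2)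
    hL1n (hALR.trans hL1c) (by rw [hK1]; linarith) (by rw [hK1]; linarith)
  have hK13 : 1 ≤ K1 ^ 13 := one_le_pow₀ hK11
  set κ := 10240000 * K1 ^ 13 with hκ
  have hκ1 : 1 ≤ κ := by rw [hκ]; linarith
  obtain ⟨G, hGm, hGmax⟩ := exists_max_image (L1.powerset.filter (fun G => Pencil G)) card
    ⟨∅, by simp [Pencil]⟩
  rw [mem_filter, mem_powerset] at hGm
  have hEP := energy_pencil p L1 κ hκ1 (fun l hl => h0 l (hL1L hl)) hL1n hE hnp G.card
    (fun L' hL' hP => hGmax L' (mem_filter.mpr ⟨mem_powerset.mpr hL', hP⟩))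
  set Q := 160000 * κ ^ 3 * K1 with hQ
  have hQ1 : 1 ≤ Q := by
    have : 1 ≤ κ ^ 3 := one_le_pow₀ hκ1
    rw [hQ]; nlinarith
  have hd : (L.card : ℝ) ≤ Q * G.card := by
    calc (L.card : ℝ) ≤ _ := hL1c
      _ ≤ K1 * (160000 * κ ^ 3 * G.card) := mul_le_mul_of_nonneg_left hEP (by linarith)
      _ = _ := by rw [hQ]; ring
  have hA2 : 2 * K1 ≤ A.card := by rw [hK1]; nlinarith
  have hGr : ∀ g ∈ G, (A.card : ℝ) ≤ K1 * icount A g := fun g hg => (mem_filter.mp (hGm.1 hg)).2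
  rcases hGm.2 with ⟨m, hm⟩ | ⟨x0, y0, hm⟩
  · left
    rw [hZ]
    exact case_add p A L G K1 Q hK11 hA2 hGr (hGm.1.trans hL1L) h0 hAL hQ1 hd m hm
  · right
    refine ⟨x0, ?_⟩
    rw [hZ]
    exact case_mul p A L G K1 Q hK11 hA2 hGr (hGm.1.trans hL1L) h0 hAL hQ1 hd x0 y0 hm

end PM
/-- **Corollary 3.7** (structure from many incidences): there are absolute constants
`C₀, C ≥ 1` such that for every prime `p`, finite nonempty `A ⊆ F_p`, `K ≥ 1` and set `L`
of lines with nonzero slopes, `|L| ≥ |A|`, if `I(A×A, L) ≥ |A||L|/K` and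
`|A||L|/K ≥ C₀·|A|^{1/2}|L|·max{1, |A|/√p}`, then (with `B` the set of y-intercepts and
`D` the set of slopes of `L`) either `E⁺(A) ≥ |A|³/(CK^C)`, `E⁺(B) ≥ |A||L|²/(CK^C)` and
`E⁺(A,B) ≥ |A||L|²/(CK^C)`; or there is `s` with `E^×(A−s) ≥ |A|³/(CK^C)`,
`E^×(D) ≥ |A||L|²/(CK^C)` and `E^×(A−s,D) ≥ |A||L|²/(CK^C)`. -/
theorem incidence_structure :
    ∃ C₀ C : ℝ, 1 ≤ C₀ ∧ 1 ≤ C ∧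
      ∀ (p : ℕ), p.Prime →
        ∀ A : Finset (ZMod p), A.Nonempty →
          ∀ K : ℝ, 1 ≤ K →
            ∀ L : Finset (ZMod p × ZMod p),
              (∀ l ∈ L, l.1 ≠ 0) →
              A.card ≤ L.card →
              (A.card : ℝ) * (L.card : ℝ) / K ≤ (inc p A A L : ℝ) →
              C₀ * (A.card : ℝ) ^ ((1 : ℝ) / 2) * (L.card : ℝ) *
                  max 1 ((A.card : ℝ) / (p : ℝ) ^ ((1 : ℝ) / 2))
                ≤ (A.card : ℝ) * (L.card : ℝ) / K →
              (((A.card : ℝ) ^ 3 / (C * K ^ C) ≤ (addE p A A : ℝ) ∧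
                (A.card : ℝ) * (L.card : ℝ) ^ 2 / (C * K ^ C) ≤
                  (addE p (L.image Prod.snd) (L.image Prod.snd) : ℝ) ∧
                (A.card : ℝ) * (L.card : ℝ) ^ 2 / (C * K ^ C) ≤
                  (addE p A (L.image Prod.snd) : ℝ)) ∨
              (∃ s : ZMod p,
                (A.card : ℝ) ^ 3 / (C * K ^ C) ≤
                  (mulE p (A.image fun a => a - s) (A.image fun a => a - s) : ℝ) ∧
                (A.card : ℝ) * (L.card : ℝ) ^ 2 / (C * K ^ C) ≤
                  (mulE p (L.image Prod.fst) (L.image Prod.fst) : ℝ) ∧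
                (A.card : ℝ) * (L.card : ℝ) ^ 2 / (C * K ^ C) ≤
                  (mulE p (A.image fun a => a - s) (L.image Prod.fst) : ℝ))) := by
  classical
  obtain ⟨c, hc164, hZ'⟩ : ∃ c : ℝ, (164 : ℝ) ≤ c ∧ ∀ K : ℝ,
      (4 * (2 * K) ^ 2) ^ 2 * (160000 * (10240000 * (2 * K) ^ 13) ^ 3 * (2 * K)) ^ 4 = c * K ^ (164 : ℕ) := by
    refine ⟨16 * 2 ^ 164 * (160000 * 10240000 ^ 3) ^ 4, by norm_num, fun K => by ring⟩
  refine ⟨4, c, by norm_num, by linarith, ?_⟩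
  intro p hp A hAne K hK L h0 hAL hI hbig
  haveI : Fact p.Prime := ⟨hp⟩
  have hp0 : (0:ℝ) < p := by exact_mod_cast hp.pos
  have hK0 : 0 < K := by linarith
  have hA0 : 0 < A.card := hAne.card_pos
  have ha0 : (0:ℝ) < A.card := by exact_mod_cast hA0
  have hn0 : (0:ℝ) < L.card := by exact_mod_cast lt_of_lt_of_le hA0 hAL
  rw [← Real.sqrt_eq_rpow, ← Real.sqrt_eq_rpow] at hbig
  set u := Real.sqrt (A.card : ℝ) with hu
  set v := Real.sqrt (p : ℝ) with hv
  have hu0 : 0 < u := Real.sqrt_pos.mpr ha0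
  have hv0 : 0 < v := Real.sqrt_pos.mpr hp0
  have hu2 : (A.card : ℝ) = u ^ 2 := (Real.sq_sqrt ha0.le).symm
  have hv2 : (p : ℝ) = v ^ 2 := (Real.sq_sqrt hp0.le).symm
  have hb : ∀ w : ℝ, w ≤ max 1 ((A.card : ℝ) / v) → 4 * K * w ≤ u := by
    intro w hw
    have h1 : 4 * u * L.card * w ≤ u ^ 2 * L.card / K := by
      rw [← hu2]
      exact le_trans (mul_le_mul_of_nonneg_left hw
        (mul_nonneg (mul_nonneg (by norm_num) hu0.le) hn0.le)) hbig
    rw [le_div_iff₀ hK0] at h1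
    have h2 : (4 * K * w) * (u * L.card) ≤ u * (u * L.card) := by nlinarith
    exact le_of_mul_le_mul_right h2 (mul_pos hu0 hn0)
  have hb1 := hb 1 (le_max_left _ _)
  have hb2 := hb ((A.card : ℝ) / v) (le_max_right _ _)
  have hA16 : 16 * K ^ 2 ≤ A.card := by
    rw [hu2]
    have := pow_le_pow_left₀ (by positivity) hb1 2
    linarith
  have hp16 : 16 * K ^ 2 * A.card ≤ p := by
    rw [hu2] at hb2 ⊢
    rw [hv2]
    have h1 : 4 * K * u ≤ v := by
      have h2 : 4 * K * (u ^ 2 / v) = (4 * K * u / v) * u := by ring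
      rw [h2] at hb2
      have h3 : 4 * K * u / v ≤ 1 := by
        have : (4 * K * u / v) * u ≤ 1 * u := by linarith
        exact le_of_mul_le_mul_right this hu0
      rwa [div_le_one hv0] at h3
    have := pow_le_pow_left₀ (mul_nonneg (mul_nonneg (by norm_num) hK0.le) hu0.le) h1 2
    linarith
  have hZ : (4 * (2 * K) ^ 2) ^ 2 * (160000 * (10240000 * (2 * K) ^ 13) ^ 3 * (2 * K)) ^ 4 = c * K ^ (164 : ℕ) := hZ' K
  clear hZ'
  have hKc : K ^ (164 : ℕ) ≤ K ^ c := by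
    rw [← Real.rpow_natCast]
    exact Real.rpow_le_rpow_of_exponent_le hK (by exact_mod_cast hc164)
  have hc0 : 0 < c := by linarith
  have hpos : 0 < c * K ^ c := by positivity
  have fin : ∀ (x : ℝ) (e : ℕ), x ≤ (c * K ^ (164 : ℕ)) * e → x / (c * K ^ c) ≤ e := by
    intro x e h
    rw [div_le_iff₀ hpos]
    refine h.trans ?_
    rw [mul_comm (e : ℝ)]
    exact mul_le_mul_of_nonneg_right (mul_le_mul_of_nonneg_left hKc hc0.le) (Nat.cast_nonneg _)
  rcases PM.core p A hAne K hK L h0 hAL hI hA16 hp16 _ hZ.symm with ⟨h1, h2, h3⟩ | ⟨s, h1, h2, h3⟩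
  · exact Or.inl ⟨fin _ _ h1, fin _ _ h2, fin _ _ h3⟩
  · exact Or.inr ⟨s, fin _ _ h1, fin _ _ h2, fin _ _ h3⟩
end

section
/- There exists an absolute constant C₀ such that for all finite sets A, B, C, D ⊆ R with 0 ∉ C and |C| ≤ |D|², the number of incidences between the point set A×B and the set of lines {y = cx + d : c ∈ C, d ∈ D} satisfies I(A×B, C×D) ≤ C₀·( |A|^(2/3)·|B|^(1/2)·|C|^(3/4)·|D|^(5/6) + |B|^(1/2)·|C|·|D| ). -/
/-- number of pairs of elements of `T` with the same image under `h` -/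
def collN {α β : Type} [DecidableEq β] (T : Finset α) (h : α → β) : ℕ :=
  ((T ×ˢ T).filter (fun p => h p.1 = h p.2)).card

/-- number of points of `A × A` on the line `y = g.1 x + g.2` -/
noncomputable def incN (A : Finset ℝ) (g : ℝ × ℝ) : ℕ :=
  (A.filter (fun x => g.1 * x + g.2 ∈ A)).card

theorem collN_eq_sum {α β : Type} [DecidableEq β] (T : Finset α) (h : α → β) :
    collN T h = ∑ x ∈ T, (T.filter (fun y => h x = h y)).card := by
  unfold collN
  rw [Finset.card_filter, Finset.sum_product]
  simp only [Finset.card_filter]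

theorem collN_eq {α β : Type} [DecidableEq β] (T : Finset α) (h : α → β) :
    collN T h = ∑ b ∈ T.image h, (T.filter (fun x => h x = b)).card ^ 2 := by
  rw [collN_eq_sum]
  have := Finset.sum_comp (s := T) (fun b => (T.filter (fun x => h x = b)).card) h
  simp only [smul_eq_mul, ← sq] at this
  rw [← this]
  refine Finset.sum_congr rfl fun x _ => ?_
  simp only [eq_comm]

theorem card_sq_le_collN {α β : Type} [DecidableEq β] (T : Finset α) (h : α → β) :
    T.card ^ 2 ≤ (T.image h).card * collN T h := by
  rw [collN_eq]
  conv_lhs => rw [Finset.card_eq_sum_card_image h T]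
  exact sq_sum_le_card_mul_sum_sq

theorem exists_cells (A : Finset ℝ) (r m : ℕ) (hm : 0 < m) (h : A.card ≤ r * m) :
    ∃ f : ℝ → ℕ, Monotone f ∧ (∀ x ∈ A, f x < r) ∧
      ∀ x ∈ A, (A.filter (fun y => f x = f y)).card ≤ m := by
  set rk : ℝ → ℕ := fun x => (A.filter (fun a => a < x)).card with hrk
  have rmono : Monotone rk := by
    intro x y hxy
    apply Finset.card_le_card
    intro a ha
    simp only [Finset.mem_filter] at ha ⊢
    exact ⟨ha.1, ha.2.trans_le hxy⟩
  have rstrict : ∀ x ∈ A, ∀ y, x < y → rk x < rk y := by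
    intro x hx y hxy
    apply Finset.card_lt_card
    rw [Finset.ssubset_iff_of_subset]
    · exact ⟨x, by simp [hx, hxy], by simp⟩
    · intro a ha
      simp only [Finset.mem_filter] at ha ⊢
      exact ⟨ha.1, ha.2.trans hxy⟩
  refine ⟨fun x => rk x / m, ?_, ?_, ?_⟩
  · intro x y hxy
    exact Nat.div_le_div_right (rmono hxy)
  · intro x hx
    rw [Nat.div_lt_iff_lt_mul hm]
    refine lt_of_lt_of_le ?_ h
    apply Finset.card_lt_card
    rw [Finset.ssubset_iff_of_subset (Finset.filter_subset _ _)]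
    exact ⟨x, hx, by simp⟩
  · intro x hx
    have : (A.filter (fun y => rk x / m = rk y / m)).card
        ≤ (Finset.Ico (rk x / m * m) (rk x / m * m + m)).card := by
      apply Finset.card_le_card_of_injOn rk
      · intro y hy
        simp only [Finset.coe_filter, Set.mem_ofPred_eq] at hy
        rw [hy.2]
        simp only [Finset.coe_Ico, Set.mem_Ico]
        exact ⟨Nat.div_mul_le_self _ _, by
          have := Nat.div_add_mod (rk y) m
          have h2 := Nat.mod_lt (rk y) hm
          rw [mul_comm] at this
          omega⟩
      · intro y hy z hz hyz
        simp only [Finset.coe_filter, Set.mem_ofPred_eq] at hy hz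
        rcases lt_trichotomy y z with h1 | h1 | h1
        · exact absurd hyz (rstrict y hy.1 z h1).ne
        · exact h1
        · exact absurd hyz (rstrict z hz.1 y h1).ne'
    simpa using this

/-- off-diagonal pairs on a line in the same cell -/
noncomputable def cellPairs (A : Finset ℝ) (f : ℝ → ℕ) (g : ℝ × ℝ) : Finset (ℝ × ℝ) :=
  (A ×ˢ A).filter (fun p => p.1 ≠ p.2 ∧ g.1 * p.1 + g.2 ∈ A ∧ g.1 * p.2 + g.2 ∈ A ∧
    f p.1 = f p.2 ∧ f (g.1 * p.1 + g.2) = f (g.1 * p.2 + g.2))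

theorem line_bound (A : Finset ℝ) (f : ℝ → ℕ) (hf : Monotone f) (r : ℕ)
    (hr : ∀ x ∈ A, f x < r) (g : ℝ × ℝ) (hg : g.1 ≠ 0) :
    incN A g ^ 2 ≤ 2 * r * (incN A g + (cellPairs A f g).card) := by
  set T := A.filter (fun x => g.1 * x + g.2 ∈ A) with hT
  have key : ∃ h : ℝ → ℕ, (∀ x ∈ T, h x < 2 * r) ∧
      ∀ x ∈ T, ∀ y ∈ T, h x = h y → f x = f y ∧ f (g.1 * x + g.2) = f (g.1 * y + g.2) := by
    rcases lt_or_gt_of_ne hg with h0 | h0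
    · refine ⟨fun x => f x + (r - f (g.1 * x + g.2)), ?_, ?_⟩
      · intro x hx
        rw [hT, Finset.mem_filter] at hx
        have := hr x hx.1
        dsimp only
        omega
      · have main : ∀ x ∈ T, ∀ y ∈ T, x ≤ y →
            f x + (r - f (g.1 * x + g.2)) = f y + (r - f (g.1 * y + g.2)) →
            f x = f y ∧ f (g.1 * x + g.2) = f (g.1 * y + g.2) := by
          intro x hx y hy hxy h
          rw [hT, Finset.mem_filter] at hx hy
          have h1 := hf hxy
          have h2 : f (g.1 * y + g.2) ≤ f (g.1 * x + g.2) := hf (by nlinarith)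
          have h3 := hr _ hx.2
          have h4 := hr _ hy.2
          omega
        intro x hx y hy h
        rcases le_total x y with hxy | hxy
        · exact main x hx y hy hxy h
        · have := main y hy x hx hxy h.symm
          exact ⟨this.1.symm, this.2.symm⟩
    · refine ⟨fun x => f x + f (g.1 * x + g.2), ?_, ?_⟩
      · intro x hx
        rw [hT, Finset.mem_filter] at hx
        have := hr x hx.1
        have := hr _ hx.2
        dsimp only
        omega
      · have main : ∀ x ∈ T, ∀ y ∈ T, x ≤ y →
            f x + f (g.1 * x + g.2) = f y + f (g.1 * y + g.2) →
            f x = f y ∧ f (g.1 * x + g.2) = f (g.1 * y + g.2) := by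
          intro x hx y hy hxy h
          have h1 := hf hxy
          have h2 : f (g.1 * x + g.2) ≤ f (g.1 * y + g.2) := hf (by nlinarith)
          omega
        intro x hx y hy h
        rcases le_total x y with hxy | hxy
        · exact main x hx y hy hxy h
        · have := main y hy x hx hxy h.symm
          exact ⟨this.1.symm, this.2.symm⟩
  obtain ⟨h, h1, h2⟩ := key
  have h3 := card_sq_le_collN T h
  have h4 : (T.image h).card ≤ 2 * r := by
    have : T.image h ⊆ Finset.range (2 * r) := by
      intro b hb
      obtain ⟨x, hx, rfl⟩ := Finset.mem_image.1 hb
      exact Finset.mem_range.2 (h1 x hx)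
    simpa using Finset.card_le_card this
  have h5 : collN T h ≤ T.card + (cellPairs A f g).card := by
    unfold collN
    calc _ ≤ (T.image (fun x => (x, x)) ∪ cellPairs A f g).card := by
          apply Finset.card_le_card
          rintro ⟨x, y⟩ hp
          simp only [Finset.mem_filter, Finset.mem_product] at hp
          obtain ⟨⟨hx, hy⟩, hxy⟩ := hp
          have h6 := h2 x hx y hy hxy
          by_cases e : x = y
          · subst e
            exact Finset.mem_union_left _ (Finset.mem_image_of_mem _ hx)
          · apply Finset.mem_union_right
            rw [hT, Finset.mem_filter] at hx hy
            simp only [cellPairs, Finset.mem_filter, Finset.mem_product]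
            exact ⟨⟨hx.1, hy.1⟩, e, hx.2, hy.2, h6⟩
      _ ≤ _ := (Finset.card_union_le _ _).trans (Nat.add_le_add_right Finset.card_image_le _)
  exact h3.trans (Nat.mul_le_mul h4 h5)

theorem sum_cellPairs (A : Finset ℝ) (f : ℝ → ℕ) (G : Finset (ℝ × ℝ)) :
    ∑ g ∈ G, (cellPairs A f g).card ≤ collN A f ^ 2 := by
  rw [← Finset.card_sigma, sq]
  unfold collN
  rw [← Finset.card_product]
  apply Finset.card_le_card_of_injOn
    (fun z : (_ : ℝ × ℝ) × (ℝ × ℝ) => (z.2, (z.1.1 * z.2.1 + z.1.2, z.1.1 * z.2.2 + z.1.2)))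
  · rintro ⟨⟨c, d⟩, ⟨x, y⟩⟩ hz
    simp only [cellPairs, Finset.coe_sigma, Set.mem_sigma_iff, Finset.mem_coe, Finset.mem_filter,
      Finset.mem_product] at hz ⊢
    tauto
  · rintro ⟨⟨c, d⟩, ⟨x, y⟩⟩ hz ⟨⟨c', d'⟩, ⟨x', y'⟩⟩ _ h
    simp only [cellPairs, Finset.coe_sigma, Set.mem_sigma_iff, Finset.mem_coe, Finset.mem_filter,
      Finset.mem_product] at hz
    simp only [Prod.mk.injEq] at h
    obtain ⟨⟨rfl, rfl⟩, h1, h2⟩ := h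
    have hne : x - y ≠ 0 := sub_ne_zero.2 hz.2.2.1
    have hc : c = c' := by
      apply mul_right_cancel₀ hne
      linarith
    subst hc
    have hd : d = d' := by linarith
    subst hd
    rfl

/-- second moment form of Szemerédi–Trotter for grids -/
theorem rich_sum (A : Finset ℝ) (G : Finset (ℝ × ℝ)) (hG : ∀ g ∈ G, g.1 ≠ 0) (r : ℕ)
    (hr : 0 < r) (hrich : ∀ g ∈ G, 4 * r ≤ incN A g) :
    r * ∑ g ∈ G, incN A g ^ 2 ≤ 16 * A.card ^ 4 := by
  rcases G.eq_empty_or_nonempty with rfl | ⟨g0, hg0⟩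
  · simp
  have hrn : r ≤ A.card := by
    have h1 := hrich g0 hg0
    have h2 : incN A g0 ≤ A.card := Finset.card_filter_le _ _
    omega
  set n := A.card with hn
  set m := n / r + 1 with hm
  have hmr : n ≤ r * m := by
    have := Nat.div_add_mod n r
    have := Nat.mod_lt n hr
    rw [hm, mul_add]
    omega
  have hmr2 : r * m ≤ 2 * n := by
    have := Nat.div_add_mod n r
    rw [hm, mul_add]
    omega
  obtain ⟨f, f1, f2, f3⟩ := exists_cells A r m (Nat.succ_pos _) hmr
  have hc : collN A f ≤ n * m := by
    rw [collN_eq_sum]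
    calc _ ≤ ∑ x ∈ A, m := Finset.sum_le_sum f3
      _ = _ := by simp [hn]
  have h1 : ∀ g ∈ G, incN A g ^ 2 ≤ 4 * r * (cellPairs A f g).card := by
    intro g hg
    have := line_bound A f f1 r f2 g (hG g hg)
    have := hrich g hg
    nlinarith
  calc r * ∑ g ∈ G, incN A g ^ 2 ≤ r * ∑ g ∈ G, 4 * r * (cellPairs A f g).card :=
        Nat.mul_le_mul_left _ (Finset.sum_le_sum h1)
    _ = 4 * r ^ 2 * ∑ g ∈ G, (cellPairs A f g).card := by rw [← Finset.mul_sum]; ring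
    _ ≤ 4 * r ^ 2 * (n * m) ^ 2 := by
        apply Nat.mul_le_mul_left
        exact (sum_cellPairs A f G).trans (Nat.pow_le_pow_left hc 2)
    _ = 4 * n ^ 2 * (r * m) ^ 2 := by ring
    _ ≤ 4 * n ^ 2 * (2 * n) ^ 2 := Nat.mul_le_mul_left _ (Nat.pow_le_pow_left hmr2 2)
    _ = _ := by ring

theorem weighted {ι : Type} (A : Finset ℝ) (P : Finset ι) (φ : ι → ℝ × ℝ)
    (hφ : ∀ p ∈ P, (φ p).1 ≠ 0) (r : ℕ) (hr : 0 < r) :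
    ∃ H : ℕ, ∑ p ∈ P, incN A (φ p) ≤ 4 * r * P.card + H ∧
      r * H ^ 2 ≤ 16 * A.card ^ 4 * collN P φ := by
  classical
  set P' := P.filter (fun p => 4 * r ≤ incN A (φ p)) with hP'
  refine ⟨∑ p ∈ P', incN A (φ p), ?_, ?_⟩
  · rw [← Finset.sum_filter_not_add_sum_filter P (fun p => 4 * r ≤ incN A (φ p))]
    apply Nat.add_le_add_right
    calc _ ≤ ∑ p ∈ P.filter (fun p => ¬ 4 * r ≤ incN A (φ p)), 4 * r := by
          apply Finset.sum_le_sum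
          intro p hp
          have := (Finset.mem_filter.1 hp).2
          omega
      _ = (P.filter (fun p => ¬ 4 * r ≤ incN A (φ p))).card * (4 * r) := by simp
      _ ≤ P.card * (4 * r) := Nat.mul_le_mul_right _ (Finset.card_filter_le _ _)
      _ = _ := by ring
  · have h1 := Finset.sum_comp (s := P') (fun b => incN A b) φ
    simp only [smul_eq_mul] at h1
    rw [h1]
    have h2 := Finset.sum_mul_sq_le_sq_mul_sq (P'.image φ)
      (fun b => (P'.filter (fun x => φ x = b)).card) (fun b => incN A b)
    rw [← collN_eq] at h2
    have h3 : collN P' φ ≤ collN P φ := by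
      unfold collN
      apply Finset.card_le_card
      apply Finset.filter_subset_filter
      exact Finset.product_subset_product (Finset.filter_subset _ _) (Finset.filter_subset _ _)
    have h4 := rich_sum A (P'.image φ) (by
      intro g hg
      obtain ⟨p, hp, rfl⟩ := Finset.mem_image.1 hg
      exact hφ p (Finset.mem_filter.1 hp).1) r hr (by
      intro g hg
      obtain ⟨p, hp, rfl⟩ := Finset.mem_image.1 hg
      exact (Finset.mem_filter.1 hp).2)
    calc _ ≤ r * (collN P' φ * ∑ b ∈ P'.image φ, incN A b ^ 2) := Nat.mul_le_mul_left _ h2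
      _ = (r * ∑ b ∈ P'.image φ, incN A b ^ 2) * collN P' φ := by ring
      _ ≤ _ := Nat.mul_le_mul h4 h3

/-- `l₂⁻¹ ∘ l₁` -/
noncomputable def phiL (p : (ℝ × ℝ) × (ℝ × ℝ)) : ℝ × ℝ :=
  (p.1.1 / p.2.1, (p.1.2 - p.2.2) / p.2.1)

/-- `l₁ ∘ l₂⁻¹` -/
noncomputable def psiL (p : (ℝ × ℝ) × (ℝ × ℝ)) : ℝ × ℝ :=
  (p.1.1 / p.2.1, p.1.2 - p.1.1 / p.2.1 * p.2.2)

theorem energy_swap (S D : Finset ℝ) (h0 : (0 : ℝ) ∉ S) :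
    collN ((S ×ˢ D) ×ˢ (S ×ˢ D)) phiL ≤ collN ((S ×ˢ D) ×ˢ (S ×ˢ D)) psiL := by
  unfold collN
  apply Finset.card_le_card_of_injOn
    (fun z : ((ℝ × ℝ) × (ℝ × ℝ)) × ((ℝ × ℝ) × (ℝ × ℝ)) => ((z.1.1, z.2.1), (z.1.2, z.2.2)))
  · rintro ⟨⟨⟨a, b⟩, ⟨a', b'⟩⟩, ⟨⟨c, d⟩, ⟨c', d'⟩⟩⟩ hz
    simp only [Finset.mem_coe, Finset.mem_filter, Finset.mem_product, phiL, psiL,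
      Prod.mk.injEq] at hz ⊢
    obtain ⟨⟨⟨⟨ha, hb⟩, ha', hb'⟩, ⟨hc, hd⟩, hc', hd'⟩, h1, h2⟩ := hz
    have na : a ≠ 0 := fun h => h0 (h ▸ ha)
    have na' : a' ≠ 0 := fun h => h0 (h ▸ ha')
    have nc : c ≠ 0 := fun h => h0 (h ▸ hc)
    have nc' : c' ≠ 0 := fun h => h0 (h ▸ hc')
    refine ⟨by tauto, ?_⟩
    have h3 : a / c = a' / c' := by
      field_simp at h1 ⊢
      linarith
    refine ⟨h3, ?_⟩
    rw [h3]
    field_simp at h2 ⊢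
    linarith
  · rintro ⟨⟨⟨a, b⟩, ⟨a', b'⟩⟩, ⟨⟨c, d⟩, ⟨c', d'⟩⟩⟩ _ ⟨⟨⟨_, _⟩, ⟨_, _⟩⟩, ⟨⟨_, _⟩, ⟨_, _⟩⟩⟩ _ h
    simp only [Prod.mk.injEq] at h ⊢
    tauto

theorem energy_le (S D : Finset ℝ) (h0 : (0 : ℝ) ∉ S) :
    collN ((S ×ˢ D) ×ˢ (S ×ˢ D)) psiL ≤
      S.card * ∑ p ∈ (S ×ˢ D) ×ˢ (S ×ˢ D), incN D (psiL p) := by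
  rw [collN_eq_sum, Finset.mul_sum]
  apply Finset.sum_le_sum
  intro p _
  generalize psiL p = g
  unfold incN
  rw [← Finset.card_product]
  apply Finset.card_le_card_of_injOn
    (fun z : (ℝ × ℝ) × (ℝ × ℝ) => z.2)
  · rintro ⟨⟨c, d⟩, ⟨c', d'⟩⟩ hz
    simp only [Finset.mem_coe, Finset.mem_filter, Finset.mem_product] at hz ⊢
    simp only [psiL] at hz
    obtain ⟨⟨⟨hc, hd⟩, hc', hd'⟩, rfl⟩ := hz
    refine ⟨hc', hd', ?_⟩
    simpa using hd
  · rintro ⟨⟨c, d⟩, ⟨c', d'⟩⟩ hz ⟨⟨a, b⟩, ⟨a', b'⟩⟩ hw h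
    simp only [Finset.mem_coe, Finset.mem_filter, Finset.mem_product] at hz hw
    simp only [psiL] at hz hw
    simp only [Prod.mk.injEq] at h ⊢
    obtain ⟨rfl, rfl⟩ := h
    obtain ⟨⟨⟨hc, hd⟩, hc', hd'⟩, rfl⟩ := hz
    obtain ⟨⟨⟨ha, hb⟩, ha', hb'⟩, h⟩ := hw
    have nc' : c' ≠ 0 := fun h => h0 (h ▸ hc')
    simp only [Prod.mk.injEq] at h
    have h1 : c = a := by
      have := h.1
      field_simp at this
      exact this
    subst h1
    have := h.2
    refine ⟨⟨rfl, by linarith⟩, rfl, rfl⟩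

theorem inc_sq_le (A B S D : Finset ℝ) (h0 : (0 : ℝ) ∉ S) :
    (Set.ncard {x : ℝ × ℝ × ℝ × ℝ |
            x.1 ∈ A ∧ x.2.1 ∈ B ∧ x.2.2.1 ∈ S ∧ x.2.2.2 ∈ D ∧
            x.2.1 = x.2.2.1 * x.1 + x.2.2.2}) ^ 2 ≤
      B.card * ∑ p ∈ (S ×ˢ D) ×ˢ (S ×ˢ D), incN A (phiL p) := by
  set T := (A ×ˢ (S ×ˢ D)).filter (fun z => z.2.1 * z.1 + z.2.2 ∈ B) with hT
  set h : ℝ × (ℝ × ℝ) → ℝ := fun z => z.2.1 * z.1 + z.2.2 with hh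
  have e1 : Set.ncard {x : ℝ × ℝ × ℝ × ℝ |
            x.1 ∈ A ∧ x.2.1 ∈ B ∧ x.2.2.1 ∈ S ∧ x.2.2.2 ∈ D ∧
            x.2.1 = x.2.2.1 * x.1 + x.2.2.2} ≤ T.card := by
    rw [← Set.ncard_coe_finset]
    apply Set.ncard_le_ncard_of_injOn (fun x => (x.1, x.2.2))
    · rintro ⟨a, b, c, d⟩ ⟨ha, hb, hc, hd, e⟩
      simp only at ha hb hc hd e
      subst e
      simp only [hT, Finset.mem_coe, Finset.mem_filter, Finset.mem_product]
      exact ⟨⟨ha, hc, hd⟩, hb⟩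
    · rintro ⟨a, b, c, d⟩ ⟨_, _, _, _, e⟩ ⟨a', b', c', d'⟩ ⟨_, _, _, _, e'⟩ hx
      simp only [Prod.mk.injEq] at e e' hx ⊢
      obtain ⟨rfl, rfl, rfl⟩ := hx
      exact ⟨rfl, e.trans e'.symm, rfl, rfl⟩
  have e2 := card_sq_le_collN T h
  have e3 : (T.image h).card ≤ B.card := by
    apply Finset.card_le_card
    intro b hb
    obtain ⟨x, hx, rfl⟩ := Finset.mem_image.1 hb
    exact (Finset.mem_filter.1 hx).2
  have e4 : collN T h ≤ ∑ p ∈ (S ×ˢ D) ×ˢ (S ×ˢ D), incN A (phiL p) := by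
    unfold incN
    rw [← Finset.card_sigma]
    unfold collN
    apply Finset.card_le_card_of_injOn
      (fun z : (ℝ × (ℝ × ℝ)) × (ℝ × (ℝ × ℝ)) =>
        (⟨(z.1.2, z.2.2), z.1.1⟩ : (_ : (ℝ × ℝ) × (ℝ × ℝ)) × ℝ))
    · rintro ⟨⟨a, c, d⟩, ⟨a', c', d'⟩⟩ hz
      simp only [hT, hh, Finset.mem_coe, Finset.mem_filter, Finset.mem_product,
        Finset.mem_sigma] at hz ⊢
      simp only [phiL]
      obtain ⟨⟨⟨⟨ha, hc, hd⟩, _⟩, ⟨ha', hc', hd'⟩, _⟩, e⟩ := hz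
      have nc' : c' ≠ 0 := fun h => h0 (h ▸ hc')
      refine ⟨⟨⟨hc, hd⟩, hc', hd'⟩, ha, ?_⟩
      have : c / c' * a + (d - d') / c' = a' := by
        field_simp
        linarith
      rw [this]
      exact ha'
    · rintro ⟨⟨a, c, d⟩, ⟨a', c', d'⟩⟩ hz ⟨⟨x, y, z⟩, ⟨x', y', z'⟩⟩ hw h
      simp only [hT, hh, Finset.mem_coe, Finset.mem_filter, Finset.mem_product] at hz hw
      simp only [Sigma.mk.injEq, Prod.mk.injEq, heq_eq_eq] at h
      obtain ⟨⟨⟨rfl, rfl⟩, rfl, rfl⟩, rfl⟩ := h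
      obtain ⟨⟨⟨⟨ha, hc, hd⟩, _⟩, ⟨ha', hc', hd'⟩, _⟩, e⟩ := hz
      have nc' : c' ≠ 0 := fun h => h0 (h ▸ hc')
      have e' := hw.2
      have : a' = x' := by
        apply mul_left_cancel₀ nc'
        linarith
      rw [this]
  calc _ ≤ T.card ^ 2 := Nat.pow_le_pow_left e1 2
    _ ≤ _ := e2
    _ ≤ _ := Nat.mul_le_mul e3 e4

theorem energy_bound (S D : Finset ℝ) (h0 : (0 : ℝ) ∉ S) (hSD : S.card ≤ D.card ^ 2)
    (hS : 0 < S.card) (hD : 0 < D.card) :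
    (collN ((S ×ˢ D) ×ˢ (S ×ˢ D)) phiL : ℝ) ≤
      32 * ((S.card : ℝ) ^ 2 * Real.sqrt S.card * (D.card : ℝ) ^ 3) := by
  obtain ⟨s, hs⟩ : ∃ s : ℝ, s = Real.sqrt S.card := ⟨_, rfl⟩
  have hss : (S.card : ℝ) = s ^ 2 := by
    rw [hs]; exact (Real.sq_sqrt (Nat.cast_nonneg _)).symm
  have s0 : 0 < s := by
    rw [hs]; exact Real.sqrt_pos.2 (by exact_mod_cast hS)
  obtain ⟨δ, hδ⟩ : ∃ δ : ℝ, δ = (D.card : ℝ) := ⟨_, rfl⟩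
  have δ0 : 0 < δ := by rw [hδ]; exact_mod_cast hD
  rw [← hs, ← hδ]
  have hsd : s ≤ δ := by
    rw [hs]
    apply Real.sqrt_le_iff.2
    rw [hδ] at δ0 ⊢
    exact ⟨δ0.le, by exact_mod_cast hSD⟩
  obtain ⟨H, H1, H2⟩ := weighted D ((S ×ˢ D) ×ˢ (S ×ˢ D)) psiL (by
    rintro ⟨⟨c, d⟩, ⟨c', d'⟩⟩ hz
    simp only [Finset.mem_product, psiL] at hz ⊢
    exact div_ne_zero (fun h => h0 (h ▸ hz.1.1)) (fun h => h0 (h ▸ hz.2.1))) ⌈δ / s⌉₊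
    (Nat.ceil_pos.2 (by positivity))
  have hE := energy_le S D h0
  refine le_trans (Nat.cast_le.2 (energy_swap S D h0)) ?_
  set ρ := ⌈δ / s⌉₊
  have r1 : δ / s ≤ (ρ : ℝ) := Nat.le_ceil _
  have r2 : (ρ : ℝ) < δ / s + 1 := Nat.ceil_lt_add_one (by positivity)
  set E := collN ((S ×ˢ D) ×ˢ (S ×ˢ D)) psiL
  have hE2 := hE.trans (Nat.mul_le_mul_left _ H1)
  simp only [Finset.card_product] at hE2
  have hE3 : (E : ℝ) ≤ s ^ 2 * (4 * ρ * (s ^ 2 * δ * (s ^ 2 * δ)) + H) := by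
    rw [← hss, hδ]; exact_mod_cast hE2
  have H3 : (ρ : ℝ) * (H : ℝ) ^ 2 ≤ 16 * δ ^ 4 * E := by rw [hδ]; exact_mod_cast H2
  rw [div_le_iff₀ s0] at r1
  have r3 : (ρ : ℝ) * s ≤ 2 * δ := by
    have : (ρ : ℝ) * s ≤ (δ / s + 1) * s := by gcongr
    have e : (δ / s + 1) * s = δ + s := by field_simp
    linarith
  have H4 : (s ^ 2 * (H : ℝ)) ^ 2 ≤ 16 * (s ^ 5 * δ ^ 3) * E := by
    have : δ * (H : ℝ) ^ 2 ≤ δ * (16 * δ ^ 3 * s * E) := by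
      calc δ * (H : ℝ) ^ 2 ≤ (ρ * s) * (H : ℝ) ^ 2 := by gcongr
        _ = s * (ρ * (H : ℝ) ^ 2) := by ring
        _ ≤ s * (16 * δ ^ 4 * E) := by gcongr
        _ = _ := by ring
    have := le_of_mul_le_mul_left this δ0
    calc (s ^ 2 * (H : ℝ)) ^ 2 = s ^ 4 * (H : ℝ) ^ 2 := by ring
      _ ≤ s ^ 4 * (16 * δ ^ 3 * s * E) := by gcongr
      _ = _ := by ring
  have H5 : s ^ 2 * (4 * ρ * (s ^ 2 * δ * (s ^ 2 * δ))) ≤ 8 * (s ^ 5 * δ ^ 3) := by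
    calc _ = 4 * (s ^ 5 * δ ^ 2) * (ρ * s) := by ring
      _ ≤ 4 * (s ^ 5 * δ ^ 2) * (2 * δ) := by gcongr
      _ = _ := by ring
  rw [hss]
  have e : (s ^ 2) ^ 2 * s * δ ^ 3 = s ^ 5 * δ ^ 3 := by ring
  rw [e]
  have X0 : 0 < s ^ 5 * δ ^ 3 := by positivity
  generalize s ^ 5 * δ ^ 3 = X at *
  have H6 : s ^ 2 * (H : ℝ) ≤ E / 2 + 8 * X := by
    apply le_of_sq_le_sq _ (by positivity)
    nlinarith [sq_nonneg ((E : ℝ) / 2 - 8 * X)]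
  nlinarith

theorem main_bound (A B S D : Finset ℝ) (h0 : (0 : ℝ) ∉ S) (hSD : S.card ≤ D.card ^ 2)
    (I : ℕ) (hI : I ^ 2 ≤ B.card * ∑ p ∈ (S ×ˢ D) ×ˢ (S ×ˢ D), incN A (phiL p))
    (hA : 0 < A.card) (hS : 0 < S.card) (hD : 0 < D.card) :
    (I : ℝ) ≤ 10 * ((A.card : ℝ) ^ ((2 : ℝ) / 3) * (B.card : ℝ) ^ ((1 : ℝ) / 2) *
                (S.card : ℝ) ^ ((3 : ℝ) / 4) * (D.card : ℝ) ^ ((5 : ℝ) / 6) +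
              (B.card : ℝ) ^ ((1 : ℝ) / 2) * (S.card : ℝ) * (D.card : ℝ)) := by
  have hE := energy_bound S D h0 hSD hS hD
  have cA : (0 : ℝ) < A.card := by exact_mod_cast hA
  have cS : (0 : ℝ) < S.card := by exact_mod_cast hS
  have cD : (0 : ℝ) < D.card := by exact_mod_cast hD
  -- roots
  set a : ℝ := (A.card : ℝ) ^ ((1 : ℝ) / 3) with ha
  set s : ℝ := (S.card : ℝ) ^ ((1 : ℝ) / 4) with hs
  set d : ℝ := (D.card : ℝ) ^ ((1 : ℝ) / 6) with hd
  set b : ℝ := (B.card : ℝ) ^ ((1 : ℝ) / 2) with hb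
  have a0 : 0 < a := by positivity
  have s0 : 0 < s := by positivity
  have d0 : 0 < d := by positivity
  have b0 : 0 ≤ b := by positivity
  have ea : (A.card : ℝ) = a ^ 3 := by
    rw [ha, ← Real.rpow_natCast, ← Real.rpow_mul cA.le]; norm_num
  have es : (S.card : ℝ) = s ^ 4 := by
    rw [hs, ← Real.rpow_natCast, ← Real.rpow_mul cS.le]; norm_num
  have ed : (D.card : ℝ) = d ^ 6 := by
    rw [hd, ← Real.rpow_natCast, ← Real.rpow_mul cD.le]; norm_num
  have eb : (B.card : ℝ) = b ^ 2 := by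
    rw [hb, ← Real.rpow_natCast, ← Real.rpow_mul (Nat.cast_nonneg _)]; norm_num
  have ea2 : (A.card : ℝ) ^ ((2 : ℝ) / 3) = a ^ 2 := by
    rw [ha, ← Real.rpow_natCast, ← Real.rpow_mul cA.le]; norm_num
  have es3 : (S.card : ℝ) ^ ((3 : ℝ) / 4) = s ^ 3 := by
    rw [hs, ← Real.rpow_natCast, ← Real.rpow_mul cS.le]; norm_num
  have ed5 : (D.card : ℝ) ^ ((5 : ℝ) / 6) = d ^ 5 := by
    rw [hd, ← Real.rpow_natCast, ← Real.rpow_mul cD.le]; norm_num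
  clear_value a s d b
  have esq : Real.sqrt S.card = s ^ 2 := by
    rw [es, show s ^ 4 = (s ^ 2) ^ 2 by ring]
    exact Real.sqrt_sq (by positivity)
  rw [ea2, es3, ed5]
  rw [esq] at hE
  obtain ⟨H, H1, H2⟩ := weighted A ((S ×ˢ D) ×ˢ (S ×ˢ D)) phiL (by
    rintro ⟨⟨c, d⟩, ⟨c', d'⟩⟩ hz
    simp only [Finset.mem_product, phiL] at hz ⊢
    exact div_ne_zero (fun h => h0 (h ▸ hz.1.1)) (fun h => h0 (h ▸ hz.2.1)))
    ⌈a ^ 4 / (s ^ 2 * d ^ 2)⌉₊ (Nat.ceil_pos.2 (by positivity))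
  have hI2 := hI.trans (Nat.mul_le_mul_left _ H1)
  set ρ := ⌈a ^ 4 / (s ^ 2 * d ^ 2)⌉₊
  have r1 : a ^ 4 / (s ^ 2 * d ^ 2) ≤ (ρ : ℝ) := Nat.le_ceil _
  have r2 : (ρ : ℝ) < a ^ 4 / (s ^ 2 * d ^ 2) + 1 := Nat.ceil_lt_add_one (by positivity)
  simp only [Finset.card_product] at hI2
  set E := collN ((S ×ˢ D) ×ˢ (S ×ˢ D)) phiL
  have hI3 : (I : ℝ) ^ 2 ≤ b ^ 2 * (4 * ρ * (s ^ 4 * d ^ 6 * (s ^ 4 * d ^ 6)) + H) := by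
    rw [← eb, ← es, ← ed]; exact_mod_cast hI2
  have H3 : (ρ : ℝ) * (H : ℝ) ^ 2 ≤ 16 * (a ^ 3) ^ 4 * E := by
    rw [← ea]; exact_mod_cast H2
  rw [es, ed] at hE
  rw [es, ed]
  rw [div_le_iff₀ (by positivity)] at r1
  have r3 : (ρ : ℝ) * (s ^ 2 * d ^ 2) ≤ a ^ 4 + s ^ 2 * d ^ 2 := by
    calc (ρ : ℝ) * (s ^ 2 * d ^ 2) ≤ (a ^ 4 / (s ^ 2 * d ^ 2) + 1) * (s ^ 2 * d ^ 2) := by gcongr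
      _ = _ := by field_simp
  have H4 : (H : ℝ) ≤ 23 * (a ^ 4 * s ^ 6 * d ^ 10) := by
    apply le_of_sq_le_sq _ (by positivity)
    have : a ^ 4 * (H : ℝ) ^ 2 ≤ a ^ 4 * (512 * (a ^ 4 * s ^ 6 * d ^ 10) ^ 2) := by
      calc a ^ 4 * (H : ℝ) ^ 2 ≤ (ρ * (s ^ 2 * d ^ 2)) * (H : ℝ) ^ 2 := by gcongr
        _ = (s ^ 2 * d ^ 2) * (ρ * (H : ℝ) ^ 2) := by ring
        _ ≤ (s ^ 2 * d ^ 2) * (16 * (a ^ 3) ^ 4 * E) := by gcongr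
        _ ≤ (s ^ 2 * d ^ 2) * (16 * (a ^ 3) ^ 4 *
              (32 * ((s ^ 4) ^ 2 * s ^ 2 * (d ^ 6) ^ 3))) := by gcongr
        _ = _ := by ring
    have h5 := le_of_mul_le_mul_left this (by positivity)
    have h6 : 0 ≤ (a ^ 4 * s ^ 6 * d ^ 10) ^ 2 := by positivity
    nlinarith
  have H5 : 4 * ρ * (s ^ 4 * d ^ 6 * (s ^ 4 * d ^ 6)) ≤
      4 * (a ^ 4 * s ^ 6 * d ^ 10) + 4 * (s ^ 8 * d ^ 12) := by
    calc _ = 4 * (s ^ 6 * d ^ 10) * (ρ * (s ^ 2 * d ^ 2)) := by ring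
      _ ≤ 4 * (s ^ 6 * d ^ 10) * (a ^ 4 + s ^ 2 * d ^ 2) := by gcongr
      _ = _ := by ring
  apply le_of_sq_le_sq _ (by positivity)
  have X0 : 0 ≤ a ^ 4 * s ^ 6 * d ^ 10 := by positivity
  have Y0 : 0 ≤ s ^ 8 * d ^ 12 := by positivity
  have Z0 : 0 ≤ a ^ 2 * s ^ 3 * d ^ 5 * (s ^ 4 * d ^ 6) := by positivity
  calc (I : ℝ) ^ 2 ≤ b ^ 2 * (4 * ρ * (s ^ 4 * d ^ 6 * (s ^ 4 * d ^ 6)) + H) := hI3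
    _ ≤ b ^ 2 * (100 * (a ^ 4 * s ^ 6 * d ^ 10 + s ^ 8 * d ^ 12
          + 2 * (a ^ 2 * s ^ 3 * d ^ 5 * (s ^ 4 * d ^ 6)))) := by
        gcongr
        linarith
    _ = _ := by ring


/-- **Corollary 3.9 over ℝ** (incidences between two grids): there is an absolute
constant `C₀` such that for all finite `A, B, C, D ⊆ ℝ` with `0 ∉ C` and `|C| ≤ |D|²`,
the number of incidences between the point set `A×B` and the set of lines
`{y = cx + d : c ∈ C, d ∈ D}` satisfies
`I(A×B, C×D) ≤ C₀·(|A|^{2/3}|B|^{1/2}|C|^{3/4}|D|^{5/6} + |B|^{1/2}|C||D|)`. -/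
theorem grid_grid_incidences :
    ∃ C₀ : ℝ, 0 < C₀ ∧
      ∀ A B S D : Finset ℝ, (0 : ℝ) ∉ S → S.card ≤ D.card ^ 2 →
        (Set.ncard {x : ℝ × ℝ × ℝ × ℝ |
            x.1 ∈ A ∧ x.2.1 ∈ B ∧ x.2.2.1 ∈ S ∧ x.2.2.2 ∈ D ∧
            x.2.1 = x.2.2.1 * x.1 + x.2.2.2} : ℝ)
          ≤ C₀ * ((A.card : ℝ) ^ ((2 : ℝ) / 3) * (B.card : ℝ) ^ ((1 : ℝ) / 2) *
                (S.card : ℝ) ^ ((3 : ℝ) / 4) * (D.card : ℝ) ^ ((5 : ℝ) / 6) +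
              (B.card : ℝ) ^ ((1 : ℝ) / 2) * (S.card : ℝ) * (D.card : ℝ)) := by

  refine ⟨10, by norm_num, ?_⟩
  intro A B S D h0 hSD
  have hI := inc_sq_le A B S D h0
  have triv : (A = ∅ ∨ S = ∅ ∨ D = ∅) → Set.ncard {x : ℝ × ℝ × ℝ × ℝ |
            x.1 ∈ A ∧ x.2.1 ∈ B ∧ x.2.2.1 ∈ S ∧ x.2.2.2 ∈ D ∧
            x.2.1 = x.2.2.1 * x.1 + x.2.2.2} = 0 := by
    rintro (rfl | rfl | rfl) <;> simp
  by_cases hd : A = ∅ ∨ S = ∅ ∨ D = ∅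
  · rw [triv hd]
    simp only [Nat.cast_zero]
    positivity
  · push Not at hd
    exact main_bound A B S D h0 hSD _ hI (Finset.card_pos.2 (Finset.nonempty_iff_ne_empty.2 (by simpa [Finset.nonempty_iff_ne_empty] using hd.1)))
      (Finset.card_pos.2 (Finset.nonempty_iff_ne_empty.2 (by simpa [Finset.nonempty_iff_ne_empty] using hd.2.1)))
      (Finset.card_pos.2 (Finset.nonempty_iff_ne_empty.2 (by simpa [Finset.nonempty_iff_ne_empty] using hd.2.2)))
end
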